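/- arXiv:0808.0670 — 4 statements merged into one kernel-verified Lean document; each statement's English description precedes it below -/
import Mathlib

section
/- Let d = 1 and assume alternative (i) holds. Let L ∈ ℕ, L ≥ 1, and let ω : ℤ → [−d_max,d_max] be an L-periodic displacement configuration (ω_{i+L} = ω_i for all i). Then E(ω) = E₀ if and only if ω_i ∈ {−d_max, d_max} for every i and the number of i ∈ {1,…,L} with ω_i = d_max equals the number of i ∈ {1,…,L} with ω_i = −d_max (in particular, L is then even). -/
/-!
Let `e = E₀(dmax)`. The line splits into the cells `[i - 1/2, i + 1/2]`, on which the potential is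
`q(· - ω_i)`, and by alternative (i) the form of `H_ω - e` restricted to each cell is nonnegative.
Hence `E(ω) ≥ e` for every configuration.

On a cell with displacement `dmax` there is a positive Neumann ground state `u` (`exists_isGS`),
normalized by `u(-1/2) = 1`; put `ρ = u(1/2)`. If `ρ` were `1`, the periodic continuation of `u`,
translated by `dmax`, would be a trial function of energy `e < E₀(0)` for the centred potential; so
`ρ ≠ 1` (`ground_ratio_ne_one`). By reflection the ratio of the boundary values of the ground state
for `-dmax` is `1/ρ`.

By Picone's identity the form on a cell equals `∫ u² ((f/u)')²`, so it controls the defect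
`f(1/2) - ρ f(-1/2)`, and together with `f(-1/2)` the `L²` norm of `f` (`CellEst`). For an interior
displacement the form is coercive and the same holds with ratio `0`. If the product `P` of the
ratios over one period is not `1`, the recursion `x_{i+1} = ρ_i x_i` has no approximate `ℓ²`
solutions (`exists_tsum_sq_le`), whence `E(ω) > e` (`Setup.lt_energy`). If `P = 1`, all
displacements are `±dmax` and the ground states of the cells glue to a positive solution bounded
above and below; cutting it off at scale `n` gives energies `e + O(1/n²)`, so `E(ω) = e`
(`Setup.energy_le`). The alternating configuration shows that `E₀ = e`, and since
`P = ρ^(n₊ - n₋)` with `ρ ≠ 1`, the condition `P = 1` is equality of the two counts.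
-/

open MeasureTheory Set

noncomputable section

/-- The potential of a 1-d displacement configuration `ω : ℤ → ℝ`:
`V_ω(x) = ∑_{i ∈ ℤ} q(x - i - ω_i)`. -/
def Vpot1 (q : ℝ → ℝ) (ω : ℤ → ℝ) (x : ℝ) : ℝ := ∑' i : ℤ, q (x - i - ω i)

/-- Variational ground-state energy `E(ω)` of `H_ω = -d²/dx² + V_ω`. -/
def Energy1 (q : ℝ → ℝ) (ω : ℤ → ℝ) : ℝ :=
  sInf {e | ∃ ψ : ℝ → ℝ, ContDiff ℝ (⊤ : ℕ∞) ψ ∧ HasCompactSupport ψ ∧ ψ ≠ 0 ∧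
    e = (∫ x, (deriv ψ x ^ 2 + Vpot1 q ω x * ψ x ^ 2)) / ∫ x, ψ x ^ 2}

/-- `E₀ := inf` over all displacement configurations `ω : ℤ → [-dmax, dmax]`. -/
def GroundEnergy1 (q : ℝ → ℝ) (dmax : ℝ) : ℝ :=
  sInf {e | ∃ ω : ℤ → ℝ, (∀ i, |ω i| ≤ dmax) ∧ e = Energy1 q ω}

/-- Neumann (free) ground-state energy of `-d²/dx² + V` on `(a, b)`:
infimum of Rayleigh quotients over functions smooth on a neighborhood of
`[a, b]` which do not vanish identically. -/
def NeumannGS1 (V : ℝ → ℝ) (a b : ℝ) : ℝ :=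
  sInf {e | ∃ ψ : ℝ → ℝ,
    (∃ U, IsOpen U ∧ Set.Icc a b ⊆ U ∧ ContDiffOn ℝ (⊤ : ℕ∞) ψ U) ∧
    (∃ x ∈ Set.Ioo a b, ψ x ≠ 0) ∧
    e = (∫ x in Set.Ioo a b, (deriv ψ x ^ 2 + V x * ψ x ^ 2)) /
        ∫ x in Set.Ioo a b, ψ x ^ 2}

/-- `E₀(a)`: lowest Neumann eigenvalue of `-d²/dx² + q(· - a)` on `(-1/2, 1/2)`. -/
def E0fun1 (q : ℝ → ℝ) (a : ℝ) : ℝ :=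
  NeumannGS1 (fun x => q (x - a)) (-(1 / 2)) (1 / 2)

/-- Alternative (i) in dimension one: `E₀(·)` is strictly maximized at `0`,
takes the same value at `± dmax`, and is strictly smaller at `± dmax` than at
any interior point. -/
def AltI1 (q : ℝ → ℝ) (dmax : ℝ) : Prop :=
  (∀ a : ℝ, |a| ≤ dmax → a ≠ 0 → E0fun1 q a < E0fun1 q 0) ∧
  (E0fun1 q dmax = E0fun1 q (-dmax)) ∧
  (∀ a : ℝ, |a| < dmax → E0fun1 q dmax < E0fun1 q a)

/-! ### `C¹` functions on the unit cell and the equation `u'' = W u` -/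

/-- `f` is `C¹` on the cell `[-1/2, 1/2]` with derivative `k`; both are continuous on all of `ℝ`,
which costs nothing since only their values on the cell are used. -/
structure CellC1 (f k : ℝ → ℝ) : Prop where
  cont : Continuous f
  cont' : Continuous k
  hasDeriv : ∀ x ∈ Ioo (-(1 / 2) : ℝ) (1 / 2), HasDerivAt f (k x) x

/-- The quadratic form `∫ k² + W f²` over the cell, for `f` with derivative `k`. -/
def cellForm (W f k : ℝ → ℝ) : ℝ := ∫ x in (-(1 / 2) : ℝ)..(1 / 2), (k x ^ 2 + W x * f x ^ 2)

lemma CellC1.sub_eq {f k : ℝ → ℝ} (h : CellC1 f k) {x y : ℝ} (hx : -(1 / 2) ≤ x) (hxy : x ≤ y)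
    (hy : y ≤ 1 / 2) : ∫ t in x..y, k t = f y - f x :=
  intervalIntegral.integral_eq_sub_of_hasDerivAt_of_le hxy h.cont.continuousOn
    (fun t ht => h.hasDeriv t ⟨hx.trans_lt ht.1, ht.2.trans_le hy⟩)
    (h.cont'.intervalIntegrable _ _)

lemma CellC1.congr_deriv {f k k' : ℝ → ℝ} (h : CellC1 f k) (e : ∀ x, k x = k' x) :
    CellC1 f k' := by
  have : k = k' := funext e
  rwa [← this]

lemma CellC1.mul {f k g l : ℝ → ℝ} (hf : CellC1 f k) (hg : CellC1 g l) :
    CellC1 (fun x => f x * g x) (fun x => k x * g x + f x * l x) where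
  cont := hf.cont.mul hg.cont
  cont' := (hf.cont'.mul hg.cont).add (hf.cont.mul hg.cont')
  hasDeriv x hx := (hf.hasDeriv x hx).mul (hg.hasDeriv x hx)

lemma cellC1_const (c : ℝ) : CellC1 (fun _ => c) (fun _ => 0) :=
  ⟨continuous_const, continuous_const, fun x _ => hasDerivAt_const x c⟩

lemma cellC1_of_contDiff {f : ℝ → ℝ} (h : ContDiff ℝ 1 f) : CellC1 f (deriv f) :=
  ⟨h.continuous, h.continuous_deriv le_rfl,
    fun x _ => (h.differentiable one_ne_zero x).hasDerivAt⟩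

lemma intervalIntegrable_of_bdd {Z : ℝ → ℝ} (hZm : Measurable Z) {M : ℝ} (hZ : ∀ x, |Z x| ≤ M)
    (a b : ℝ) : IntervalIntegrable Z volume a b :=
  (intervalIntegrable_const (c := M)).mono_fun hZm.aestronglyMeasurable
    (Filter.Eventually.of_forall fun x => by
      simpa using (hZ x).trans (le_abs_self M))

/-- Integration by parts against the primitive of an integrable (not necessarily continuous)
function. -/
lemma integral_mul_by_parts {Z F k : ℝ → ℝ}
    (hZ : ∀ a b, IntervalIntegrable Z volume a b)
    (hF : CellC1 F k) {x : ℝ} (hx : x ∈ Icc (-(1 / 2) : ℝ) (1 / 2)) :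
    ∫ t in (-(1 / 2) : ℝ)..x, Z t * F t =
      (∫ t in (-(1 / 2) : ℝ)..x, Z t) * F x
        - ∫ t in (-(1 / 2) : ℝ)..x, (∫ s in (-(1 / 2) : ℝ)..t, Z s) * k t := by
  set Φ : ℝ → ℝ := fun t => ∫ s in (-(1 / 2) : ℝ)..t, Z s with hΦ
  have h1 : AbsolutelyContinuousOnInterval Φ (-(1 / 2)) x :=
    (hZ _ _).absolutelyContinuousOnInterval_intervalIntegral (by simp)
  set G : ℝ → ℝ := fun t => F (-(1 / 2)) + ∫ s in (-(1 / 2) : ℝ)..t, k s with hG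
  have hGd : ∀ t, HasDerivAt G (k t) t := fun t =>
    (intervalIntegral.integral_hasDerivAt_right (hF.cont'.intervalIntegrable _ _)
      (hF.cont'.stronglyMeasurableAtFilter _ _) hF.cont'.continuousAt).const_add _
  have hGF : ∀ t ∈ Icc (-(1 / 2) : ℝ) (1 / 2), G t = F t := by
    intro t ht
    simp only [hG]
    rw [hF.sub_eq le_rfl ht.1 ht.2]; ring
  have hG1 : ContDiff ℝ 1 G := by
    rw [contDiff_one_iff_deriv]
    refine ⟨fun t => (hGd t).differentiableAt, ?_⟩
    rw [show deriv G = k from funext fun t => (hGd t).deriv]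
    exact hF.cont'
  have h2 : AbsolutelyContinuousOnInterval G (-(1 / 2)) x :=
    hG1.contDiffOn.absolutelyContinuousOnInterval
  have h3 := h2.integral_mul_deriv_eq_deriv_mul h1
  have e1 : ∫ t in (-(1 / 2) : ℝ)..x, G t * deriv Φ t = ∫ t in (-(1 / 2) : ℝ)..x, Z t * F t := by
    apply intervalIntegral.integral_congr_ae
    filter_upwards [(hZ (-(1/2)) x).ae_hasDerivAt_integral] with t ht ht'
    have := ht (uIoc_subset_uIcc ht') (-(1/2)) (by simp)
    rw [this.deriv, hGF t, mul_comm]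
    rw [uIoc_of_le hx.1] at ht'
    exact ⟨ht'.1.le, ht'.2.trans hx.2⟩
  rw [e1] at h3
  rw [h3, hGF x hx]
  simp only [(hGd _).deriv, hΦ]
  simp [mul_comm]

/-- The linear equation `u'' = W u` with bounded measurable `W` has a solution on the cell with
`u(-1/2) = 1`, `u'(-1/2) = 0`. With `Q` the primitive of `W` and the quasi-derivative
`p = u' - Q u`, the equation is equivalent to the system `u' = p + Q u`, `p' = -Q (p + Q u)`
with continuous coefficients. Truncating the state at the Grönwall bound makes the vector field
bounded, so that the Picard-Lindelöf theorem applies on the entire cell. -/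
lemma exists_ode_solution {W : ℝ → ℝ} (hWm : Measurable W) {M : ℝ} (hW : ∀ x, |W x| ≤ M) :
    ∃ u v : ℝ → ℝ, CellC1 u v ∧ u (-(1 / 2)) = 1 ∧
      (∀ x ∈ Icc (-(1 / 2) : ℝ) (1 / 2), v x = ∫ t in (-(1 / 2) : ℝ)..x, W t * u t) ∧
      (∀ x ∈ Icc (-(1 / 2) : ℝ) (1 / 2), u x = 0 → v x ≠ 0) := by
  have hM : 0 ≤ M := (abs_nonneg _).trans (hW 0)
  have hWi := intervalIntegrable_of_bdd hWm hW
  set Q : ℝ → ℝ := fun t => ∫ s in (-(1 / 2) : ℝ)..t, W s with hQ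
  have hQc : Continuous Q := intervalIntegral.continuous_primitive hWi _
  have hQb : ∀ t ∈ Icc (-(1 / 2) : ℝ) (1 / 2), |Q t| ≤ M := by
    intro t ht
    have h1 : ‖∫ s in (-(1 / 2) : ℝ)..t, W s‖ ≤ M * |t - (-(1 / 2))| :=
      intervalIntegral.norm_integral_le_of_norm_le_const fun x _ => hW x
    have h2 : |t - (-(1 / 2))| ≤ 1 := by
      rw [abs_le]; constructor <;> linarith [ht.1, ht.2]
    calc |Q t| ≤ M * |t - (-(1 / 2))| := h1
      _ ≤ M * 1 := by gcongr
      _ = M := mul_one M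
  set K : ℝ := (1 + M) ^ 2 with hK
  have hK0 : 0 ≤ K := by positivity
  set R : ℝ := Real.exp K with hR
  have hR0 : 0 < R := Real.exp_pos _
  set c : ℝ → ℝ := fun x => max (-R) (min R x) with hc
  have hc_lip : ∀ x y, |c x - c y| ≤ |x - y| := fun x y =>
    (abs_max_sub_max_le_max _ _ _ _).trans (by
      simpa using (abs_min_sub_min_le_max R x R y))
  have hc_R : ∀ x, |c x| ≤ R := fun x => by
    rw [abs_le]
    exact ⟨le_max_left _ _, max_le (by linarith) (min_le_left _ _)⟩
  have hc0 : c 0 = 0 := by simp [hc, hR0.le]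
  have hc_abs : ∀ x, |c x| ≤ |x| := fun x => by simpa [hc0] using hc_lip x 0
  have hc_id : ∀ x, |x| ≤ R → c x = x := fun x hx => by
    have := abs_le.1 hx
    simp [hc, this.1, this.2]
  set fld : ℝ → ℝ × ℝ → ℝ × ℝ := fun t z =>
    (c z.2 + Q t * c z.1, -(Q t * (c z.2 + Q t * c z.1))) with hfld
  -- the elementary bound behind all estimates on the vector field
  have key : ∀ t ∈ Icc (-(1 / 2) : ℝ) (1 / 2), ∀ a b B : ℝ, |a| ≤ B → |b| ≤ B →
      ‖((b + Q t * a, -(Q t * (b + Q t * a))) : ℝ × ℝ)‖ ≤ K * B := by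
    intro t ht a b B ha hb
    have hB : 0 ≤ B := (abs_nonneg _).trans ha
    have h1 : |b + Q t * a| ≤ (1 + M) * B := by
      calc |b + Q t * a| ≤ |b| + |Q t| * |a| := by rw [← abs_mul]; exact abs_add_le _ _
        _ ≤ B + M * B := by gcongr; exact hQb t ht
        _ = (1 + M) * B := by ring
    have h2 : |Q t * (b + Q t * a)| ≤ M * ((1 + M) * B) := by
      rw [abs_mul]; gcongr; exact hQb t ht
    rw [Prod.norm_def, Real.norm_eq_abs, Real.norm_eq_abs, abs_neg]
    refine max_le (h1.trans ?_) (h2.trans ?_) <;> rw [hK]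
    · nlinarith [mul_nonneg hM hB, mul_nonneg (mul_nonneg hM hM) hB]
    · nlinarith [mul_nonneg hM hB, mul_nonneg (mul_nonneg hM hM) hB]
  have hcc : Continuous c := by fun_prop
  have hPL : IsPicardLindelof (tmin := -(1 / 2)) (tmax := 1 / 2) fld
      ⟨-(1 / 2), by norm_num⟩ ((1, 0) : ℝ × ℝ) (K * R).toNNReal 0 (K * R).toNNReal
      K.toNNReal := by
    refine ⟨?_, ?_, ?_, ?_⟩
    · intro t ht
      apply LipschitzWith.lipschitzOnWith
      refine LipschitzWith.of_dist_le_mul fun z w => ?_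
      rw [dist_eq_norm, dist_eq_norm, Real.coe_toNNReal _ hK0]
      have h1 : |c z.1 - c w.1| ≤ ‖z - w‖ := (hc_lip _ _).trans (norm_fst_le (z - w))
      have h2 : |c z.2 - c w.2| ≤ ‖z - w‖ := (hc_lip _ _).trans (norm_snd_le (z - w))
      refine le_trans (le_of_eq ?_) (key t ht _ _ _ h1 h2)
      congr 1
      ext <;> simp [hfld] <;> ring
    · intro z _
      apply Continuous.continuousOn
      simp only [hfld]
      fun_prop
    · intro t ht z _
      rw [Real.coe_toNNReal _ (by positivity)]
      exact key t ht _ _ _ (hc_R _) (hc_R _)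
    · rw [Real.coe_toNNReal _ (by positivity)]
      norm_num
  obtain ⟨γ, hγ0, hγ⟩ := hPL.exists_eq_forall_mem_Icc_hasDerivWithinAt₀
  simp only at hγ0
  have hγc : ContinuousOn γ (Icc (-(1 / 2)) (1 / 2)) := fun t ht => (hγ t ht).continuousWithinAt
  have hγb : ∀ t ∈ Icc (-(1 / 2) : ℝ) (1 / 2), ‖γ t‖ ≤ R := by
    intro t ht
    have h := norm_le_gronwallBound_of_norm_deriv_right_le (f' := fun t => fld t (γ t))
      (δ := 1) (K := K) (ε := 0) hγc
      (fun x hx => (hγ x ⟨hx.1, hx.2.le⟩).mono_of_mem_nhdsWithin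
        (Icc_mem_nhdsGE_of_mem hx)) (by rw [hγ0]; simp [Prod.norm_def])
      (fun x hx => by
        rw [add_zero]
        exact key x ⟨hx.1, hx.2.le⟩ _ _ _ ((hc_abs _).trans (norm_fst_le (γ x)))
          ((hc_abs _).trans (norm_snd_le (γ x)))) t ht
    rw [gronwallBound_ε0, one_mul] at h
    refine h.trans (Real.exp_le_exp.2 ?_)
    nlinarith [ht.1, ht.2]
  set π : ℝ → ℝ := fun t => projIcc (-(1 / 2) : ℝ) (1 / 2) (by norm_num) t with hπ
  have hπm : ∀ t, π t ∈ Icc (-(1 / 2) : ℝ) (1 / 2) := fun t => (projIcc _ _ _ t).2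
  have hπi : ∀ t ∈ Icc (-(1 / 2) : ℝ) (1 / 2), π t = t := fun t ht => by
    simp only [hπ]; rw [projIcc_of_mem _ ht]
  have hπc : Continuous π := continuous_subtype_val.comp continuous_projIcc
  have hγπ : Continuous fun t => γ (π t) := hγc.comp_continuous hπc hπm
  have hd : ∀ x ∈ Ioo (-(1 / 2) : ℝ) (1 / 2), HasDerivAt (fun t => γ (π t))
      ((γ (π x)).2 + Q x * (γ (π x)).1, -(Q x * ((γ (π x)).2 + Q x * (γ (π x)).1))) x := by
    intro x hx
    have hx' := Ioo_subset_Icc_self hx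
    have h1 := (hγ x hx').hasDerivAt (Icc_mem_nhds hx.1 hx.2)
    have h2 : (fun t => γ (π t)) =ᶠ[nhds x] γ := by
      filter_upwards [Icc_mem_nhds hx.1 hx.2] with t ht
      rw [hπi t ht]
    have h3 : fld x (γ x) = ((γ (π x)).2 + Q x * (γ (π x)).1,
        -(Q x * ((γ (π x)).2 + Q x * (γ (π x)).1))) := by
      simp only [hfld]
      rw [hπi x hx', hc_id _ ((norm_fst_le (γ x)).trans (hγb x hx')),
        hc_id _ ((norm_snd_le (γ x)).trans (hγb x hx'))]
    rw [← h3]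
    exact h1.congr_of_eventuallyEq h2
  set u : ℝ → ℝ := fun t => (γ (π t)).1 with hu
  set p : ℝ → ℝ := fun t => (γ (π t)).2 with hp
  have huc : Continuous u := continuous_fst.comp hγπ
  have hpc : Continuous p := continuous_snd.comp hγπ
  have hU : CellC1 u (fun t => p t + Q t * u t) :=
    ⟨huc, by fun_prop, fun x hx => (hd x hx).fst⟩
  have hP : CellC1 p (fun t => -(Q t * (p t + Q t * u t))) :=
    ⟨hpc, by fun_prop, fun x hx => (hd x hx).snd⟩
  have hπ0 : π (-(1 / 2)) = -(1 / 2) := hπi _ (by norm_num)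
  refine ⟨u, fun t => p t + Q t * u t, hU, by simp only [hu]; rw [hπ0, hγ0], ?_, ?_⟩
  · intro x hx
    rw [integral_mul_by_parts hWi hU hx]
    have h1 := hP.sub_eq le_rfl hx.1 hx.2
    rw [intervalIntegral.integral_neg] at h1
    have h2 : p (-(1 / 2)) = 0 := by simp only [hp]; rw [hπ0, hγ0]
    rw [h2] at h1
    simp only [hQ] at h1 ⊢
    linarith
  · intro x hx hux hvx
    -- `u² + p²` times a growing exponential is monotone, so it cannot vanish after `-1/2`
    have hpx : p x = 0 := by simpa [hux] using hvx
    have hmono : MonotoneOn (fun t => (u t ^ 2 + p t ^ 2) * Real.exp (4 * K * t))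
        (Icc (-(1 / 2)) (1 / 2)) := by
      refine monotoneOn_of_hasDerivWithinAt_nonneg (convex_Icc _ _)
        (by fun_prop : Continuous _).continuousOn
        (f' := fun t => (2 * u t * (p t + Q t * u t) + 2 * p t * -(Q t * (p t + Q t * u t))
          + 4 * K * (u t ^ 2 + p t ^ 2)) * Real.exp (4 * K * t)) ?_ ?_
      · intro t ht
        rw [interior_Icc] at ht
        apply HasDerivAt.hasDerivWithinAt
        have h1 := (((hU.hasDeriv t ht).pow 2).add ((hP.hasDeriv t ht).pow 2)).mul
          (((hasDerivAt_id t).const_mul (4 * K)).exp)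
        refine HasDerivAt.congr_deriv (f := fun t => (u t ^ 2 + p t ^ 2) * Real.exp (4 * K * t))
          h1 ?_
        simp only [Pi.add_apply, Pi.pow_apply, id]
        push_cast
        ring
      · intro t ht
        rw [interior_Icc] at ht
        refine mul_nonneg ?_ (Real.exp_pos _).le
        have hq := abs_le.1 (hQb t (Ioo_subset_Icc_self ht))
        have hQ2 : Q t ^ 2 ≤ M ^ 2 := sq_le_sq' hq.1 hq.2
        have a1 := sq_nonneg (u t + p t)
        have a2 := mul_nonneg (by linarith : 0 ≤ Q t + M) (sq_nonneg (u t))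
        have a3 := mul_nonneg (by linarith : 0 ≤ M - Q t) (sq_nonneg (p t))
        have a4 := mul_nonneg (sq_nonneg (Q t)) (sq_nonneg (u t - p t))
        have a5 := mul_nonneg (by linarith : 0 ≤ M ^ 2 - Q t ^ 2) (sq_nonneg (u t))
        have a6 := mul_nonneg (by linarith : 0 ≤ M ^ 2 - Q t ^ 2) (sq_nonneg (p t))
        have a7 := mul_nonneg hM (sq_nonneg (u t))
        have a8 := mul_nonneg hM (sq_nonneg (p t))
        have a9 := mul_nonneg (sq_nonneg M) (sq_nonneg (u t))
        have a10 := mul_nonneg (sq_nonneg M) (sq_nonneg (p t))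
        rw [hK]
        linarith [sq_nonneg (u t), sq_nonneg (p t)]
    have h1 := hmono (by norm_num) hx hx.1
    have hu0 : u (-(1 / 2)) = 1 := by simp only [hu]; rw [hπ0, hγ0]
    simp only [hux, hpx, hu0] at h1
    have h2 : 0 < (1 ^ 2 + p (-(1 / 2)) ^ 2) * Real.exp (4 * K * -(1 / 2)) := by positivity
    norm_num at h1 h2
    linarith

/-! ### The Neumann energy of the cell as a bound on `C¹` functions -/

open Filter Topology in
/-- A compactly supported `C¹` function is a `C¹`-uniform limit of smooth functions with a common
compact support. -/
lemma exists_smooth_approx {f : ℝ → ℝ} (hf : ContDiff ℝ 1 f) (hc : HasCompactSupport f) :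
    ∃ (N : ℝ) (ψ : ℕ → ℝ → ℝ), (∀ n, ContDiff ℝ (⊤ : ℕ∞) (ψ n)) ∧
      (∀ x, N < |x| → f x = 0) ∧ (∀ n x, N < |x| → ψ n x = 0) ∧
      (∀ n x, |ψ n x - f x| ≤ 1 / ((n : ℝ) + 1)) ∧
      (∀ n x, |deriv (ψ n) x - deriv f x| ≤ 1 / ((n : ℝ) + 1)) := by
  obtain ⟨N₀, hN₀⟩ := hc.isCompact.isBounded.exists_norm_le
  have hf0 : ∀ x, N₀ < |x| → f x = 0 := fun x hx => by
    by_contra h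
    exact absurd (hN₀ x (subset_tsupport _ h)) (not_le.2 hx)
  have hdc : Continuous (deriv f) := hf.continuous_deriv le_rfl
  have hu1 : UniformContinuous f := hc.uniformContinuous_of_continuous hf.continuous
  have hu2 : UniformContinuous (deriv f) := hc.deriv.uniformContinuous_of_continuous hdc
  have main : ∀ n : ℕ, ∃ ψ : ℝ → ℝ, ContDiff ℝ (⊤ : ℕ∞) ψ ∧
      (∀ x, N₀ + 1 < |x| → ψ x = 0) ∧ (∀ x, |ψ x - f x| ≤ 1 / ((n : ℝ) + 1)) ∧
      (∀ x, |deriv ψ x - deriv f x| ≤ 1 / ((n : ℝ) + 1)) := by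
    intro n
    have hn : (0 : ℝ) < 1 / ((n : ℝ) + 1) := by positivity
    obtain ⟨δ₁, hδ₁, h1⟩ := Metric.uniformContinuous_iff.1 hu1 _ hn
    obtain ⟨δ₂, hδ₂, h2⟩ := Metric.uniformContinuous_iff.1 hu2 _ hn
    set δ := min 1 (min δ₁ δ₂)
    have hδ : 0 < δ := by positivity
    let φ : ContDiffBump (0 : ℝ) := ⟨δ / 2, δ, half_pos hδ, half_lt_self hδ⟩
    have hφ : φ.rOut = δ := rfl
    have hφl : LocallyIntegrable (φ.normed volume) volume :=
      φ.continuous_normed.locallyIntegrable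
    have hder : ∀ x, deriv (convolution (φ.normed volume) f (ContinuousLinearMap.lsmul ℝ ℝ) volume) x
        = convolution (φ.normed volume) (deriv f) (ContinuousLinearMap.lsmul ℝ ℝ) volume x :=
      fun x => (hc.hasDerivAt_convolution_right _ hφl hf x).deriv
    refine ⟨convolution (φ.normed volume) f (ContinuousLinearMap.lsmul ℝ ℝ) volume,
      φ.hasCompactSupport_normed.contDiff_convolution_left _ φ.contDiff_normed
        hf.continuous.locallyIntegrable, ?_, ?_, ?_⟩
    · intro x hx
      have hx0 : f x = 0 := hf0 x (by linarith)
      have h := φ.dist_normed_convolution_le (μ := volume) (x₀ := x) (ε := 0)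
        hf.continuous.aestronglyMeasurable (fun y hy => by
          rw [hφ, Metric.mem_ball, Real.dist_eq] at hy
          have hy1 : |y - x| < 1 := hy.trans_le (min_le_left _ _)
          have : N₀ < |y| := by
            have := abs_sub_abs_le_abs_sub x y
            rw [abs_sub_comm] at this
            linarith
          rw [hf0 y this, hx0, dist_self])
      rw [hx0] at h
      exact dist_le_zero.1 h
    · intro x
      rw [← Real.dist_eq]
      exact φ.dist_normed_convolution_le hf.continuous.aestronglyMeasurable (fun y hy => by
        rw [hφ, Metric.mem_ball] at hy
        exact (h1 (hy.trans_le ((min_le_right _ _).trans (min_le_left _ _)))).le)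
    · intro x
      rw [← Real.dist_eq, hder]
      exact φ.dist_normed_convolution_le hdc.aestronglyMeasurable (fun y hy => by
        rw [hφ, Metric.mem_ball] at hy
        exact (h2 (hy.trans_le ((min_le_right _ _).trans (min_le_right _ _)))).le)
  choose ψ h1 h2 h3 h4 using main
  exact ⟨N₀ + 1, ψ, h1, fun x hx => hf0 x (by linarith), h2, h3, h4⟩

open Filter Topology in
/-- Continuity of the quadratic form under uniform convergence of the functions and of their
derivatives. -/
lemma tendsto_form {μ : Measure ℝ} [IsFiniteMeasure μ] {V : ℝ → ℝ} (hV : Measurable V) {M : ℝ}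
    (hVb : ∀ x, |V x| ≤ M) {f k : ℝ → ℝ} {B : ℝ} (hfB : ∀ x, |f x| ≤ B) (hkB : ∀ x, |k x| ≤ B)
    {ψ κ : ℕ → ℝ → ℝ} (hψ : ∀ n, Measurable (ψ n)) (hκ : ∀ n, Measurable (κ n))
    (h1 : ∀ n x, |ψ n x - f x| ≤ 1 / ((n : ℝ) + 1))
    (h2 : ∀ n x, |κ n x - k x| ≤ 1 / ((n : ℝ) + 1)) :
    Tendsto (fun n => ∫ x, (κ n x ^ 2 + V x * ψ n x ^ 2) ∂μ) atTop
      (𝓝 (∫ x, (k x ^ 2 + V x * f x ^ 2) ∂μ)) := by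
  have hle : ∀ n : ℕ, 1 / ((n : ℝ) + 1) ≤ 1 := fun n => by
    rw [div_le_one (by positivity)]; linarith [n.cast_nonneg (α := ℝ)]
  have hM : 0 ≤ M := (abs_nonneg _).trans (hVb 0)
  have bd : ∀ a b : ℝ, |b| ≤ B → ∀ n : ℕ, |a - b| ≤ 1 / ((n : ℝ) + 1) → a ^ 2 ≤ (B + 1) ^ 2 := by
    intro a b hb n hab
    have : |a| ≤ B + 1 := by
      have := abs_sub_abs_le_abs_sub a b
      linarith [hle n]
    exact sq_le_sq' (by linarith [neg_abs_le a]) (by linarith [le_abs_self a])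
  have pt : ∀ (φ : ℕ → ℝ) (b : ℝ), (∀ n, |φ n - b| ≤ 1 / ((n : ℝ) + 1)) →
      Tendsto φ atTop (𝓝 b) := by
    intro φ b h
    rw [tendsto_iff_dist_tendsto_zero]
    exact squeeze_zero (fun _ => dist_nonneg) (fun n => by rw [Real.dist_eq]; exact h n)
      tendsto_one_div_add_atTop_nhds_zero_nat
  refine tendsto_integral_of_dominated_convergence (fun _ => (B + 1) ^ 2 + M * (B + 1) ^ 2)
    (fun n => (((hκ n).pow_const 2).add (hV.mul ((hψ n).pow_const 2))).aestronglyMeasurable)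
    (integrable_const _) (fun n => Eventually.of_forall fun x => ?_)
    (Eventually.of_forall fun x => ?_)
  · rw [Real.norm_eq_abs]
    refine (abs_add_le _ _).trans ?_
    rw [abs_mul, abs_of_nonneg (sq_nonneg (κ n x)), abs_of_nonneg (sq_nonneg (ψ n x))]
    exact add_le_add (bd _ _ (hkB x) n (h2 n x))
      (mul_le_mul (hVb x) (bd _ _ (hfB x) n (h1 n x)) (sq_nonneg _) hM)
  · exact ((pt _ _ (fun n => h2 n x)).pow 2).add (((pt _ _ (fun n => h1 n x)).pow 2).const_mul _)

lemma cell_set_integral (g : ℝ → ℝ) :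
    ∫ x in Ioo (-(1 / 2) : ℝ) (1 / 2), g x = ∫ x in (-(1 / 2) : ℝ)..(1 / 2), g x := by
  rw [intervalIntegral.integral_of_le (by norm_num), integral_Ioc_eq_integral_Ioo]

lemma intervalIntegrable_form {V : ℝ → ℝ} (hV : Measurable V) {M : ℝ}
    (hVb : ∀ x, |V x| ≤ M) {f k : ℝ → ℝ} (hf : Continuous f) (hk : Continuous k) (a b : ℝ) :
    IntervalIntegrable (fun x => k x ^ 2 + V x * f x ^ 2) volume a b :=
  ((hk.pow 2).intervalIntegrable _ _).add
    ((intervalIntegrable_of_bdd hV hVb a b).mul_continuousOn (hf.pow 2).continuousOn)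

lemma cellForm_ge {V : ℝ → ℝ} (hV : Measurable V) {M : ℝ}
    (hVb : ∀ x, |V x| ≤ M) {f k : ℝ → ℝ} (h : CellC1 f k) :
    (∫ x in (-(1 / 2) : ℝ)..(1 / 2), k x ^ 2) - M * (∫ x in (-(1 / 2) : ℝ)..(1 / 2), f x ^ 2)
      ≤ cellForm V f k := by
  rw [cellForm, ← intervalIntegral.integral_const_mul, ← intervalIntegral.integral_sub]
  · refine intervalIntegral.integral_mono_on (by norm_num) ?_
      (intervalIntegrable_form hV hVb h.cont h.cont' _ _) fun x _ => ?_
    · exact (((h.cont'.pow 2).sub ((h.cont.pow 2).const_mul M)).intervalIntegrable _ _)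
    · have := (abs_le.1 (hVb x)).1
      nlinarith [sq_nonneg (f x)]
  · exact (h.cont'.pow 2).intervalIntegrable _ _
  · exact ((h.cont.pow 2).const_mul M).intervalIntegrable _ _

lemma integral_sq_nonneg (f : ℝ → ℝ) : 0 ≤ ∫ x in (-(1 / 2) : ℝ)..(1 / 2), f x ^ 2 :=
  intervalIntegral.integral_nonneg (by norm_num) fun _ _ => sq_nonneg _

/-- The set of Rayleigh quotients whose infimum is `NeumannGS1 V (-1/2) (1/2)`. -/
def quotSet (V : ℝ → ℝ) : Set ℝ := {e | ∃ ψ : ℝ → ℝ,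
    (∃ U, IsOpen U ∧ Set.Icc (-(1 / 2)) (1 / 2) ⊆ U ∧ ContDiffOn ℝ (⊤ : ℕ∞) ψ U) ∧
    (∃ x ∈ Set.Ioo (-(1 / 2) : ℝ) (1 / 2), ψ x ≠ 0) ∧
    e = (∫ x in Set.Ioo (-(1 / 2) : ℝ) (1 / 2), (deriv ψ x ^ 2 + V x * ψ x ^ 2)) /
        ∫ x in Set.Ioo (-(1 / 2) : ℝ) (1 / 2), ψ x ^ 2}

lemma exists_cellC1_of_mem_quotSet {V : ℝ → ℝ} {e : ℝ} (he : e ∈ quotSet V) :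
    ∃ f k, CellC1 f k ∧ 0 < ∫ x in (-(1 / 2) : ℝ)..(1 / 2), f x ^ 2 ∧
      e = cellForm V f k / ∫ x in (-(1 / 2) : ℝ)..(1 / 2), f x ^ 2 := by
  obtain ⟨ψ, ⟨U, hU, hIU, hψ⟩, ⟨x₀, hx₀, hψx⟩, rfl⟩ := he
  set π : ℝ → ℝ := fun t => projIcc (-(1 / 2) : ℝ) (1 / 2) (by norm_num) t with hπ
  have hπm : ∀ t, π t ∈ Icc (-(1 / 2) : ℝ) (1 / 2) := fun t => (projIcc _ _ _ t).2
  have hπi : ∀ t ∈ Icc (-(1 / 2) : ℝ) (1 / 2), π t = t := fun t ht => by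
    simp only [hπ]; rw [projIcc_of_mem _ ht]
  have hπc : Continuous π := continuous_subtype_val.comp continuous_projIcc
  have hC : CellC1 (fun t => ψ (π t)) (fun t => deriv ψ (π t)) := by
    refine ⟨hψ.continuousOn.comp_continuous hπc fun t => hIU (hπm t), ?_, ?_⟩
    · exact (hψ.continuousOn_deriv_of_isOpen hU (by exact_mod_cast le_top)).comp_continuous hπc
        fun t => hIU (hπm t)
    · intro x hx
      have hx' := Ioo_subset_Icc_self hx
      have hd : HasDerivAt ψ (deriv ψ x) x :=
        ((hψ.differentiableOn (by simp)).differentiableAt (hU.mem_nhds (hIU hx'))).hasDerivAt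
      rw [hπi x hx']
      refine hd.congr_of_eventuallyEq ?_
      filter_upwards [Icc_mem_nhds hx.1 hx.2] with t ht
      rw [hπi t ht]
  refine ⟨_, _, hC, ?_, ?_⟩
  · refine intervalIntegral.integral_pos (by norm_num) (hC.cont.pow 2).continuousOn
      (fun _ _ => sq_nonneg _) ⟨x₀, Ioo_subset_Icc_self hx₀, ?_⟩
    simp only [hπi x₀ (Ioo_subset_Icc_self hx₀)]
    positivity
  · rw [cellForm, ← cell_set_integral, ← cell_set_integral]
    congr 1 <;> refine setIntegral_congr_fun measurableSet_Ioo fun x hx => ?_ <;>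
      simp only [hπi x (Ioo_subset_Icc_self hx)]

lemma mem_quotSet {V ψ : ℝ → ℝ} (hψ : ContDiff ℝ (⊤ : ℕ∞) ψ)
    (hpos : 0 < ∫ x in Ioo (-(1 / 2) : ℝ) (1 / 2), ψ x ^ 2) :
    (∫ x in Ioo (-(1 / 2) : ℝ) (1 / 2), (deriv ψ x ^ 2 + V x * ψ x ^ 2)) /
        (∫ x in Ioo (-(1 / 2) : ℝ) (1 / 2), ψ x ^ 2) ∈ quotSet V := by
  refine ⟨ψ, ⟨univ, isOpen_univ, subset_univ _, hψ.contDiffOn⟩, ?_, rfl⟩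
  by_contra! h
  rw [setIntegral_congr_fun (g := fun _ => (0 : ℝ)) measurableSet_Ioo
    (fun x hx => by simp [h x hx])] at hpos
  simp at hpos

lemma quotSet_bddBelow {V : ℝ → ℝ} (hV : Measurable V) {M : ℝ} (hVb : ∀ x, |V x| ≤ M) :
    BddBelow (quotSet V) := by
  refine ⟨-M, fun e he => ?_⟩
  obtain ⟨f, k, h, hpos, rfl⟩ := exists_cellC1_of_mem_quotSet he
  rw [le_div_iff₀ hpos]
  linarith [cellForm_ge hV hVb h, integral_sq_nonneg k]

lemma exists_approx_min {V : ℝ → ℝ} {ε : ℝ} (hε : 0 < ε) :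
    ∃ f k, CellC1 f k ∧ cellForm V f k <
      (NeumannGS1 V (-(1 / 2)) (1 / 2) + ε) * ∫ x in (-(1 / 2) : ℝ)..(1 / 2), f x ^ 2 := by
  have hne : (quotSet V).Nonempty :=
    ⟨_, mem_quotSet (ψ := fun _ => 1) contDiff_const (by norm_num)⟩
  obtain ⟨e, he, hlt⟩ := exists_lt_of_csInf_lt hne (lt_add_of_pos_right (sInf (quotSet V)) hε)
  obtain ⟨f, k, h, hpos, rfl⟩ := exists_cellC1_of_mem_quotSet he
  exact ⟨f, k, h, (div_lt_iff₀ hpos).1 hlt⟩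

open Filter Topology in
/-- The Neumann energy bounds the form from below on all `C¹` functions of the cell, not only on
the smooth ones. -/
lemma neumann_le {V : ℝ → ℝ} (hV : Measurable V) {M : ℝ} (hVb : ∀ x, |V x| ≤ M)
    {f k : ℝ → ℝ} (h : CellC1 f k) :
    NeumannGS1 V (-(1 / 2)) (1 / 2) * (∫ x in (-(1 / 2) : ℝ)..(1 / 2), f x ^ 2)
      ≤ cellForm V f k := by
  rcases (integral_sq_nonneg f).eq_or_lt with h0 | hpos
  · have := cellForm_ge hV hVb h
    rw [← h0] at this ⊢
    linarith [integral_sq_nonneg k]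
  set F : ℝ → ℝ := fun t => f (-(1 / 2)) + ∫ s in (-(1 / 2) : ℝ)..t, k s with hF
  have hFd : ∀ t, HasDerivAt F (k t) t := fun t =>
    (intervalIntegral.integral_hasDerivAt_right (h.cont'.intervalIntegrable _ _)
      (h.cont'.stronglyMeasurableAtFilter _ _) h.cont'.continuousAt).const_add _
  have hFf : ∀ t ∈ Icc (-(1 / 2) : ℝ) (1 / 2), F t = f t := by
    intro t ht
    simp only [hF]
    rw [h.sub_eq le_rfl ht.1 ht.2]; ring
  have hF1 : ContDiff ℝ 1 F := by
    rw [contDiff_one_iff_deriv]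
    refine ⟨fun t => (hFd t).differentiableAt, ?_⟩
    rw [show deriv F = k from funext fun t => (hFd t).deriv]
    exact h.cont'
  let φ : ContDiffBump (0 : ℝ) := ⟨1, 2, one_pos, one_lt_two⟩
  have hφ1 : ∀ x ∈ Icc (-1 : ℝ) 1, φ x = 1 := fun x hx =>
    φ.one_of_mem_closedBall (by rw [Real.closedBall_eq_Icc]; simpa [φ] using hx)
  set G : ℝ → ℝ := fun x => φ x * F x with hG
  have hG1 : ContDiff ℝ 1 G := φ.contDiff.mul hF1
  have hGc : HasCompactSupport G := φ.hasCompactSupport.mul_right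
  have hGf : ∀ x ∈ Ioo (-(1 / 2) : ℝ) (1 / 2), G x = f x := fun x hx => by
    simp only [hG]
    rw [hφ1 x ⟨by linarith [hx.1], by linarith [hx.2]⟩, one_mul, hFf x (Ioo_subset_Icc_self hx)]
  have hGk : ∀ x ∈ Ioo (-(1 / 2) : ℝ) (1 / 2), deriv G x = k x := fun x hx => by
    rw [← (h.hasDeriv x hx).deriv]
    apply Filter.EventuallyEq.deriv_eq
    filter_upwards [isOpen_Ioo.mem_nhds hx] with y hy using hGf y hy
  obtain ⟨N, ψ, hψs, -, -, hψ1, hψ2⟩ := exists_smooth_approx hG1 hGc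
  obtain ⟨B₁, hB₁⟩ := hGc.exists_bound_of_continuous hG1.continuous
  obtain ⟨B₂, hB₂⟩ := hGc.deriv.exists_bound_of_continuous (hG1.continuous_deriv le_rfl)
  have hψc : ∀ n, Continuous (ψ n) := fun n => (hψs n).continuous
  have hψd : ∀ n, Continuous (deriv (ψ n)) := fun n =>
    (hψs n).continuous_deriv (by exact_mod_cast le_top)
  have t1 := tendsto_form (μ := volume.restrict (Ioo (-(1 / 2) : ℝ) (1 / 2))) hV hVb
    (B := max B₁ B₂) (fun x => (hB₁ x).trans (le_max_left _ _))
    (fun x => (hB₂ x).trans (le_max_right _ _)) (fun n => (hψc n).measurable)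
    (fun n => (hψd n).measurable) hψ1 hψ2
  have t2 := tendsto_form (μ := volume.restrict (Ioo (-(1 / 2) : ℝ) (1 / 2)))
    (V := fun _ => 1) measurable_const (M := 1) (by simp) (k := fun _ => 0) (κ := fun _ _ => 0)
    (B := max B₁ 0) (fun x => (hB₁ x).trans (le_max_left _ _))
    (by simp) (fun n => (hψc n).measurable) (by fun_prop) hψ1
    (fun n x => by simp; positivity)
  simp only [ne_eq, OfNat.ofNat_ne_zero, not_false_eq_true, zero_pow, zero_add, one_mul] at t2
  have e1 : ∫ x in Ioo (-(1 / 2) : ℝ) (1 / 2), (deriv G x ^ 2 + V x * G x ^ 2)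
      = cellForm V f k := by
    rw [cellForm, ← cell_set_integral]
    exact setIntegral_congr_fun measurableSet_Ioo fun x hx => by simp only [hGf x hx, hGk x hx]
  have e2 : ∫ x in Ioo (-(1 / 2) : ℝ) (1 / 2), G x ^ 2
      = ∫ x in (-(1 / 2) : ℝ)..(1 / 2), f x ^ 2 := by
    rw [← cell_set_integral]
    exact setIntegral_congr_fun measurableSet_Ioo fun x hx => by simp only [hGf x hx]
  rw [e1] at t1
  rw [e2] at t2
  refine le_of_tendsto_of_tendsto (t2.const_mul _) t1 ?_
  filter_upwards [t2.eventually (lt_mem_nhds hpos)] with n hn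
  rw [← le_div_iff₀ hn]
  exact csInf_le (quotSet_bddBelow hV hVb) (mem_quotSet (hψs n) hn)

/-! ### Picone's identity -/

/-- Picone's identity for a solution `u` of `u'' = W u` with `u'(-1/2) = 0`: writing a function as
`u g` turns the form into `∫ u² g'²` plus a boundary term. -/
lemma picone {W u v g l : ℝ → ℝ} (hWm : Measurable W) {M : ℝ} (hW : ∀ x, |W x| ≤ M)
    (hu : CellC1 u v)
    (hv : ∀ x ∈ Icc (-(1 / 2) : ℝ) (1 / 2), v x = ∫ t in (-(1 / 2) : ℝ)..x, W t * u t)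
    (hg : CellC1 g l) {x : ℝ} (hx : x ∈ Icc (-(1 / 2) : ℝ) (1 / 2)) :
    ∫ t in (-(1 / 2) : ℝ)..x, ((v t * g t + u t * l t) ^ 2 + W t * (u t * g t) ^ 2)
      = (∫ t in (-(1 / 2) : ℝ)..x, u t ^ 2 * l t ^ 2) + u x * v x * g x ^ 2 := by
  have hZ : ∀ a b, IntervalIntegrable (fun t => W t * u t) volume a b := fun a b =>
    (intervalIntegrable_of_bdd hWm hW a b).mul_continuousOn hu.cont.continuousOn
  have hF := hu.mul (hg.mul hg)
  have h1 := integral_mul_by_parts hZ hF hx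
  rw [← hv x hx] at h1
  have h2 : ∫ t in (-(1 / 2) : ℝ)..x, (∫ s in (-(1 / 2) : ℝ)..t, W s * u s) *
        (v t * (g t * g t) + u t * (l t * g t + g t * l t))
      = ∫ t in (-(1 / 2) : ℝ)..x, v t * (v t * (g t * g t) + u t * (l t * g t + g t * l t)) := by
    refine intervalIntegral.integral_congr fun t ht => ?_
    rw [uIcc_of_le hx.1] at ht
    rw [← hv t ⟨ht.1, ht.2.trans hx.2⟩]
  rw [h2] at h1
  have i1 : IntervalIntegrable (fun t => u t ^ 2 * l t ^ 2) volume (-(1 / 2)) x :=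
    ((hu.cont.pow 2).mul (hg.cont'.pow 2)).intervalIntegrable _ _
  have i2 : IntervalIntegrable (fun t => v t * (v t * (g t * g t) + u t * (l t * g t + g t * l t)))
      volume (-(1 / 2)) x := (hu.cont'.mul hF.cont').intervalIntegrable _ _
  have i3 : IntervalIntegrable (fun t => W t * u t * (u t * (g t * g t)))
      volume (-(1 / 2)) x := (hZ _ _).mul_continuousOn hF.cont.continuousOn
  have h3 : ∫ t in (-(1 / 2) : ℝ)..x, ((v t * g t + u t * l t) ^ 2 + W t * (u t * g t) ^ 2)
      = ∫ t in (-(1 / 2) : ℝ)..x, ((u t ^ 2 * l t ^ 2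
        + v t * (v t * (g t * g t) + u t * (l t * g t + g t * l t)))
        + W t * u t * (u t * (g t * g t))) := by
    congr 1; ext t; ring
  rw [h3, intervalIntegral.integral_add (i1.add i2) i3, intervalIntegral.integral_add i1 i2, h1]
  ring

open Filter Topology in
/-- Nonnegativity of the form extends to the function equal to `u + t` up to a zero `x₀` of `u`
and to the constant `t` afterwards. -/
lemma form_truncated_nonneg {W u v : ℝ → ℝ} (hWm : Measurable W) {M : ℝ} (hW : ∀ x, |W x| ≤ M)
    (hform : ∀ f k, CellC1 f k → 0 ≤ cellForm W f k) (hu : CellC1 u v)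
    {x₀ : ℝ} (hx₀ : x₀ ∈ Icc (-(1 / 2) : ℝ) (1 / 2)) (h0 : u x₀ = 0) (t : ℝ) :
    0 ≤ (∫ x in (-(1 / 2) : ℝ)..x₀, (v x ^ 2 + W x * (u x + t) ^ 2))
      + ∫ x in x₀..(1 / 2), W x * t ^ 2 := by
  have hM : 0 ≤ M := (abs_nonneg _).trans (hW 0)
  set κ : ℕ → ℝ → ℝ := fun n x => max 0 (min 1 (n * (x₀ - x))) with hκ
  have hκc : ∀ n, Continuous (κ n) := fun n => by simp only [hκ]; fun_prop
  have hκ0 : ∀ n x, 0 ≤ κ n x := fun n x => le_max_left _ _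
  have hκ1 : ∀ n x, κ n x ≤ 1 := fun n x => max_le zero_le_one (min_le_left _ _)
  set v₀ : ℝ → ℝ := fun x => if x < x₀ then v x else 0 with hv₀
  have hlim : ∀ x, Tendsto (fun n => v x * κ n x) atTop (𝓝 (v₀ x)) := by
    intro x
    by_cases hx : x < x₀
    · have h1 : Tendsto (fun n : ℕ => (n : ℝ) * (x₀ - x)) atTop atTop :=
        tendsto_natCast_atTop_atTop.atTop_mul_const (sub_pos.2 hx)
      have h2 : ∀ᶠ n : ℕ in atTop, v₀ x = v x * κ n x := by
        filter_upwards [h1.eventually_ge_atTop 1] with n hn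
        simp [hκ, hv₀, hx, min_eq_left hn]
      exact tendsto_const_nhds.congr' h2
    · have h2 : ∀ n : ℕ, v₀ x = v x * κ n x := fun n => by
        have : (n : ℝ) * (x₀ - x) ≤ 0 :=
          mul_nonpos_of_nonneg_of_nonpos n.cast_nonneg (by linarith)
        simp [hκ, hv₀, hx, max_eq_left ((min_le_right _ _).trans this)]
      exact tendsto_const_nhds.congr h2
  obtain ⟨B, hB⟩ := isCompact_Icc.exists_bound_of_continuousOn (s := Icc (-(1 / 2) : ℝ) (1 / 2))
    hu.cont'.continuousOn
  have hB0 : 0 ≤ B := (norm_nonneg _).trans (hB 0 (by norm_num))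
  have hBn : ∀ n, ∀ x ∈ Icc (-(1 / 2) : ℝ) (1 / 2), ‖v x * κ n x‖ ≤ B := fun n x hx => by
    rw [norm_mul, Real.norm_of_nonneg (hκ0 n x)]
    calc ‖v x‖ * κ n x ≤ B * 1 := mul_le_mul (hB x hx) (hκ1 n x) (hκ0 n x) hB0
      _ = B := mul_one B
  set f : ℕ → ℝ → ℝ := fun n x => t + u (-(1 / 2)) + ∫ s in (-(1 / 2) : ℝ)..x, v s * κ n s
    with hf
  set F : ℝ → ℝ := fun x => t + u (-(1 / 2)) + ∫ s in (-(1 / 2) : ℝ)..x, v₀ s with hF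
  have hvκ : ∀ n, Continuous fun x => v x * κ n x := fun n => hu.cont'.mul (hκc n)
  have hfC : ∀ n, CellC1 (f n) (fun x => v x * κ n x) := fun n =>
    have hd : ∀ x, HasDerivAt (f n) (v x * κ n x) x := fun x =>
      (intervalIntegral.integral_hasDerivAt_right ((hvκ n).intervalIntegrable _ _)
        ((hvκ n).stronglyMeasurableAtFilter _ _) (hvκ n).continuousAt).const_add _
    ⟨continuous_iff_continuousAt.2 fun x => (hd x).continuousAt, hvκ n, fun x _ => hd x⟩
  have hfF : ∀ x ∈ Icc (-(1 / 2) : ℝ) (1 / 2), Tendsto (fun n => f n x) atTop (𝓝 (F x)) := by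
    intro x hx
    refine Tendsto.const_add _ ?_
    refine intervalIntegral.tendsto_integral_filter_of_dominated_convergence (fun _ => B)
      (Eventually.of_forall fun n => (hvκ n).aestronglyMeasurable)
      (Eventually.of_forall fun n => Eventually.of_forall fun s hs => ?_)
      intervalIntegrable_const (Eventually.of_forall fun s _ => hlim s)
    rw [uIoc_of_le hx.1] at hs
    exact hBn n s ⟨hs.1.le, hs.2.trans hx.2⟩
  set B' : ℝ := |t + u (-(1 / 2))| + B with hB'
  have hfb : ∀ n, ∀ x ∈ Icc (-(1 / 2) : ℝ) (1 / 2), |f n x| ≤ B' := by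
    intro n x hx
    refine (abs_add_le _ _).trans (add_le_add le_rfl ?_)
    have h1 : ‖∫ s in (-(1 / 2) : ℝ)..x, v s * κ n s‖ ≤ B * |x - (-(1 / 2))| :=
      intervalIntegral.norm_integral_le_of_norm_le_const fun s hs => by
        rw [uIoc_of_le hx.1] at hs
        exact hBn n s ⟨hs.1.le, hs.2.trans hx.2⟩
    have h2 : |x - (-(1 / 2))| ≤ 1 := by
      rw [abs_le]; constructor <;> linarith [hx.1, hx.2]
    calc _ ≤ B * |x - (-(1 / 2))| := h1
      _ ≤ B * 1 := by gcongr
      _ = B := mul_one B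
  have hlimform : Tendsto (fun n => cellForm W (f n) (fun x => v x * κ n x)) atTop
      (𝓝 (∫ x in (-(1 / 2) : ℝ)..(1 / 2), (v₀ x ^ 2 + W x * F x ^ 2))) := by
    refine intervalIntegral.tendsto_integral_filter_of_dominated_convergence
      (fun _ => B ^ 2 + M * B' ^ 2)
      (Eventually.of_forall fun n => ?_)
      (Eventually.of_forall fun n => Eventually.of_forall fun s hs => ?_)
      intervalIntegrable_const (Eventually.of_forall fun s hs => ?_)
    · exact (((hvκ n).measurable.pow_const 2).add
        (hWm.mul ((hfC n).cont.measurable.pow_const 2))).aestronglyMeasurable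
    · rw [uIoc_of_le (by norm_num)] at hs
      have hs' : s ∈ Icc (-(1 / 2) : ℝ) (1 / 2) := ⟨hs.1.le, hs.2⟩
      rw [Real.norm_eq_abs]
      refine (abs_add_le _ _).trans ?_
      rw [abs_mul, abs_of_nonneg (sq_nonneg (f n s)), abs_of_nonneg (sq_nonneg (v s * κ n s))]
      have e1 : (v s * κ n s) ^ 2 ≤ B ^ 2 := sq_le_sq.2 (by
        rw [abs_of_nonneg hB0]; exact hBn n s hs')
      have e2 : f n s ^ 2 ≤ B' ^ 2 := sq_le_sq.2 ((hfb n s hs').trans (le_abs_self _))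
      exact add_le_add e1 (mul_le_mul (hW s) e2 (sq_nonneg _) hM)
    · rw [uIoc_of_le (by norm_num)] at hs
      exact ((hlim s).pow 2).add (((hfF s ⟨hs.1.le, hs.2⟩).pow 2).const_mul _)
  have hnn : 0 ≤ ∫ x in (-(1 / 2) : ℝ)..(1 / 2), (v₀ x ^ 2 + W x * F x ^ 2) :=
    ge_of_tendsto' hlimform fun n => hform _ _ (hfC n)
  have hF1 : ∀ x ∈ Icc (-(1 / 2) : ℝ) x₀, F x = u x + t := by
    intro x hx
    have : ∫ s in (-(1 / 2) : ℝ)..x, v₀ s = ∫ s in (-(1 / 2) : ℝ)..x, v s := by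
      refine intervalIntegral.integral_congr_Ioo_of_le hx.1 fun s hs => ?_
      simp [hv₀, hs.2.trans_le hx.2]
    simp only [hF]
    rw [this, hu.sub_eq le_rfl hx.1 (hx.2.trans hx₀.2)]
    ring
  have hv₀m : Measurable v₀ := Measurable.ite measurableSet_Iio hu.cont'.measurable measurable_const
  have hv₀b : ∀ x ∈ Icc (-(1 / 2) : ℝ) (1 / 2), ‖v₀ x‖ ≤ B := fun x hx => by
    simp only [hv₀]; split_ifs
    · exact hB x hx
    · simpa using hB0
  have hv₀i : ∀ a ∈ Icc (-(1 / 2) : ℝ) (1 / 2), ∀ b ∈ Icc (-(1 / 2) : ℝ) (1 / 2),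
      IntervalIntegrable v₀ volume a b := fun a ha b hb =>
    (intervalIntegrable_const (c := B)).mono_fun' hv₀m.aestronglyMeasurable
      ((ae_restrict_iff' measurableSet_uIoc).2 (Eventually.of_forall fun x hx =>
        hv₀b x (uIcc_subset_Icc ha hb (uIoc_subset_uIcc hx))))
  have hF2 : ∀ x ∈ Icc x₀ (1 / 2), F x = t := by
    intro x hx
    have e1 : ∫ s in x₀..x, v₀ s = 0 := by
      rw [intervalIntegral.integral_congr_Ioo_of_le (g := fun _ => 0) hx.1 fun s hs => ?_]
      · simp
      · simp [hv₀, hs.1.le]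
    have e2 := hF1 x₀ ⟨hx₀.1, le_rfl⟩
    have hl : (-(1 / 2) : ℝ) ∈ Icc (-(1 / 2) : ℝ) (1 / 2) := by norm_num
    have e3 := intervalIntegral.integral_add_adjacent_intervals (hv₀i _ hl _ hx₀)
      (hv₀i _ hx₀ x ⟨hx₀.1.trans hx.1, hx.2⟩)
    simp only [hF] at e2 ⊢
    rw [h0] at e2
    linarith
  have hI1 : EqOn (fun x => v₀ x ^ 2 + W x * F x ^ 2) (fun x => v x ^ 2 + W x * (u x + t) ^ 2)
      (Ioo (-(1 / 2)) x₀) := fun x hx => by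
    simp only [hF1 x (Ioo_subset_Icc_self hx)]
    simp [hv₀, hx.2]
  have hI2 : EqOn (fun x => v₀ x ^ 2 + W x * F x ^ 2) (fun x => W x * t ^ 2)
      (Ioo x₀ (1 / 2)) := fun x hx => by
    simp only [hF2 x (Ioo_subset_Icc_self hx)]
    simp [hv₀, hx.1.le]
  rw [← intervalIntegral.integral_congr_Ioo_of_le hx₀.1 hI1,
    ← intervalIntegral.integral_congr_Ioo_of_le hx₀.2 hI2,
    intervalIntegral.integral_add_adjacent_intervals]
  · exact hnn
  · exact (intervalIntegrable_form hWm hW (hu.cont.add continuous_const) hu.cont' _ _).congr_uIoo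
      (by rw [uIoo_of_le hx₀.1]; exact hI1.symm)
  · exact ((intervalIntegrable_of_bdd hWm hW _ _).mul_const _).congr_uIoo
      (by rw [uIoo_of_le hx₀.2]; exact hI2.symm)

/-! ### Ground states of the cell -/

/-- The nearest point of the cell. -/
def cellProj (x : ℝ) : ℝ := projIcc (-(1 / 2) : ℝ) (1 / 2) (by norm_num) x

lemma cellProj_mem (x : ℝ) : cellProj x ∈ Icc (-(1 / 2) : ℝ) (1 / 2) := (projIcc _ _ _ x).2

lemma cellProj_of_mem {x : ℝ} (hx : x ∈ Icc (-(1 / 2) : ℝ) (1 / 2)) : cellProj x = x := by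
  rw [cellProj, projIcc_of_mem _ hx]

lemma cellProj_of_le {x : ℝ} (hx : x ≤ -(1 / 2)) : cellProj x = -(1 / 2) := by
  rw [cellProj, projIcc_of_le_left _ hx]

lemma cellProj_of_ge {x : ℝ} (hx : 1 / 2 ≤ x) : cellProj x = 1 / 2 := by
  rw [cellProj, projIcc_of_right_le _ hx]

lemma continuous_cellProj : Continuous cellProj :=
  continuous_subtype_val.comp continuous_projIcc

lemma CellC1.div {f k u v : ℝ → ℝ} (hf : CellC1 f k) (hu : CellC1 u v) (hpos : ∀ x, 0 < u x) :
    CellC1 (fun x => f x / u x) (fun x => (k x * u x - f x * v x) / u x ^ 2) where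
  cont := hf.cont.div hu.cont fun x => (hpos x).ne'
  cont' := ((hf.cont'.mul hu.cont).sub (hf.cont.mul hu.cont')).div (hu.cont.pow 2)
    fun x => (pow_pos (hpos x) 2).ne'
  hasDeriv x hx := (hf.hasDeriv x hx).div (hu.hasDeriv x hx) (hpos x).ne'

lemma cellForm_congr {W f k f' k' : ℝ → ℝ} (h1 : ∀ x ∈ Icc (-(1 / 2) : ℝ) (1 / 2), f x = f' x)
    (h2 : ∀ x ∈ Icc (-(1 / 2) : ℝ) (1 / 2), k x = k' x) : cellForm W f k = cellForm W f' k' := by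
  refine intervalIntegral.integral_congr fun x hx => ?_
  rw [uIcc_of_le (by norm_num)] at hx
  simp only [h1 x hx, h2 x hx]

/-- Oscillation bound on the cell, by the Cauchy-Schwarz inequality. -/
lemma CellC1.sq_sub_le {g l : ℝ → ℝ} (h : CellC1 g l) {x y : ℝ}
    (hx : x ∈ Icc (-(1 / 2) : ℝ) (1 / 2)) (hy : y ∈ Icc (-(1 / 2) : ℝ) (1 / 2)) :
    (g x - g y) ^ 2 ≤ ∫ t in (-(1 / 2) : ℝ)..(1 / 2), l t ^ 2 := by
  wlog hxy : y ≤ x generalizing x y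
  · rw [show (g x - g y) ^ 2 = (g y - g x) ^ 2 by ring]
    exact this hy hx (le_of_not_ge hxy)
  set c := g x - g y
  have hI := h.sub_eq hy.1 hxy hx.2
  have hii : ∀ a b, IntervalIntegrable (fun t => l t ^ 2) volume a b := fun a b =>
    (h.cont'.pow 2).intervalIntegrable _ _
  -- `∫_y^x (l - c)² ≥ 0` together with `∫_y^x l = c` and `x - y ≤ 1`
  have h1 : 0 ≤ ∫ t in y..x, (l t - c) ^ 2 :=
    intervalIntegral.integral_nonneg hxy fun _ _ => sq_nonneg _
  have h2 : ∫ t in y..x, (l t - c) ^ 2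
      = (∫ t in y..x, l t ^ 2) - 2 * c * (∫ t in y..x, l t) + (x - y) * c ^ 2 := by
    have : ∀ t, (l t - c) ^ 2 = l t ^ 2 - 2 * c * l t + c ^ 2 := fun t => by ring
    simp only [this]
    rw [intervalIntegral.integral_add, intervalIntegral.integral_sub,
      intervalIntegral.integral_const_mul, intervalIntegral.integral_const, smul_eq_mul]
    · exact hii _ _
    · exact (h.cont'.const_mul _).intervalIntegrable _ _
    · exact ((h.cont'.pow 2).sub (h.cont'.const_mul _)).intervalIntegrable _ _
    · exact intervalIntegrable_const
  have h3 : ∫ t in y..x, l t ^ 2 ≤ ∫ t in (-(1 / 2) : ℝ)..(1 / 2), l t ^ 2 :=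
    intervalIntegral.integral_mono_interval hy.1 hxy hx.2
      (Filter.Eventually.of_forall fun _ => sq_nonneg _) (hii _ _)
  rw [hI] at h2
  nlinarith [sq_nonneg c, hx.2, hy.1]

lemma cell_integral_le {f : ℝ → ℝ} (hf : Continuous f) {C : ℝ}
    (h : ∀ x ∈ Icc (-(1 / 2) : ℝ) (1 / 2), f x ≤ C) :
    ∫ x in (-(1 / 2) : ℝ)..(1 / 2), f x ≤ C := by
  have := intervalIntegral.integral_mono_on (by norm_num : (-(1 / 2) : ℝ) ≤ 1 / 2)
    (hf.intervalIntegrable (μ := volume) _ _) intervalIntegrable_const h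
  norm_num at this
  simpa using this

/-- A positive normalised Neumann ground state at energy zero of `-d²/dx² + W` on the cell,
continued by constants to a `C¹` function on the line. The solution property enters through
Picone's identity, which has no boundary term because `u'` vanishes at both ends. -/
structure IsGS (W u : ℝ → ℝ) : Prop where
  smooth : ContDiff ℝ 1 u
  pos : ∀ x, 0 < u x
  left : ∀ x, x ≤ -(1 / 2) → u x = 1
  right : ∀ x, 1 / 2 ≤ x → u x = u (1 / 2)
  form : ∀ g l, CellC1 g l →
    cellForm W (fun x => u x * g x) (fun x => deriv u x * g x + u x * l x)
      = ∫ x in (-(1 / 2) : ℝ)..(1 / 2), u x ^ 2 * l x ^ 2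

/-- If the form is nonnegative, the solution with Neumann data on the left has no zero `x₀`: else
perturbing its truncation at `x₀` by constants would make the form negative. -/
lemma solution_pos {W u v : ℝ → ℝ} (hWm : Measurable W) {M : ℝ} (hW : ∀ x, |W x| ≤ M)
    (hform : ∀ f k, CellC1 f k → 0 ≤ cellForm W f k) (hu : CellC1 u v) (hu1 : u (-(1 / 2)) = 1)
    (hv : ∀ x ∈ Icc (-(1 / 2) : ℝ) (1 / 2), v x = ∫ t in (-(1 / 2) : ℝ)..x, W t * u t)
    (hne : ∀ x ∈ Icc (-(1 / 2) : ℝ) (1 / 2), u x = 0 → v x ≠ 0) :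
    ∀ x ∈ Icc (-(1 / 2) : ℝ) (1 / 2), 0 < u x := by
  have hnz : ∀ x ∈ Icc (-(1 / 2) : ℝ) (1 / 2), u x ≠ 0 := by
    intro x₀ hx₀ h0
    have hv0 := hne x₀ hx₀ h0
    have hp := picone hWm hW hu hv (cellC1_const 1) hx₀
    simp only [mul_one, mul_zero, add_zero, h0, zero_mul, ne_eq, OfNat.ofNat_ne_zero,
      not_false_eq_true, zero_pow, intervalIntegral.integral_zero] at hp
    have hWi := intervalIntegrable_of_bdd hWm hW
    have hWu : ∀ a b, IntervalIntegrable (fun x => W x * u x) volume a b := fun a b =>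
      (hWi a b).mul_continuousOn hu.cont.continuousOn
    have key : ∀ t : ℝ, 0 ≤ 2 * t * v x₀ + t ^ 2 * ∫ x in (-(1 / 2) : ℝ)..(1 / 2), W x := by
      intro t
      have h := form_truncated_nonneg hWm hW hform hu hx₀ h0 t
      have e : ∀ x, v x ^ 2 + W x * (u x + t) ^ 2
          = (v x ^ 2 + W x * u x ^ 2) + (2 * t * (W x * u x) + W x * t ^ 2) := fun x => by ring
      simp only [e] at h
      rw [intervalIntegral.integral_add (intervalIntegrable_form hWm hW hu.cont hu.cont' _ _)
          (((hWu _ _).const_mul _).add ((hWi _ _).mul_const _)), hp,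
        intervalIntegral.integral_add ((hWu _ _).const_mul _) ((hWi _ _).mul_const _),
        intervalIntegral.integral_const_mul, ← hv x₀ hx₀, intervalIntegral.integral_mul_const,
        intervalIntegral.integral_mul_const] at h
      rw [← intervalIntegral.integral_add_adjacent_intervals (hWi (-(1 / 2)) x₀) (hWi x₀ (1 / 2))]
      linarith
    -- a quadratic polynomial in `t` without constant term changes sign at `0` unless `v x₀ = 0`
    set I := ∫ x in (-(1 / 2) : ℝ)..(1 / 2), W x
    have h1 := key (-(v x₀) / (|I| + 1))
    have hI : 0 < |I| + 1 := by positivity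
    have h2 : 2 * (-(v x₀) / (|I| + 1)) * v x₀ + (-(v x₀) / (|I| + 1)) ^ 2 * I
        = (v x₀ ^ 2 / (|I| + 1) ^ 2) * (I - 2 * (|I| + 1)) := by
      field_simp
      ring
    rw [h2] at h1
    have h3 : 0 < v x₀ ^ 2 / (|I| + 1) ^ 2 := by positivity
    have h4 : I - 2 * (|I| + 1) < 0 := by linarith [le_abs_self I, abs_nonneg I]
    linarith [mul_neg_of_pos_of_neg h3 h4]
  intro x hx
  by_contra hneg
  have hl : (-(1 / 2) : ℝ) ∈ Icc (-(1 / 2) : ℝ) (1 / 2) := by norm_num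
  obtain ⟨y, hy, hy0⟩ := isPreconnected_Icc.intermediate_value hx hl hu.cont.continuousOn
    (show (0 : ℝ) ∈ Icc (u x) (u (-(1 / 2))) from ⟨not_lt.1 hneg, by rw [hu1]; norm_num⟩)
  exact hnz y hy hy0

/-- If the form of `W` is nonnegative with infimum zero, there is a ground state. -/
lemma exists_isGS {W : ℝ → ℝ} (hWm : Measurable W) {M : ℝ} (hW : ∀ x, |W x| ≤ M)
    (hform : ∀ f k, CellC1 f k → 0 ≤ cellForm W f k)
    (hinf : ∀ ε > 0, ∃ f k, CellC1 f k ∧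
      cellForm W f k < ε * ∫ x in (-(1 / 2) : ℝ)..(1 / 2), f x ^ 2) :
    ∃ u, IsGS W u := by
  obtain ⟨u, v, hu, hu1, hv, hne⟩ := exists_ode_solution hWm hW
  have hl : (-(1 / 2) : ℝ) ∈ Icc (-(1 / 2) : ℝ) (1 / 2) := by norm_num
  have hr : (1 / 2 : ℝ) ∈ Icc (-(1 / 2) : ℝ) (1 / 2) := by norm_num
  have hpos := solution_pos hWm hW hform hu hu1 hv hne
  have hP : ∀ g l, CellC1 g l → cellForm W (fun x => u x * g x) (fun x => v x * g x + u x * l x)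
      = (∫ x in (-(1 / 2) : ℝ)..(1 / 2), u x ^ 2 * l x ^ 2) + u (1 / 2) * v (1 / 2) * g (1 / 2) ^ 2 :=
    fun g l hg => picone hWm hW hu hv hg hr
  have hv0 : v (-(1 / 2)) = 0 := by rw [hv _ hl]; simp
  have hdP : ∀ x ∈ Ioo (-(1 / 2) : ℝ) (1 / 2), cellProj =ᶠ[nhds x] id := fun x hx => by
    filter_upwards [Icc_mem_nhds hx.1 hx.2] with t ht using cellProj_of_mem ht
  have hup : CellC1 (fun x => u (cellProj x)) (fun x => v (cellProj x)) := by
    refine ⟨hu.cont.comp continuous_cellProj, hu.cont'.comp continuous_cellProj, fun x hx => ?_⟩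
    rw [cellProj_of_mem (Ioo_subset_Icc_self hx)]
    exact (hu.hasDeriv x hx).congr_of_eventuallyEq ((hdP x hx).fun_comp u)
  have hvr : v (1 / 2) = 0 := by
    have hge : 0 ≤ v (1 / 2) := by
      have h1 := hP _ _ (cellC1_const 1)
      have h2 := hform _ _ (hu.mul (cellC1_const 1))
      rw [h1] at h2
      simp only [ne_eq, OfNat.ofNat_ne_zero, not_false_eq_true, zero_pow, mul_zero,
        intervalIntegral.integral_zero, zero_add, one_pow, mul_one] at h2
      exact nonneg_of_mul_nonneg_right h2 (hpos _ hr)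
    by_contra hne0
    have hgt : 0 < v (1 / 2) := lt_of_le_of_ne hge (Ne.symm hne0)
    obtain ⟨x₁, hx₁, hmin⟩ := isCompact_Icc.exists_isMinOn ⟨_, hl⟩ hu.cont.continuousOn
    obtain ⟨B, hB⟩ := isCompact_Icc.exists_bound_of_continuousOn
      (s := Icc (-(1 / 2) : ℝ) (1 / 2)) hu.cont.continuousOn
    set m := u x₁
    have hm : 0 < m := hpos _ hx₁
    set c := min (m ^ 2) (m * v (1 / 2)) with hc
    have hc0 : 0 < c := by positivity
    have hBpos : 0 < B := (norm_pos_iff.2 (hpos _ hl).ne').trans_le (hB _ hl)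
    obtain ⟨f, k, hf, hlt⟩ := hinf (c / (2 * B ^ 2)) (by positivity)
    have hg := hf.div hup (fun x => hpos _ (cellProj_mem x))
    set g : ℝ → ℝ := fun x => f x / u (cellProj x) with hgdef
    set l : ℝ → ℝ := fun x => (k x * u (cellProj x) - f x * v (cellProj x)) / u (cellProj x) ^ 2
      with hldef
    have hfg : ∀ x ∈ Icc (-(1 / 2) : ℝ) (1 / 2), u x * g x = f x := fun x hx => by
      have := (hpos x hx).ne'
      simp only [hgdef, cellProj_of_mem hx]
      field_simp
    have hkg : ∀ x ∈ Icc (-(1 / 2) : ℝ) (1 / 2), v x * g x + u x * l x = k x := fun x hx => by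
      have := (hpos x hx).ne'
      simp only [hgdef, hldef, cellProj_of_mem hx]
      field_simp
      ring
    have h1 := hP g l hg
    rw [cellForm_congr hfg hkg] at h1
    have h2 : m ^ 2 * (∫ x in (-(1 / 2) : ℝ)..(1 / 2), l x ^ 2)
        ≤ ∫ x in (-(1 / 2) : ℝ)..(1 / 2), u x ^ 2 * l x ^ 2 := by
      rw [← intervalIntegral.integral_const_mul]
      refine intervalIntegral.integral_mono_on (by norm_num)
        ((hg.cont'.pow 2).const_mul _ |>.intervalIntegrable _ _)
        (((hu.cont.pow 2).mul (hg.cont'.pow 2)).intervalIntegrable _ _) fun x hx => ?_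
      have : m ≤ u x := hmin hx
      gcongr
    have h3 : ∫ x in (-(1 / 2) : ℝ)..(1 / 2), f x ^ 2
        ≤ B ^ 2 * (2 * (∫ x in (-(1 / 2) : ℝ)..(1 / 2), l x ^ 2) + 2 * g (1 / 2) ^ 2) := by
      refine cell_integral_le (hf.cont.pow 2) fun x hx => ?_
      have e1 := hg.sq_sub_le hx hr
      simp only [Pi.pow_apply]
      rw [← hfg x hx, mul_pow]
      have e2 : u x ^ 2 ≤ B ^ 2 := sq_le_sq.2 ((hB x hx).trans (le_abs_self _))
      have e3 : g x ^ 2 ≤ 2 * (∫ x in (-(1 / 2) : ℝ)..(1 / 2), l x ^ 2) + 2 * g (1 / 2) ^ 2 := by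
        nlinarith [sq_nonneg (g x - 2 * g (1 / 2))]
      exact mul_le_mul e2 e3 (sq_nonneg _) (sq_nonneg _)
    have h4 : m * v (1 / 2) * g (1 / 2) ^ 2 ≤ u (1 / 2) * v (1 / 2) * g (1 / 2) ^ 2 := by
      have : m ≤ u (1 / 2) := hmin hr
      gcongr
    have h5 : c * (∫ x in (-(1 / 2) : ℝ)..(1 / 2), l x ^ 2)
        ≤ m ^ 2 * (∫ x in (-(1 / 2) : ℝ)..(1 / 2), l x ^ 2) :=
      mul_le_mul_of_nonneg_right (min_le_left _ _) (integral_sq_nonneg l)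
    have h6 : c * g (1 / 2) ^ 2 ≤ m * v (1 / 2) * g (1 / 2) ^ 2 :=
      mul_le_mul_of_nonneg_right (min_le_right _ _) (sq_nonneg _)
    have h7 : c / (2 * B ^ 2) * ∫ x in (-(1 / 2) : ℝ)..(1 / 2), f x ^ 2
        ≤ c * ((∫ x in (-(1 / 2) : ℝ)..(1 / 2), l x ^ 2) + g (1 / 2) ^ 2) := by
      refine (mul_le_mul_of_nonneg_left h3 (by positivity)).trans (le_of_eq ?_)
      field_simp
    linarith
  set U : ℝ → ℝ := fun x => 1 + ∫ t in (-(1 / 2) : ℝ)..x, v (cellProj t) with hU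
  have hUd : ∀ x, HasDerivAt U (v (cellProj x)) x := fun x =>
    (intervalIntegral.integral_hasDerivAt_right (hup.cont'.intervalIntegrable _ _)
      (hup.cont'.stronglyMeasurableAtFilter _ _) hup.cont'.continuousAt).const_add _
  have hUd' : deriv U = fun x => v (cellProj x) := funext fun x => (hUd x).deriv
  have hUin : ∀ x ∈ Icc (-(1 / 2) : ℝ) (1 / 2), U x = u x := fun x hx => by
    simp only [hU]
    rw [hup.sub_eq le_rfl hx.1 hx.2, cellProj_of_mem hx, cellProj_of_mem hl, hu1]
    ring
  have hUl : ∀ x, x ≤ -(1 / 2) → U x = 1 := fun x hx => by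
    simp only [hU]
    rw [intervalIntegral.integral_congr (g := fun _ => (0 : ℝ)) fun t ht => ?_]
    · simp
    · rw [uIcc_of_ge hx] at ht
      simp only [cellProj_of_le ht.2, hv0]
  have hUr : ∀ x, 1 / 2 ≤ x → U x = U (1 / 2) := fun x hx => by
    simp only [hU]
    rw [← intervalIntegral.integral_add_adjacent_intervals
      (hup.cont'.intervalIntegrable (-(1 / 2)) (1 / 2)) (hup.cont'.intervalIntegrable (1 / 2) x),
      intervalIntegral.integral_congr (a := 1 / 2) (b := x) (g := fun _ => (0 : ℝ)) fun t ht => ?_]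
    · simp
    · rw [uIcc_of_le hx] at ht
      simp only [cellProj_of_ge ht.1, hvr]
  refine ⟨U, ?_, ?_, hUl, hUr, ?_⟩
  · rw [contDiff_one_iff_deriv]
    exact ⟨fun t => (hUd t).differentiableAt, by rw [hUd']; exact hup.cont'⟩
  · intro x
    rcases le_total x (-(1 / 2)) with h | h
    · rw [hUl x h]; exact one_pos
    rcases le_total (1 / 2) x with h' | h'
    · rw [hUr x h', hUin _ hr]; exact hpos _ hr
    · rw [hUin x ⟨h, h'⟩]; exact hpos _ ⟨h, h'⟩
  · intro g l hg
    have h1 := hP g l hg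
    rw [hvr] at h1
    simp only [mul_zero, zero_mul, add_zero] at h1
    rw [cellForm_congr (f' := fun x => u x * g x) (k' := fun x => v x * g x + u x * l x), h1]
    · refine intervalIntegral.integral_congr fun x hx => ?_
      rw [uIcc_of_le (by norm_num)] at hx
      simp only [hUin x hx]
    · intro x hx; rw [hUin x hx]
    · intro x hx; simp only [hUin x hx, hUd', cellProj_of_mem hx]

/-! ### Transfer estimates on the cell -/

lemma IsGS.bounds {W u : ℝ → ℝ} (h : IsGS W u) : ∃ m B, 0 < m ∧ ∀ x, m ≤ u x ∧ u x ≤ B := by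
  have hp : ∀ x, u x = u (cellProj x) := fun x => by
    rcases le_total x (-(1 / 2)) with h1 | h1
    · rw [cellProj_of_le h1, h.left x h1, h.left _ le_rfl]
    rcases le_total (1 / 2) x with h2 | h2
    · rw [cellProj_of_ge h2, h.right x h2]
    · rw [cellProj_of_mem ⟨h1, h2⟩]
  have hne : (Icc (-(1 / 2) : ℝ) (1 / 2)).Nonempty := ⟨0, by norm_num⟩
  obtain ⟨x₁, -, hmin⟩ := isCompact_Icc.exists_isMinOn hne h.smooth.continuous.continuousOn
  obtain ⟨x₂, -, hmax⟩ := isCompact_Icc.exists_isMaxOn hne h.smooth.continuous.continuousOn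
  exact ⟨u x₁, u x₂, h.pos _, fun x => by
    rw [hp x]; exact ⟨hmin (cellProj_mem x), hmax (cellProj_mem x)⟩⟩

lemma CellC1.intervalIntegrable_mul_sq {f k : ℝ → ℝ} (h : CellC1 f k) (c a b : ℝ) :
    IntervalIntegrable (fun x => c * f x ^ 2) volume a b :=
  (continuous_const.mul (h.cont.pow 2)).intervalIntegrable _ _

lemma cellForm_sub_const {V f k : ℝ → ℝ} (hV : Measurable V) {M : ℝ} (hVb : ∀ x, |V x| ≤ M)
    (h : CellC1 f k) (e : ℝ) :
    cellForm (fun x => V x - e) f k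
      = cellForm V f k - e * ∫ x in (-(1 / 2) : ℝ)..(1 / 2), f x ^ 2 := by
  rw [cellForm, cellForm, ← intervalIntegral.integral_const_mul, ← intervalIntegral.integral_sub
    (intervalIntegrable_form hV hVb h.cont h.cont' _ _)
    (h.intervalIntegrable_mul_sq e _ _)]
  congr 1; ext x; ring

lemma integral_cell_neg (F : ℝ → ℝ) :
    ∫ x in (-(1 / 2) : ℝ)..(1 / 2), F (-x) = ∫ x in (-(1 / 2) : ℝ)..(1 / 2), F x := by
  rw [intervalIntegral.integral_comp_neg, neg_neg]

/-- Reflection of the cell maps ground states to ground states. -/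
lemma IsGS.reflect {W u : ℝ → ℝ} (h : IsGS W u) :
    IsGS (fun x => W (-x)) (fun x => u (-x) / u (1 / 2)) := by
  have hρ := h.pos (1 / 2)
  have hd : ∀ x, HasDerivAt (fun x => u (-x) / u (1 / 2)) (-deriv u (-x) / u (1 / 2)) x := by
    intro x
    have h1 := (h.smooth.differentiable one_ne_zero (-x)).hasDerivAt
    have h2 := (h1.comp x (hasDerivAt_neg x)).div_const (u (1 / 2))
    simpa using h2
  refine ⟨(h.smooth.comp contDiff_neg).div_const _, fun x => div_pos (h.pos _) hρ,
    fun x hx => ?_, fun x hx => ?_, fun g l hg => ?_⟩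
  · rw [h.right (-x) (by linarith), div_self hρ.ne']
  · rw [h.left (-x) (by linarith), h.left (-(1 / 2)) le_rfl]
  · have hgn : CellC1 (fun x => g (-x)) (fun x => -l (-x)) := by
      refine ⟨hg.cont.comp continuous_neg, (hg.cont'.comp continuous_neg).neg, fun x hx => ?_⟩
      have h1 := (hg.hasDeriv (-x) ⟨by linarith [hx.2], by linarith [hx.1]⟩).comp x (hasDerivAt_neg x)
      rw [mul_neg_one] at h1
      exact h1
    have h1 := h.form _ _ hgn
    rw [cellForm, ← integral_cell_neg, ← integral_cell_neg (fun x => u x ^ 2 * (-l (-x)) ^ 2)] at h1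
    rw [cellForm]
    have e1 : ∀ x, (deriv (fun x => u (-x) / u (1 / 2)) x * g x + u (-x) / u (1 / 2) * l x) ^ 2
        + W (-x) * (u (-x) / u (1 / 2) * g x) ^ 2
        = (1 / u (1 / 2) ^ 2) * ((deriv u (-x) * g (- -x) + u (-x) * -l (- -x)) ^ 2
          + W (-x) * (u (-x) * g (- -x)) ^ 2) := fun x => by
      rw [(hd x).deriv, neg_neg]
      field_simp
      ring
    have e2 : ∀ x, (u (-x) / u (1 / 2)) ^ 2 * l x ^ 2
        = (1 / u (1 / 2) ^ 2) * (u (-x) ^ 2 * (-l (- -x)) ^ 2) := fun x => by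
      rw [neg_neg]
      field_simp
    simp only [e1, e2]
    rw [intervalIntegral.integral_const_mul, intervalIntegral.integral_const_mul, h1]

/-- `CellEst W ρ C`: the form of `W` controls the defect of the transfer rule
`f(1/2) = ρ f(-1/2)` and, together with one boundary value, the `L²` norm over the cell. -/
def CellEst (W : ℝ → ℝ) (ρ C : ℝ) : Prop := ∀ f k, CellC1 f k →
  (f (1 / 2) - ρ * f (-(1 / 2))) ^ 2 ≤ C * cellForm W f k ∧
  ∫ x in (-(1 / 2) : ℝ)..(1 / 2), f x ^ 2 ≤ C * (f (-(1 / 2)) ^ 2 + cellForm W f k)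

lemma IsGS.eq_mul_div {W u f k : ℝ → ℝ} (h : IsGS W u) (hf : CellC1 f k) :
    ∃ g l, CellC1 g l ∧ (∀ x, u x * g x = f x) ∧ (∀ x, deriv u x * g x + u x * l x = k x) := by
  refine ⟨_, _, hf.div (cellC1_of_contDiff h.smooth) h.pos, fun x => ?_, fun x => ?_⟩
  · have := (h.pos x).ne'
    field_simp
  · have := (h.pos x).ne'
    field_simp
    ring

/-- The cell estimate for a ground state `u`: for `f = u g` the form is `∫ u² g'²`, which controls
the oscillation of `g`. -/
lemma IsGS.cellEst {W u : ℝ → ℝ} (h : IsGS W u) : ∃ C, 0 ≤ C ∧ CellEst W (u (1 / 2)) C := by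
  obtain ⟨m, B, hm, hmB⟩ := h.bounds
  have hB : 0 < B := hm.trans_le ((hmB 0).1.trans (hmB 0).2)
  have hl : (-(1 / 2) : ℝ) ∈ Icc (-(1 / 2) : ℝ) (1 / 2) := by norm_num
  have hr : (1 / 2 : ℝ) ∈ Icc (-(1 / 2) : ℝ) (1 / 2) := by norm_num
  refine ⟨2 * B ^ 2 * (1 / m ^ 2 + 1), by positivity, fun f k hf => ?_⟩
  obtain ⟨g, l, hg, hfg, hkg⟩ := h.eq_mul_div hf
  have hform := h.form g l hg
  simp only [hfg, hkg] at hform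
  change cellForm W f k = _ at hform
  have h2 : m ^ 2 * (∫ x in (-(1 / 2) : ℝ)..(1 / 2), l x ^ 2) ≤ cellForm W f k := by
    rw [hform, ← intervalIntegral.integral_const_mul]
    refine intervalIntegral.integral_mono_on (by norm_num)
      ((hg.cont'.pow 2).const_mul _ |>.intervalIntegrable _ _)
      (((h.smooth.continuous.pow 2).mul (hg.cont'.pow 2)).intervalIntegrable _ _) fun x hx => ?_
    have := (hmB x).1
    gcongr
  set I := ∫ x in (-(1 / 2) : ℝ)..(1 / 2), l x ^ 2 with hI
  have hI0 : 0 ≤ I := integral_sq_nonneg l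
  set A := cellForm W f k
  have hA : I ≤ 1 / m ^ 2 * A := by
    rw [one_div_mul_eq_div, le_div_iff₀ (by positivity)]; linarith
  have hA0 : 0 ≤ A := (by positivity : 0 ≤ m ^ 2 * I).trans h2
  have hB2 : ∀ x, u x ^ 2 ≤ B ^ 2 := fun x => by
    have := h.pos x; have := (hmB x).2; gcongr
  have hu1 : u (-(1 / 2)) = 1 := h.left _ le_rfl
  have hgl : g (-(1 / 2)) = f (-(1 / 2)) := by rw [← hfg, hu1, one_mul]
  constructor
  · have e1 := hg.sq_sub_le hr hl
    have e2 : (f (1 / 2) - u (1 / 2) * f (-(1 / 2))) ^ 2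
        = u (1 / 2) ^ 2 * (g (1 / 2) - g (-(1 / 2))) ^ 2 := by
      rw [← hfg (1 / 2), ← hgl]; ring
    rw [e2]
    calc _ ≤ B ^ 2 * (1 / m ^ 2 * A) :=
          mul_le_mul (hB2 _) (e1.trans hA) (sq_nonneg _) (by positivity)
      _ ≤ 2 * B ^ 2 * (1 / m ^ 2 + 1) * A := by
          have : 0 ≤ B ^ 2 * (1 / m ^ 2 * A) := by positivity
          nlinarith [mul_nonneg (sq_nonneg B) hA0]
  · have h3 : ∫ x in (-(1 / 2) : ℝ)..(1 / 2), f x ^ 2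
        ≤ B ^ 2 * (2 * I + 2 * f (-(1 / 2)) ^ 2) := by
      refine cell_integral_le (hf.cont.pow 2) fun x hx => ?_
      have e1 := hg.sq_sub_le hx hl
      simp only [Pi.pow_apply]
      rw [← hfg x, mul_pow]
      have e3 : g x ^ 2 ≤ 2 * I + 2 * f (-(1 / 2)) ^ 2 := by
        rw [← hgl]
        nlinarith [sq_nonneg (g x - 2 * g (-(1 / 2)))]
      exact mul_le_mul (hB2 x) e3 (sq_nonneg _) (sq_nonneg _)
    refine h3.trans ?_
    have a1 := mul_le_mul_of_nonneg_left hA (sq_nonneg B)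
    have a2 : 0 ≤ B ^ 2 * (1 / m ^ 2 * f (-(1 / 2)) ^ 2) := by positivity
    nlinarith [mul_nonneg (sq_nonneg B) hA0]

/-- A potential whose form is coercive satisfies the cell estimate with `ρ = 0`. -/
lemma cellEst_of_coercive {W : ℝ → ℝ} (hWm : Measurable W) {M : ℝ} (hW : ∀ x, |W x| ≤ M)
    {c : ℝ} (hc : 0 < c) (hco : ∀ f k, CellC1 f k →
      c * ∫ x in (-(1 / 2) : ℝ)..(1 / 2), f x ^ 2 ≤ cellForm W f k) :
    ∃ C, 0 ≤ C ∧ CellEst W 0 C := by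
  have hM : 0 ≤ M := (abs_nonneg _).trans (hW 0)
  have hr : (1 / 2 : ℝ) ∈ Icc (-(1 / 2) : ℝ) (1 / 2) := by norm_num
  refine ⟨2 * (1 + (1 + M) / c), by positivity, fun f k hf => ?_⟩
  have h1 := hco f k hf
  have h2 := cellForm_ge hWm hW hf
  have h3 : f (1 / 2) ^ 2 ≤ 2 * (∫ x in (-(1 / 2) : ℝ)..(1 / 2), f x ^ 2)
      + 2 * ∫ x in (-(1 / 2) : ℝ)..(1 / 2), k x ^ 2 := by
    have := cell_integral_le (f := fun x => f (1 / 2) ^ 2 - 2 * f x ^ 2)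
      (continuous_const.sub ((hf.cont.pow 2).const_mul 2))
      (C := 2 * ∫ x in (-(1 / 2) : ℝ)..(1 / 2), k x ^ 2) fun x hx => by
        have := hf.sq_sub_le hr hx
        nlinarith [sq_nonneg (f (1 / 2) - 2 * f x)]
    rw [intervalIntegral.integral_sub intervalIntegrable_const
      (hf.intervalIntegrable_mul_sq 2 _ _),
      intervalIntegral.integral_const_mul, intervalIntegral.integral_const] at this
    norm_num at this ⊢
    linarith
  set A := cellForm W f k
  set J := ∫ x in (-(1 / 2) : ℝ)..(1 / 2), f x ^ 2
  have hJ : 0 ≤ J := integral_sq_nonneg f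
  have hA : 0 ≤ A := (by positivity : 0 ≤ c * J).trans h1
  have hJA : J ≤ A / c := by rw [le_div_iff₀ hc]; linarith
  have hMJ := mul_le_mul_of_nonneg_left hJA hM
  have e : (2 * (1 + (1 + M) / c)) * A = 2 * A + 2 * (A / c) + 2 * (M * (A / c)) := by
    field_simp; ring
  have hAc : 0 ≤ A / c := by positivity
  have hMAc : 0 ≤ M * (A / c) := by positivity
  refine ⟨?_, ?_⟩
  · rw [zero_mul, sub_zero, e]; linarith
  · rw [mul_add, e]
    have : 0 ≤ 2 * (1 + (1 + M) / c) * f (-(1 / 2)) ^ 2 := by positivity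
    linarith

/-- The ground state at `d = 1/2 - r` is not symmetric in its boundary values: otherwise
shifting its periodic continuation would give a trial function of energy `e < E₀(0)` for the
centred potential. -/
lemma ground_ratio_ne_one {q u : ℝ → ℝ} {r d e M : ℝ} (hr0 : 0 < r) (hr : r < 1 / 2)
    (hd : d = 1 / 2 - r) (hqm : Measurable q) (hqb : ∀ x, |q x| ≤ M)
    (hq0 : ∀ x : ℝ, r < |x| → q x = 0) (h : IsGS (fun x => q (x - d) - e) u)
    (hlt : e < E0fun1 q 0) : u (1 / 2) ≠ 1 := by
  intro hρ
  have huC := cellC1_of_contDiff h.smooth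
  have hWm : Measurable fun x => q (x - d) - e := (hqm.comp (measurable_sub_const d)).sub_const e
  have hWb : ∀ x, |q (x - d) - e| ≤ M + |e| := fun x =>
    (abs_sub _ _).trans (add_le_add (hqb _) le_rfl)
  set w : ℝ → ℝ := fun x => u (x + d) * u (x + d - 1) with hw
  have hdu : ∀ x, HasDerivAt u (deriv u x) x := fun x =>
    (h.smooth.differentiable one_ne_zero x).hasDerivAt
  have hwd : ContDiff ℝ 1 w :=
    (h.smooth.comp (contDiff_id.add contDiff_const)).mul
      (h.smooth.comp ((contDiff_id.add contDiff_const).sub contDiff_const))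
  have hwC := cellC1_of_contDiff hwd
  have hw1 : ∀ x, x ≤ r → w x = u (x + d) := fun x hx => by
    simp only [hw]; rw [h.left (x + d - 1) (by linarith), mul_one]
  have hw2 : ∀ x, r ≤ x → w x = u (x + d - 1) := fun x hx => by
    simp only [hw]; rw [h.right (x + d) (by linarith), hρ, one_mul]
  have hw1' : ∀ x, x < r → deriv w x = deriv u (x + d) := fun x hx => by
    have h1 : w =ᶠ[nhds x] fun x => u (x + d) := by
      filter_upwards [Iio_mem_nhds hx] with y hy using hw1 y (le_of_lt hy)
    rw [h1.deriv_eq, deriv_comp_add_const]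
  have hw2' : ∀ x, r < x → deriv w x = deriv u (x + d - 1) := fun x hx => by
    have h1 : w =ᶠ[nhds x] fun x => u (x + (d - 1)) := by
      filter_upwards [Ioi_mem_nhds hx] with y hy
      rw [hw2 y (le_of_lt hy)]; ring_nf
    rw [h1.deriv_eq, deriv_comp_add_const]; ring_nf
  set Φ : ℝ → ℝ := fun y => deriv u y ^ 2 + (q (y - d) - e) * u y ^ 2 with hΦ
  have hΦi : ∀ a b, IntervalIntegrable Φ volume a b := fun a b =>
    intervalIntegrable_form hWm hWb huC.cont huC.cont' a b
  have hΦ0 : ∫ x in (-(1 / 2) : ℝ)..(1 / 2), Φ x = 0 := by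
    have := h.form _ _ (cellC1_const 1)
    simpa [cellForm, hΦ] using this
  have hqe : Measurable fun x => q x - e := hqm.sub_const e
  have hqeb : ∀ x, |q x - e| ≤ M + |e| := fun x =>
    (abs_sub _ _).trans (add_le_add (hqb _) le_rfl)
  have hi : ∀ a b, IntervalIntegrable (fun x => deriv w x ^ 2 + (q x - e) * w x ^ 2) volume a b :=
    fun a b => intervalIntegrable_form hqe hqeb hwC.cont hwC.cont' a b
  have hform : cellForm (fun x => q x - e) w (deriv w) = 0 := by
    rw [cellForm, ← intervalIntegral.integral_add_adjacent_intervals (hi (-(1 / 2)) r)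
      (hi r (1 / 2))]
    have e1 : ∫ x in (-(1 / 2) : ℝ)..r, (deriv w x ^ 2 + (q x - e) * w x ^ 2)
        = ∫ y in (-r)..(1 / 2), Φ y := by
      have : EqOn (fun x => deriv w x ^ 2 + (q x - e) * w x ^ 2) (fun x => Φ (x + d))
          (Ioo (-(1 / 2)) r) := fun x hx => by
        simp only [hΦ, hw1 x hx.2.le, hw1' x hx.2, add_sub_cancel_right]
      rw [intervalIntegral.integral_congr_Ioo_of_le (by linarith) this,
        intervalIntegral.integral_comp_add_right]
      congr 1 <;> rw [hd] <;> ring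
    have e2 : ∫ x in r..(1 / 2), (deriv w x ^ 2 + (q x - e) * w x ^ 2)
        = ∫ y in (-(1 / 2) : ℝ)..(-r), Φ y := by
      have : EqOn (fun x => deriv w x ^ 2 + (q x - e) * w x ^ 2) (fun x => Φ (x + (d - 1)))
          (Ioo r (1 / 2)) := fun x hx => by
        have q1 : q x = 0 := hq0 x (by rw [abs_of_pos (hr0.trans hx.1)]; exact hx.1)
        have q2 : q (x + (d - 1 - d)) = 0 := hq0 _ (by
          rw [abs_of_neg (by linarith [hx.2])]; linarith [hx.2])
        simp only [hΦ, hw2 x hx.1.le, hw2' x hx.1, q1, q2, add_sub_assoc]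
      rw [intervalIntegral.integral_congr_Ioo_of_le (by linarith) this,
        intervalIntegral.integral_comp_add_right]
      congr 1 <;> rw [hd] <;> ring
    rw [e1, e2, add_comm, intervalIntegral.integral_add_adjacent_intervals (hΦi _ _) (hΦi _ _), hΦ0]
  rw [cellForm_sub_const hqm hqb hwC] at hform
  have hN := neumann_le hqm hqb hwC
  have hE : E0fun1 q 0 = NeumannGS1 q (-(1 / 2)) (1 / 2) := by simp [E0fun1]
  have hpos : 0 < ∫ x in (-(1 / 2) : ℝ)..(1 / 2), w x ^ 2 := by
    refine intervalIntegral.integral_pos (by norm_num) (hwC.cont.pow 2).continuousOn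
      (fun _ _ => sq_nonneg _) ⟨0, by norm_num, ?_⟩
    exact pow_pos (mul_pos (h.pos _) (h.pos _)) 2
  rw [← hE] at hN
  nlinarith

/-! ### Almost solutions of a periodic first order recursion -/

lemma tsum_shift (f : ℤ → ℝ) (m : ℤ) : ∑' i, f (i + m) = ∑' i, f i :=
  (Equiv.addRight m).tsum_eq f

lemma summable_shift {f : ℤ → ℝ} (hf : Summable f) (m : ℤ) : Summable fun i => f (i + m) :=
  hf.comp_injective (add_left_injective m)

/-- Iterating the first order recursion `x (i + 1) = ρ i * x i` over `m` steps accumulates a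
defect controlled by the one-step defects. -/
lemma exists_recursion_defect_bound {ρ : ℤ → ℝ} {R : ℝ} (hR : ∀ i, |ρ i| ≤ R) (m : ℕ) :
    ∃ K, 0 ≤ K ∧ ∀ x : ℤ → ℝ, Summable (fun i => x i ^ 2) →
      Summable (fun i => (x (i + m) - (∏ k ∈ Finset.range m, ρ (i + k)) * x i) ^ 2) ∧
      ∑' i, (x (i + m) - (∏ k ∈ Finset.range m, ρ (i + k)) * x i) ^ 2
        ≤ K * ∑' i, (x (i + 1) - ρ i * x i) ^ 2 := by
  have hδ : ∀ x : ℤ → ℝ, Summable (fun i => x i ^ 2) →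
      Summable fun i => (x (i + 1) - ρ i * x i) ^ 2 := by
    intro x hx
    refine Summable.of_nonneg_of_le (fun i => sq_nonneg _) (fun i => ?_)
      (((summable_shift hx 1).mul_left 2).add (hx.mul_left (2 * R ^ 2)))
    have h1 : ρ i ^ 2 ≤ R ^ 2 := sq_le_sq.2 ((hR i).trans (le_abs_self R))
    nlinarith [sq_nonneg (x (i + 1) + ρ i * x i), mul_le_mul_of_nonneg_right h1 (sq_nonneg (x i))]
  induction m with
  | zero => exact ⟨0, le_rfl, fun x _ => by simp [summable_zero]⟩
  | succ m ih =>
    obtain ⟨K, hK, ih⟩ := ih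
    refine ⟨2 + 2 * R ^ 2 * K, by positivity, fun x hx => ?_⟩
    obtain ⟨hs, hle⟩ := ih x hx
    have hd := summable_shift (hδ x hx) m
    have hsum := (hd.mul_left 2).add (hs.mul_left (2 * R ^ 2))
    have pt : ∀ i : ℤ, (x (i + (m + 1 : ℕ)) - (∏ k ∈ Finset.range (m + 1), ρ (i + k)) * x i) ^ 2
        ≤ 2 * (x (i + m + 1) - ρ (i + m) * x (i + m)) ^ 2
          + 2 * R ^ 2 * (x (i + m) - (∏ k ∈ Finset.range m, ρ (i + k)) * x i) ^ 2 := by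
      intro i
      have h1 : ρ (i + m) ^ 2 ≤ R ^ 2 := sq_le_sq.2 ((hR _).trans (le_abs_self R))
      rw [Finset.prod_range_succ, show i + ((m + 1 : ℕ) : ℤ) = i + m + 1 by push_cast; ring]
      set p := ∏ k ∈ Finset.range m, ρ (i + k)
      have h2 := mul_le_mul_of_nonneg_right h1 (sq_nonneg (x (i + m) - p * x i))
      nlinarith [sq_nonneg ((x (i + m + 1) - ρ (i + m) * x (i + m))
        - ρ (i + m) * (x (i + m) - p * x i))]
    have hs' := Summable.of_nonneg_of_le (fun i => sq_nonneg _) pt hsum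
    refine ⟨hs', (hs'.tsum_le_tsum pt hsum).trans ?_⟩
    rw [(hd.mul_left 2).tsum_add (hs.mul_left _), tsum_mul_left, tsum_mul_left,
      tsum_shift (fun i => (x (i + 1) - ρ i * x i) ^ 2)]
    nlinarith [mul_le_mul_of_nonneg_left hle (by positivity : (0 : ℝ) ≤ 2 * R ^ 2)]

/-- If the product `P ≥ 0` of the transfer factors over every window of length `L` is not `1`, the
recursion `x (i + 1) = ρ i * x i` has no approximate square summable solutions. -/
lemma exists_tsum_sq_le {ρ : ℤ → ℝ} {R : ℝ} (hR : ∀ i, |ρ i| ≤ R) {L : ℕ} {P : ℝ}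
    (hP : ∀ i, ∏ k ∈ Finset.range L, ρ (i + k) = P) (hP0 : 0 ≤ P) (hP1 : P ≠ 1) :
    ∃ K, 0 ≤ K ∧ ∀ x : ℤ → ℝ, Summable (fun i => x i ^ 2) →
      ∑' i, x i ^ 2 ≤ K * ∑' i, (x (i + 1) - ρ i * x i) ^ 2 := by
  obtain ⟨K, hK, h⟩ := exists_recursion_defect_bound hR L
  have hp : 0 < (1 - P) ^ 2 := by
    have : 1 - P ≠ 0 := sub_ne_zero.2 (Ne.symm hP1)
    positivity
  refine ⟨K / (1 - P) ^ 2, by positivity, fun x hx => ?_⟩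
  obtain ⟨hs, hle⟩ := h x hx
  simp only [hP] at hs hle
  have hL := summable_shift hx L
  have pt : ∀ i : ℤ, (1 - P) * x (i + L) ^ 2 + (P ^ 2 - P) * x i ^ 2 ≤ (x (i + L) - P * x i) ^ 2 := by
    intro i
    nlinarith [mul_nonneg hP0 (sq_nonneg (x (i + L) - x i))]
  have h1 := ((hL.mul_left (1 - P)).add (hx.mul_left (P ^ 2 - P))).tsum_le_tsum pt hs
  rw [(hL.mul_left (1 - P)).tsum_add (hx.mul_left (P ^ 2 - P)), tsum_mul_left, tsum_mul_left,
    tsum_shift (fun i => x i ^ 2)] at h1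
  rw [div_mul_eq_mul_div, le_div_iff₀ hp]
  nlinarith

lemma prod_window_eq {ρ : ℤ → ℝ} {L : ℕ} (hper : ∀ i, ρ (i + L) = ρ i) (i : ℤ) :
    ∏ k ∈ Finset.range L, ρ (i + k) = ∏ k ∈ Finset.range L, ρ k := by
  have step : ∀ i : ℤ, ∏ k ∈ Finset.range L, ρ (i + 1 + k) = ∏ k ∈ Finset.range L, ρ (i + k) := by
    intro i
    have h1 := Finset.prod_range_succ (fun k : ℕ => ρ (i + k)) L
    have h2 := Finset.prod_range_succ' (fun k : ℕ => ρ (i + k)) L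
    rw [h1] at h2
    rcases Nat.eq_zero_or_pos L with rfl | hL
    · simp
    by_cases h0 : ρ i = 0
    · -- both windows contain a site congruent to `i`
      rw [Finset.prod_eq_zero (i := L - 1) (Finset.mem_range.2 (by omega)),
        Finset.prod_eq_zero (i := 0) (Finset.mem_range.2 hL)]
      · simpa using h0
      · rw [← h0, ← hper i]; congr 1; push_cast [Nat.cast_sub hL]; ring
    · rw [hper i] at h2
      simp only [Nat.cast_zero, add_zero] at h2
      have := mul_right_cancel₀ h0 h2
      rw [this]
      refine Finset.prod_congr rfl fun k _ => ?_
      congr 1; push_cast; ring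
  induction i using Int.induction_on with
  | zero => simp
  | succ n ih => rw [step, ih]
  | pred n ih =>
    have := step (-(n : ℤ) - 1)
    rw [sub_add_cancel] at this
    rw [← this, ih]

/-! ### Decomposition of the line into cells -/

/-- The potential `V_ω` with the value at each half-integer taken from the cell to its right; it
differs from `Vpot1 q ω` on a null set only. -/
def Vline (q : ℝ → ℝ) (ω : ℤ → ℝ) (x : ℝ) : ℝ := q (x - ⌊x + 1 / 2⌋ - ω ⌊x + 1 / 2⌋)

lemma Vline_add {q : ℝ → ℝ} {ω : ℤ → ℝ} {x : ℝ} (hx : x ∈ Ioo (-(1 / 2) : ℝ) (1 / 2)) (i : ℤ) :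
    Vline q ω (x + i) = q (x - ω i) := by
  have : ⌊x + i + 1 / 2⌋ = i := by
    rw [Int.floor_eq_iff]; constructor <;> linarith [hx.1, hx.2]
  rw [Vline, this, add_sub_cancel_right]

lemma measurable_Vline {q : ℝ → ℝ} (hq : Measurable q) (ω : ℤ → ℝ) : Measurable (Vline q ω) := by
  have h1 : Measurable fun x : ℝ => ⌊x + 1 / 2⌋ := Int.measurable_floor.comp (measurable_add_const _)
  have h2 : Measurable fun x : ℝ => ((⌊x + 1 / 2⌋ : ℤ) : ℝ) :=
    (measurable_of_countable (fun i : ℤ => (i : ℝ))).comp h1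
  have h3 : Measurable fun x : ℝ => ω ⌊x + 1 / 2⌋ := (measurable_of_countable ω).comp h1
  exact hq.comp ((measurable_id.sub h2).sub h3)

lemma Vpot1_ae_eq {q : ℝ → ℝ} {r d : ℝ} (hd : d = 1 / 2 - r)
    (hq0 : ∀ x : ℝ, r < |x| → q x = 0) {ω : ℤ → ℝ} (hω : ∀ i, |ω i| ≤ d) :
    Vpot1 q ω =ᵐ[volume] Vline q ω := by
  have hc : (range fun i : ℤ => (i : ℝ) - 1 / 2).Countable := countable_range _
  filter_upwards [compl_mem_ae_iff.2 (hc.measure_zero volume)] with x hx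
  set i := ⌊x + 1 / 2⌋ with hi
  have h1 : (i : ℝ) ≤ x + 1 / 2 := Int.floor_le _
  have h2 : x + 1 / 2 < i + 1 := Int.lt_floor_add_one _
  have h3 : x ≠ i - 1 / 2 := fun h => hx ⟨i, h.symm⟩
  have h4 : (i : ℝ) - 1 / 2 < x := lt_of_le_of_ne (by linarith) (Ne.symm h3)
  rw [Vpot1, Vline, tsum_eq_single i]
  intro j hj
  apply hq0
  have hωj := abs_le.1 (hω j)
  rcases lt_or_gt_of_ne hj with h | h
  · have : (j : ℝ) + 1 ≤ i := by exact_mod_cast h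
    exact lt_of_lt_of_le (by linarith) (le_abs_self _)
  · have : (i : ℝ) + 1 ≤ j := by exact_mod_cast h
    exact lt_of_lt_of_le (by linarith) (neg_le_abs _)

lemma hasSum_of_eq {f g : ℤ → ℝ} {a b : ℝ} (h : HasSum f a) (hg : ∀ i, g i = f i) (hb : b = a) :
    HasSum g b := by
  rwa [funext hg, hb]

lemma hasSum_cells {Φ : ℝ → ℝ} (hΦ : Integrable Φ) :
    HasSum (fun n : ℤ => ∫ x in (-(1 / 2) : ℝ)..(1 / 2), Φ (x + n)) (∫ x, Φ x) := by
  have h := hΦ.hasSum_intervalIntegral (-(1 / 2))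
  refine hasSum_of_eq h (fun n => ?_) rfl
  rw [intervalIntegral.integral_comp_add_right]
  congr 1
  ring

lemma integrable_sq_of_hasCompactSupport {f : ℝ → ℝ} (hf : Continuous f)
    (hc : HasCompactSupport f) : Integrable fun x => f x ^ 2 := by
  refine (hf.pow 2).integrable_of_hasCompactSupport (hc.mono' ?_)
  intro x hx
  refine subset_tsupport _ fun h => hx ?_
  simp [h]

lemma integrable_mul_sq {V f : ℝ → ℝ} (hV : Measurable V) {M : ℝ} (hVb : ∀ x, |V x| ≤ M)
    (hf : Continuous f) (hc : HasCompactSupport f) : Integrable fun x => V x * f x ^ 2 :=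
  (integrable_sq_of_hasCompactSupport hf hc).bdd_mul hV.aestronglyMeasurable
    (Filter.Eventually.of_forall hVb)

/-- Decomposition of the form of the whole line into the forms of the cells. -/
lemma hasSum_cellForm {q : ℝ → ℝ} (hqm : Measurable q) {M : ℝ} (hqb : ∀ x, |q x| ≤ M)
    (ω : ℤ → ℝ) (e : ℝ) {f : ℝ → ℝ} (hf : ContDiff ℝ 1 f) (hc : HasCompactSupport f) :
    HasSum (fun i : ℤ => cellForm (fun x => q (x - ω i) - e) (fun x => f (x + i))
        (fun x => deriv f (x + i)))
      ((∫ x, (deriv f x ^ 2 + Vline q ω x * f x ^ 2)) - e * ∫ x, f x ^ 2) := by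
  have hd := hf.continuous_deriv le_rfl
  have i1 := integrable_sq_of_hasCompactSupport hd hc.deriv
  have i2 := integrable_mul_sq (measurable_Vline hqm ω) (fun x => hqb _) hf.continuous hc
  have i3 := (integrable_sq_of_hasCompactSupport hf.continuous hc).const_mul e
  have h := hasSum_cells ((i1.add i2).sub i3)
  rw [integral_sub' (i1.add i2) i3, integral_const_mul] at h
  refine hasSum_of_eq h (fun i => ?_) rfl
  refine intervalIntegral.integral_congr_Ioo_of_le (by norm_num) fun x hx => ?_
  simp only [Pi.sub_apply, Pi.add_apply, Vline_add hx]
  ring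

lemma energy_set_nonempty (q : ℝ → ℝ) (ω : ℤ → ℝ) :
    {e | ∃ ψ : ℝ → ℝ, ContDiff ℝ (⊤ : ℕ∞) ψ ∧ HasCompactSupport ψ ∧ ψ ≠ 0 ∧
      e = (∫ x, (deriv ψ x ^ 2 + Vpot1 q ω x * ψ x ^ 2)) / ∫ x, ψ x ^ 2}.Nonempty := by
  let φ : ContDiffBump (0 : ℝ) := ⟨1, 2, one_pos, one_lt_two⟩
  refine ⟨_, φ, φ.contDiff, φ.hasCompactSupport, fun h => ?_, rfl⟩
  have h1 : φ 0 = 1 := φ.one_of_mem_closedBall (by simp [φ])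
  rw [h] at h1
  simp at h1

lemma integral_sq_pos {f : ℝ → ℝ} (hf : Continuous f) (hc : HasCompactSupport f) (h0 : f ≠ 0) :
    0 < ∫ x, f x ^ 2 := by
  obtain ⟨x, hx⟩ := Function.ne_iff.1 h0
  refine (hf.pow 2).integral_pos_of_hasCompactSupport_nonneg_nonzero (x := x) ?_
    (fun x => sq_nonneg _) (pow_ne_zero 2 hx)
  refine hc.mono' fun y hy => subset_tsupport _ fun h => hy ?_
  simp [h]

lemma integral_Vpot1_eq {q : ℝ → ℝ} {ω : ℤ → ℝ} (hV : Vpot1 q ω =ᵐ[volume] Vline q ω)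
    (ψ : ℝ → ℝ) : ∫ x, (deriv ψ x ^ 2 + Vpot1 q ω x * ψ x ^ 2)
      = ∫ x, (deriv ψ x ^ 2 + Vline q ω x * ψ x ^ 2) :=
  integral_congr_ae (by filter_upwards [hV] with x hx; rw [hx])

lemma le_energy {q : ℝ → ℝ} {ω : ℤ → ℝ} (hV : Vpot1 q ω =ᵐ[volume] Vline q ω) {κ : ℝ}
    (h : ∀ f : ℝ → ℝ, ContDiff ℝ 1 f → HasCompactSupport f →
      κ * ∫ x, f x ^ 2 ≤ ∫ x, (deriv f x ^ 2 + Vline q ω x * f x ^ 2)) : κ ≤ Energy1 q ω := by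
  refine le_csInf (energy_set_nonempty q ω) ?_
  rintro _ ⟨ψ, hψ, hc, h0, rfl⟩
  rw [integral_Vpot1_eq hV, le_div_iff₀ (integral_sq_pos hψ.continuous hc h0)]
  exact h ψ (hψ.of_le (by exact_mod_cast le_top)) hc

open Filter Topology in
/-- The energy bounds the form from below on all compactly supported `C¹` functions. -/
lemma energy_mul_le {q : ℝ → ℝ} (hqm : Measurable q) {M : ℝ} (hqb : ∀ x, |q x| ≤ M) {ω : ℤ → ℝ}
    (hV : Vpot1 q ω =ᵐ[volume] Vline q ω) {f : ℝ → ℝ} (hf : ContDiff ℝ 1 f)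
    (hc : HasCompactSupport f) (h0 : f ≠ 0) :
    Energy1 q ω * ∫ x, f x ^ 2 ≤ ∫ x, (deriv f x ^ 2 + Vline q ω x * f x ^ 2) := by
  have hVm := measurable_Vline hqm ω
  have hVb : ∀ x, |Vline q ω x| ≤ M := fun x => hqb _
  have hbdd : BddBelow {e | ∃ ψ : ℝ → ℝ, ContDiff ℝ (⊤ : ℕ∞) ψ ∧ HasCompactSupport ψ ∧ ψ ≠ 0 ∧
      e = (∫ x, (deriv ψ x ^ 2 + Vpot1 q ω x * ψ x ^ 2)) / ∫ x, ψ x ^ 2} := by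
    refine ⟨-M, ?_⟩
    rintro _ ⟨ψ, hψ, hψc, hψ0, rfl⟩
    rw [integral_Vpot1_eq hV, le_div_iff₀ (integral_sq_pos hψ.continuous hψc hψ0),
      ← integral_const_mul]
    have hd : Continuous (deriv ψ) := hψ.continuous_deriv (by exact_mod_cast le_top)
    refine integral_mono ((integrable_sq_of_hasCompactSupport hψ.continuous hψc).const_mul _)
      ((integrable_sq_of_hasCompactSupport hd hψc.deriv).add
        (integrable_mul_sq hVm hVb hψ.continuous hψc)) fun x => ?_
    have := (abs_le.1 (hVb x)).1
    simp only
    nlinarith [sq_nonneg (ψ x), sq_nonneg (deriv ψ x)]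
  obtain ⟨N, ψ, hψs, hfN, hψN, hψ1, hψ2⟩ := exists_smooth_approx hf hc
  obtain ⟨B₁, hB₁⟩ := hc.exists_bound_of_continuous hf.continuous
  obtain ⟨B₂, hB₂⟩ := hc.deriv.exists_bound_of_continuous (hf.continuous_deriv le_rfl)
  have hψc : ∀ n, Continuous (ψ n) := fun n => (hψs n).continuous
  have hψd : ∀ n, Continuous (deriv (ψ n)) := fun n =>
    (hψs n).continuous_deriv (by exact_mod_cast le_top)
  have t1 := tendsto_form (μ := volume.restrict (Icc (-N) N)) hVm hVb
    (B := max B₁ B₂) (fun x => (hB₁ x).trans (le_max_left _ _))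
    (fun x => (hB₂ x).trans (le_max_right _ _)) (fun n => (hψc n).measurable)
    (fun n => (hψd n).measurable) hψ1 hψ2
  have t2 := tendsto_form (μ := volume.restrict (Icc (-N) N))
    (V := fun _ => 1) measurable_const (M := 1) (by simp) (k := fun _ => 0) (κ := fun _ _ => 0)
    (B := max B₁ 0) (fun x => (hB₁ x).trans (le_max_left _ _))
    (by simp) (fun n => (hψc n).measurable) (by fun_prop) hψ1
    (fun n x => by simp; positivity)
  simp only [ne_eq, OfNat.ofNat_ne_zero, not_false_eq_true, zero_pow, zero_add, one_mul] at t2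
  have hout : ∀ x, x ∉ Icc (-N) N → N < |x| := fun x hx => by
    by_contra h
    exact hx (abs_le.1 (not_lt.1 h))
  -- beyond `N` both the function and its derivative vanish
  have hderiv0 : ∀ g : ℝ → ℝ, (∀ x, N < |x| → g x = 0) → ∀ x, N < |x| → deriv g x = 0 := by
    intro g hg x hx
    have : g =ᶠ[𝓝 x] fun _ => 0 := by
      filter_upwards [(isOpen_lt continuous_const continuous_abs).mem_nhds hx] with y hy
        using hg y hy
    rw [this.deriv_eq, deriv_const]
  have e1 : ∀ g : ℝ → ℝ, (∀ x, N < |x| → g x = 0) →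
      ∫ x in Icc (-N) N, (deriv g x ^ 2 + Vline q ω x * g x ^ 2)
        = ∫ x, (deriv g x ^ 2 + Vline q ω x * g x ^ 2) := fun g hg =>
    setIntegral_eq_integral_of_forall_compl_eq_zero fun x hx => by
      simp [hg x (hout x hx), hderiv0 g hg x (hout x hx)]
  have e2 : ∀ g : ℝ → ℝ, (∀ x, N < |x| → g x = 0) →
      ∫ x in Icc (-N) N, g x ^ 2 = ∫ x, g x ^ 2 := fun g hg =>
    setIntegral_eq_integral_of_forall_compl_eq_zero fun x hx => by simp [hg x (hout x hx)]
  rw [e1 f hfN] at t1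
  rw [e2 f hfN] at t2
  simp only [e1 _ (hψN _)] at t1
  simp only [e2 _ (hψN _)] at t2
  refine le_of_tendsto_of_tendsto (t2.const_mul _) t1 ?_
  filter_upwards [t2.eventually (lt_mem_nhds (integral_sq_pos hf.continuous hc h0))] with n hn
  rw [← le_div_iff₀ hn]
  refine csInf_le hbdd ⟨ψ n, hψs n, ?_, ?_, by rw [integral_Vpot1_eq hV]⟩
  · refine HasCompactSupport.intro (isCompact_Icc (a := -N) (b := N)) fun x hx => hψN n x (hout x hx)
  · intro h
    simp [h] at hn

/-! ### Lower bounds for the energy -/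

/-- The consequences of alternative (i) on which the argument rests: `e` is the ground-state energy
of the cell with displacement `±d`, `u` its ground state for displacement `d`, normalized to be `1`
at the left end of the cell. -/
structure Setup (r d M e : ℝ) (q u : ℝ → ℝ) : Prop where
  d_pos : 0 < d
  hd : d = 1 / 2 - r
  meas : Measurable q
  bdd : ∀ x, |q x| ≤ M
  supp : ∀ x : ℝ, r < |x| → q x = 0
  symm : ∀ x, q (-x) = q x
  gs : IsGS (fun x => q (x - d) - e) u
  ratio_ne : u (1 / 2) ≠ 1
  lower : ∀ a, |a| ≤ d → ∀ f k, CellC1 f k → 0 ≤ cellForm (fun x => q (x - a) - e) f k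
  strict : ∀ a, |a| < d → ∃ c, 0 < c ∧ ∀ f k, CellC1 f k →
    c * ∫ x in (-(1 / 2) : ℝ)..(1 / 2), f x ^ 2 ≤ cellForm (fun x => q (x - a) - e) f k

lemma exists_setup {r d M : ℝ} {q : ℝ → ℝ} (hr0 : 0 < r) (hr : r < 1 / 2) (hd : d = 1 / 2 - r)
    (hqm : Measurable q) (hqb : ∀ x, |q x| ≤ M) (hq0 : ∀ x : ℝ, r < |x| → q x = 0)
    (hqs : ∀ x, q (-x) = q x) (halt : AltI1 q d) : ∃ e u, Setup r d M e q u := by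
  obtain ⟨h1, h2, h3⟩ := halt
  have hd0 : 0 < d := by linarith
  have hWm : ∀ a, Measurable fun x => q (x - a) := fun a => hqm.comp (measurable_sub_const a)
  have hgen : ∀ a f k, CellC1 f k → (E0fun1 q a - E0fun1 q d) *
      ∫ x in (-(1 / 2) : ℝ)..(1 / 2), f x ^ 2
        ≤ cellForm (fun x => q (x - a) - E0fun1 q d) f k := by
    intro a f k h
    rw [cellForm_sub_const (hWm a) (fun x => hqb _) h, sub_mul]
    exact sub_le_sub_right (neumann_le (hWm a) (fun x => hqb _) h) _
  have hge : ∀ a, |a| ≤ d → E0fun1 q d ≤ E0fun1 q a := by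
    intro a ha
    rcases ha.lt_or_eq with h | h
    · exact (h3 a h).le
    · rcases (abs_eq hd0.le).1 h with rfl | rfl
      · exact le_rfl
      · exact h2.le
  have hlow : ∀ a, |a| ≤ d → ∀ f k, CellC1 f k →
      0 ≤ cellForm (fun x => q (x - a) - E0fun1 q d) f k := fun a ha f k h =>
    (mul_nonneg (sub_nonneg.2 (hge a ha)) (integral_sq_nonneg f)).trans (hgen a f k h)
  have hdd : |d| ≤ d := (abs_of_pos hd0).le
  obtain ⟨u, hu⟩ := exists_isGS (W := fun x => q (x - d) - E0fun1 q d) ((hWm d).sub_const _)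
    (M := M + |E0fun1 q d|) (fun x => (abs_sub _ _).trans (by gcongr; exact hqb _))
    (hlow d hdd) (by
      intro ε hε
      obtain ⟨f, k, hf, hlt⟩ := exists_approx_min (V := fun x => q (x - d)) hε
      refine ⟨f, k, hf, ?_⟩
      rw [cellForm_sub_const (hWm d) (fun x => hqb _) hf]
      have : NeumannGS1 (fun x => q (x - d)) (-(1 / 2)) (1 / 2) = E0fun1 q d := rfl
      rw [this] at hlt
      linarith)
  exact ⟨E0fun1 q d, u, hd0, hd, hqm, hqb, hq0, hqs, hu,
    ground_ratio_ne_one hr0 hr hd hqm hqb hq0 hu (h1 d hdd hd0.ne'), hlow,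
    fun a ha => ⟨_, sub_pos.2 (h3 a ha), hgen a⟩⟩

/-- Ratio of the two boundary values that a function must have to be almost optimal in a cell with
displacement `a`; interior displacements force both boundary values to be small, encoded by `0`. -/
def ratio (d ρ a : ℝ) : ℝ := if a = d then ρ else if a = -d then 1 / ρ else 0

lemma Setup.gs_neg {r d M e : ℝ} {q u : ℝ → ℝ} (S : Setup r d M e q u) :
    IsGS (fun x => q (x - -d) - e) (fun x => u (-x) / u (1 / 2)) := by
  have h := S.gs.reflect
  have : (fun x => q (x - -d) - e) = fun x => q (-x - d) - e := by
    funext x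
    rw [← S.symm]
    ring_nf
  rw [this]
  exact h

lemma Setup.ratio_pos {r d M e : ℝ} {q u : ℝ → ℝ} (S : Setup r d M e q u) {a : ℝ}
    (ha : a = d ∨ a = -d) : 0 < ratio d (u (1 / 2)) a := by
  have := S.gs.pos (1 / 2)
  unfold ratio
  rcases ha with h | h
  · rwa [if_pos h]
  · split_ifs
    · assumption
    · positivity

lemma Setup.ratio_nonneg {r d M e : ℝ} {q u : ℝ → ℝ} (S : Setup r d M e q u) (a : ℝ) :
    0 ≤ ratio d (u (1 / 2)) a := by
  have := S.gs.pos (1 / 2)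
  unfold ratio
  split_ifs <;> positivity

lemma Setup.exists_gs {r d M e : ℝ} {q u : ℝ → ℝ} (S : Setup r d M e q u) {a : ℝ}
    (ha : a = d ∨ a = -d) :
    ∃ v, IsGS (fun x => q (x - a) - e) v ∧ v (1 / 2) = ratio d (u (1 / 2)) a := by
  have hd := S.d_pos
  by_cases h : a = d
  · subst h
    exact ⟨u, S.gs, by simp [ratio]⟩
  · have h' := ha.resolve_left h
    subst h'
    refine ⟨_, S.gs_neg, ?_⟩
    rw [ratio, if_neg h, if_pos rfl, S.gs.left _ le_rfl]

lemma Setup.cellEst {r d M e : ℝ} {q u : ℝ → ℝ} (S : Setup r d M e q u) {a : ℝ} (ha : |a| ≤ d) :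
    ∃ C, 0 ≤ C ∧ CellEst (fun x => q (x - a) - e) (ratio d (u (1 / 2)) a) C := by
  by_cases h : a = d ∨ a = -d
  · obtain ⟨v, hv, hv2⟩ := S.exists_gs h
    rw [← hv2]
    exact hv.cellEst
  · have hlt : |a| < d := lt_of_le_of_ne ha fun h' => h ((abs_eq S.d_pos.le).1 h')
    obtain ⟨c, hc, hco⟩ := S.strict a hlt
    push Not at h
    rw [ratio, if_neg h.1, if_neg h.2]
    exact cellEst_of_coercive ((S.meas.comp (measurable_sub_const a)).sub_const e)
      (M := M + |e|) (fun x => (abs_sub _ _).trans (by gcongr; exact S.bdd _)) hc hco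

lemma CellEst.mono {W : ℝ → ℝ} {ρ C C' : ℝ} (h : CellEst W ρ C) (hC : C ≤ C')
    (hW : ∀ f k, CellC1 f k → 0 ≤ cellForm W f k) : CellEst W ρ C' := by
  intro f k hf
  have := hW f k hf
  obtain ⟨h1, h2⟩ := h f k hf
  exact ⟨h1.trans (by gcongr), h2.trans (by gcongr)⟩

/-- A periodic function takes each of its values in the window `0, …, L - 1`. -/
lemma exists_window_eq {L : ℕ} (hL : 1 ≤ L) {g : ℤ → ℝ} (hper : ∀ i : ℤ, g (i + L) = g i)
    (i : ℤ) : ∃ k ∈ Finset.range L, g (k : ℕ) = g i := by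
  have hL' : (0 : ℤ) < L := by exact_mod_cast hL
  have hp : Function.Periodic g (L : ℤ) := hper
  have h := hp.sub_int_mul_eq (x := i) (i / L)
  rw [Int.cast_id, mul_comm, ← Int.emod_def] at h
  obtain ⟨n, hn⟩ := Int.eq_ofNat_of_zero_le (Int.emod_nonneg i hL'.ne')
  have hlt := Int.emod_lt_of_pos i hL'
  rw [hn] at h hlt
  exact ⟨n, Finset.mem_range.2 (by exact_mod_cast hlt), h⟩

lemma exists_bound_of_periodic {L : ℕ} (hL : 1 ≤ L) {g : ℤ → ℝ} (hg : ∀ i, 0 ≤ g i)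
    (hper : ∀ i : ℤ, g (i + L) = g i) : ∃ B, ∀ i, g i ≤ B := by
  refine ⟨∑ k ∈ Finset.range L, g k, fun i => ?_⟩
  obtain ⟨k, hk, h⟩ := exists_window_eq hL hper i
  rw [← h]
  exact Finset.single_le_sum (f := fun k : ℕ => g k) (fun k _ => hg k) hk

lemma Setup.ae_eq {r d M e : ℝ} {q u : ℝ → ℝ} (S : Setup r d M e q u) {ω : ℤ → ℝ}
    (hω : ∀ i, |ω i| ≤ d) : Vpot1 q ω =ᵐ[volume] Vline q ω := Vpot1_ae_eq S.hd S.supp hω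

lemma cellC1_shift {f : ℝ → ℝ} (hf : ContDiff ℝ 1 f) (c : ℝ) :
    CellC1 (fun x => f (x + c)) (fun x => deriv f (x + c)) :=
  ⟨by have := hf.continuous; fun_prop, by have := hf.continuous_deriv le_rfl; fun_prop,
    fun x _ => ((hf.differentiable one_ne_zero (x + c)).hasDerivAt).comp_add_const x c⟩

lemma Setup.le_energy {r d M e : ℝ} {q u : ℝ → ℝ} (S : Setup r d M e q u) {ω : ℤ → ℝ}
    (hω : ∀ i, |ω i| ≤ d) : e ≤ Energy1 q ω := by
  refine _root_.le_energy (S.ae_eq hω) fun f hf hc => ?_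
  have h := hasSum_cellForm S.meas S.bdd ω e hf hc
  have := h.nonneg fun i => S.lower _ (hω i) _ _ (cellC1_shift hf i)
  linarith

lemma summable_boundary_sq {f : ℝ → ℝ} (hc : HasCompactSupport f) (c : ℝ) :
    Summable fun i : ℤ => f (i + c) ^ 2 := by
  obtain ⟨N, hN⟩ := hc.isCompact.isBounded.subset_closedBall (0 : ℝ)
  refine summable_of_hasFiniteSupport ((Set.finite_Icc (⌊-N - c⌋) ⌈N - c⌉).subset fun i hi => ?_)
  have h1 : f (i + c) ≠ 0 := fun h => hi (by simp [h])
  have h2 := hN (subset_tsupport _ h1)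
  rw [mem_closedBall_zero_iff, Real.norm_eq_abs, abs_le] at h2
  constructor
  · have : ((⌊-N - c⌋ : ℤ) : ℝ) ≤ i := (Int.floor_le _).trans (by linarith)
    exact_mod_cast this
  · have : (i : ℝ) ≤ (⌈N - c⌉ : ℤ) := le_trans (by linarith) (Int.le_ceil _)
    exact_mod_cast this

/-- If the ratios over one period do not multiply to `1`, the energy exceeds `e`: the boundary
values `x_i = f (i - 1/2)` satisfy the recursion `x_{i+1} = ratio · x_i` up to errors controlled by
the form, so they, and hence `f` itself, are controlled by the form in `ℓ²`. -/
lemma Setup.lt_energy {r d M e : ℝ} {q u : ℝ → ℝ} (S : Setup r d M e q u) {ω : ℤ → ℝ}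
    (hω : ∀ i, |ω i| ≤ d) {L : ℕ} (hL : 1 ≤ L) (hper : ∀ i : ℤ, ω (i + L) = ω i)
    (hP : ∏ k ∈ Finset.range L, ratio d (u (1 / 2)) (ω k) ≠ 1) : e < Energy1 q ω := by
  have hex : ∀ a : ℝ, ∃ C, 0 ≤ C ∧ (|a| ≤ d →
      CellEst (fun x => q (x - a) - e) (ratio d (u (1 / 2)) a) C) := by
    intro a
    by_cases ha : |a| ≤ d
    · obtain ⟨C, h0, hC⟩ := S.cellEst ha
      exact ⟨C, h0, fun _ => hC⟩
    · exact ⟨0, le_rfl, fun h => absurd h ha⟩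
  choose c hc0 hc using hex
  obtain ⟨C, hC⟩ := exists_bound_of_periodic hL (fun i => hc0 (ω i)) (fun i => by rw [hper])
  have hC0 : 0 ≤ C := (hc0 _).trans (hC 0)
  have hest : ∀ i, CellEst (fun x => q (x - ω i) - e) (ratio d (u (1 / 2)) (ω i)) C := fun i =>
    (hc _ (hω i)).mono (hC i) (S.lower _ (hω i))
  obtain ⟨R, hR⟩ := exists_bound_of_periodic hL
    (fun i => abs_nonneg (ratio d (u (1 / 2)) (ω i))) (fun i => by rw [hper])
  obtain ⟨K, hK0, hK⟩ := exists_tsum_sq_le hR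
    (fun i => prod_window_eq (ρ := fun i => ratio d (u (1 / 2)) (ω i)) (fun i => by rw [hper]) i)
    (Finset.prod_nonneg fun i _ => S.ratio_nonneg _) hP
  have hD : 0 < C * (K * C + 1) + 1 := by positivity
  refine lt_of_lt_of_le (lt_add_of_pos_right e (one_div_pos.2 hD))
    (_root_.le_energy (S.ae_eq hω) fun f hf hcf => ?_)
  have hA := hasSum_cellForm S.meas S.bdd ω e hf hcf
  set T := (∫ x, (deriv f x ^ 2 + Vline q ω x * f x ^ 2)) - e * ∫ x, f x ^ 2 with hT
  have hA0 := fun i => S.lower _ (hω i) _ _ (cellC1_shift hf i)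
  have hT0 : 0 ≤ T := hA.nonneg hA0
  have hx := summable_boundary_sq hcf (-(1 / 2))
  have h1 := hK (fun i => f (i + -(1 / 2))) hx
  have hδ : ∀ i : ℤ, (f (((i + 1 : ℤ) : ℝ) + -(1 / 2)) -
      ratio d (u (1 / 2)) (ω i) * f (i + -(1 / 2))) ^ 2
        ≤ C * cellForm (fun x => q (x - ω i) - e) (fun x => f (x + i))
          (fun x => deriv f (x + i)) := by
    intro i
    have := (hest i _ _ (cellC1_shift hf i)).1
    have e1 : (((i + 1 : ℤ) : ℝ) + -(1 / 2)) = 1 / 2 + i := by push_cast; ring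
    rw [e1, add_comm (i : ℝ)]
    exact this
  have hCA := hA.mul_left C
  have hδs := Summable.of_nonneg_of_le (fun i => sq_nonneg _) hδ hCA.summable
  have h2 := hasSum_le hδ hδs.hasSum hCA
  have h3 : ∑' i : ℤ, f (i + -(1 / 2)) ^ 2 ≤ K * (C * T) := h1.trans (by gcongr)
  have h4 := hasSum_cells (integrable_sq_of_hasCompactSupport hf.continuous hcf)
  have h5 := hasSum_le (fun i : ℤ => (hest i _ _ (cellC1_shift hf i)).2) h4
    ((HasSum.add (by simpa only [add_comm] using hx.hasSum) hA).mul_left C)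
  have h6 : ∫ x, f x ^ 2 ≤ (C * (K * C + 1) + 1) * T := by
    refine h5.trans ?_
    calc C * (∑' i : ℤ, f (i + -(1 / 2)) ^ 2 + T) ≤ C * (K * (C * T) + T) := by gcongr
      _ ≤ (C * (K * C + 1) + 1) * T := by nlinarith
  have h7 : 1 / (C * (K * C + 1) + 1) * ∫ x, f x ^ 2 ≤ T := by
    rw [one_div_mul_eq_div, div_le_iff₀ hD, mul_comm]
    exact h6
  rw [add_mul]
  linarith

/-! ### Trial functions from glued ground states -/

open Topology in
lemma cellForm_shift_eq {W f F k : ℝ → ℝ} {c : ℝ} (hF : CellC1 F k)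
    (h : ∀ y ∈ Icc (-(1 / 2) : ℝ) (1 / 2), f (y + c) = F y) :
    cellForm W (fun x => f (x + c)) (fun x => deriv f (x + c)) = cellForm W F k := by
  refine intervalIntegral.integral_congr_Ioo_of_le (by norm_num) fun y hy => ?_
  have h1 : (fun x => f (x + c)) =ᶠ[𝓝 y] F := by
    filter_upwards [isOpen_Ioo.mem_nhds hy] with z hz using h z (Ioo_subset_Icc_self hz)
  have h2 := h1.deriv_eq
  rw [deriv_comp_add_const, (hF.hasDeriv y hy).deriv] at h2
  simp only [h y (Ioo_subset_Icc_self hy), h2]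

lemma exists_bound_of_periodic_nat {L : ℕ} (hL : 1 ≤ L) {g : ℕ → ℝ} (hg : ∀ i, 0 ≤ g i)
    (hper : ∀ i, g (i + L) = g i) : ∃ B, ∀ i, g i ≤ B := by
  refine ⟨∑ k ∈ Finset.range L, g k, fun i => ?_⟩
  have hp : Function.Periodic g L := hper
  rw [← hp.map_mod_nat i]
  exact Finset.single_le_sum (fun k _ => hg k) (Finset.mem_range.2 (Nat.mod_lt _ hL))

/-- Ground states of consecutive cells, being constant outside their cells, glue by
multiplication. -/
lemma prod_gs_eq {W v : ℤ → ℝ → ℝ} (hv : ∀ i, IsGS (W i) (v i)) {n j : ℕ} (hj : j < n) {y : ℝ}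
    (hy : y ∈ Icc (-(1 / 2) : ℝ) (1 / 2)) :
    ∏ i ∈ Finset.range n, v i (y + j - i) = (∏ i ∈ Finset.range j, v i (1 / 2)) * v j y := by
  have hsub : Finset.range (j + 1) ⊆ Finset.range n := Finset.range_subset_range.2 hj
  rw [← Finset.prod_subset hsub, Finset.prod_range_succ]
  · rw [add_sub_cancel_right]
    congr 1
    refine Finset.prod_congr rfl fun i hi => (hv i).right _ ?_
    have : (i : ℝ) + 1 ≤ j := by exact_mod_cast Finset.mem_range.1 hi
    linarith [hy.1]
  · intro i _ hi
    refine (hv i).left _ ?_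
    have : (j : ℝ) + 1 ≤ i := by
      have := Finset.mem_range.not.1 hi
      exact_mod_cast (not_lt.1 this)
    linarith [hy.2]

lemma exists_cutoff : ∃ θ : ℝ → ℝ, ContDiff ℝ 1 θ ∧ (∀ x ≤ 0, θ x = 0) ∧ (∀ x ≥ 1, θ x = 0) ∧
    θ ≠ 0 := by
  let φ : ContDiffBump (1 / 2 : ℝ) := ⟨1 / 4, 1 / 2, by norm_num, by norm_num⟩
  have hsupp : ∀ x, 1 / 2 ≤ |x - 1 / 2| → φ x = 0 := fun x hx =>
    φ.zero_of_le_dist (by rwa [Real.dist_eq])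
  refine ⟨φ, φ.contDiff, fun x hx => hsupp x ?_, fun x hx => hsupp x ?_, fun h => ?_⟩
  · rw [abs_of_nonpos (by linarith)]; linarith
  · rw [abs_of_nonneg (by linarith)]; linarith
  · have h1 : φ (1 / 2) = 1 := φ.one_of_mem_closedBall (by simp [φ])
    rw [h] at h1
    simp at h1

lemma hasCompactSupport_of_zero {f : ℝ → ℝ} {a b : ℝ} (h1 : ∀ x ≤ a, f x = 0)
    (h2 : ∀ x ≥ b, f x = 0) : HasCompactSupport f := by
  refine HasCompactSupport.intro (isCompact_Icc (a := a) (b := b)) fun x hx => ?_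
  rcases le_total x a with h | h
  · exact h1 x h
  rcases le_total b x with h' | h'
  · exact h2 x h'
  · exact absurd ⟨h, h'⟩ hx

lemma integral_comp_rescale (g : ℝ → ℝ) {n : ℝ} (hn : 0 < n) :
    ∫ x, g ((x + 1 / 2) / n) = n * ∫ x, g x := by
  rw [integral_add_right_eq_self (fun x => g (x / n)) (1 / 2), Measure.integral_comp_div,
    abs_of_pos hn, smul_eq_mul]

lemma excess_mul_le {E e X Y T D : ℝ} (hXY : X ≤ Y) (he : e ≤ E) (hT : E * Y ≤ T)
    (hD : T - e * Y ≤ D) : (E - e) * X ≤ D := by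
  nlinarith [mul_le_mul_of_nonneg_left hXY (sub_nonneg.2 he)]

/-- The energy estimate for the glued ground states cut off at scale `n`. -/
lemma Setup.trial_bound {r d M e : ℝ} {q u : ℝ → ℝ} (S : Setup r d M e q u) {ω : ℤ → ℝ}
    (hωd : ∀ i, |ω i| ≤ d) {v : ℤ → ℝ → ℝ} (hv : ∀ i, IsGS (fun x => q (x - ω i) - e) (v i))
    {c : ℕ → ℝ} (hc : ∀ j, c j = ∏ i ∈ Finset.range j, v i (1 / 2)) {b B : ℝ} (hb : 0 < b)
    (hup : ∀ (j : ℕ) (y : ℝ), (v j y * c j) ^ 2 ≤ B ^ 2)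
    (hlo : ∀ (j : ℕ) (y : ℝ), b ^ 2 ≤ (v j y * c j) ^ 2)
    {θ : ℝ → ℝ} (hθ : ContDiff ℝ 1 θ) (hθ0 : ∀ x ≤ 0, θ x = 0) (hθ1 : ∀ x ≥ 1, θ x = 0)
    (hI : 0 < ∫ x, θ x ^ 2) (hlt : e ≤ Energy1 q ω) {n : ℕ} (hn : 0 < n) :
    (Energy1 q ω - e) * (b ^ 2 * (n * ∫ x, θ x ^ 2))
      ≤ B ^ 2 * ((1 / n) * ∫ x, deriv θ x ^ 2) := by
  have hn' : (0 : ℝ) < n := by exact_mod_cast hn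
  set χ : ℝ → ℝ := fun x => θ ((x + 1 / 2) / n) with hχ
  have hχs : ContDiff ℝ 1 χ := hθ.comp ((contDiff_id.add contDiff_const).div_const _)
  have hχ0 : ∀ x ≤ -(1 / 2), χ x = 0 := fun x hx =>
    hθ0 _ (div_nonpos_of_nonpos_of_nonneg (by linarith) hn'.le)
  have hχ1 : ∀ x ≥ (n : ℝ) - 1 / 2, χ x = 0 := fun x hx =>
    hθ1 _ ((one_le_div hn').2 (by linarith))
  have hχd : ∀ x, deriv χ x = deriv θ ((x + 1 / 2) / n) / n := by
    intro x
    have h1 : HasDerivAt (fun x : ℝ => (x + 1 / 2) / n) (1 / n) x :=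
      ((hasDerivAt_id x).add_const _).div_const _
    have h2 := ((hθ.differentiable one_ne_zero ((x + 1 / 2) / n)).hasDerivAt).comp x h1
    have h3 : deriv χ x = _ := h2.deriv
    rw [h3]
    ring
  have hχc := hasCompactSupport_of_zero hχ0 hχ1
  have hχI : ∫ x, χ x ^ 2 = n * ∫ x, θ x ^ 2 := integral_comp_rescale (fun x => θ x ^ 2) hn'
  have hχJ : ∫ x, deriv χ x ^ 2 = (1 / n) * ∫ x, deriv θ x ^ 2 := by
    simp only [hχd]
    rw [integral_comp_rescale (fun x => (deriv θ x / n) ^ 2) hn']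
    simp only [div_pow]
    rw [integral_div]
    field_simp
  set U : ℝ → ℝ := fun x => ∏ i ∈ Finset.range n, v i (x - i) with hU
  have hUs : ContDiff ℝ 1 U := by
    refine contDiff_prod fun i _ => ?_
    exact (hv i).smooth.comp (contDiff_id.sub contDiff_const)
  have hUj : ∀ j < n, ∀ y ∈ Icc (-(1 / 2) : ℝ) (1 / 2), U (y + j) = c j * v j y := by
    intro j hj y hy
    rw [hc j]
    exact prod_gs_eq hv hj hy
  set f : ℝ → ℝ := fun x => χ x * U x with hf
  have hfs : ContDiff ℝ 1 f := hχs.mul hUs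
  have hfc : HasCompactSupport f := hχc.mul_right
  clear_value f U χ
  -- on the `j`-th cell, `0 ≤ j < n`, the trial function is a multiple of the ground state
  have hcell : ∀ j : ℤ, cellForm (fun x => q (x - ω j) - e) (fun x => f (x + j))
        (fun x => deriv f (x + j))
          ≤ B ^ 2 * ∫ x in (-(1 / 2) : ℝ)..(1 / 2), deriv χ (x + j) ^ 2 ∧
      b ^ 2 * ∫ x in (-(1 / 2) : ℝ)..(1 / 2), χ (x + j) ^ 2
        ≤ ∫ x in (-(1 / 2) : ℝ)..(1 / 2), f (x + j) ^ 2 := by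
    intro j
    by_cases hj : 0 ≤ j ∧ j < n
    · obtain ⟨j, rfl⟩ := Int.eq_ofNat_of_zero_le hj.1
      have hjn : j < n := by exact_mod_cast hj.2
      have hg := (cellC1_const (c j)).mul (cellC1_shift hχs j)
      have hgs := hv j
      have hfv : ∀ y ∈ Icc (-(1 / 2) : ℝ) (1 / 2),
          f (y + ((j : ℤ) : ℝ)) = v j y * (c j * χ (y + j)) := by
        intro y hy
        simp only [hf, Int.cast_natCast, hUj j hjn y hy]
        ring
      have hvc := hgs.smooth.continuous
      have hχdc := hχs.continuous_deriv le_rfl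
      have hχcc := hχs.continuous
      constructor
      · rw [cellForm_shift_eq ((cellC1_of_contDiff hgs.smooth).mul hg) hfv, hgs.form _ _ hg,
          ← intervalIntegral.integral_const_mul]
        refine intervalIntegral.integral_mono_on (by norm_num)
          (Continuous.intervalIntegrable (by fun_prop) _ _)
          (Continuous.intervalIntegrable (by fun_prop) _ _) fun y _ => ?_
        have := mul_le_mul_of_nonneg_right (hup j y) (sq_nonneg (deriv χ (y + j)))
        simp only [Int.cast_natCast]
        nlinarith
      · rw [← intervalIntegral.integral_const_mul]
        refine intervalIntegral.integral_mono_on (by norm_num)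
          (Continuous.intervalIntegrable (by fun_prop) _ _)
          (Continuous.intervalIntegrable (by have := hfs.continuous; fun_prop) _ _) fun y hy => ?_
        rw [hfv y hy]
        have := mul_le_mul_of_nonneg_right (hlo j y) (sq_nonneg (χ (y + j)))
        simp only [Int.cast_natCast]
        nlinarith
    · have hz : ∀ y ∈ Icc (-(1 / 2) : ℝ) (1 / 2), χ (y + j) = 0 := by
        intro y hy
        by_cases h0 : 0 ≤ j
        · have h1 : (n : ℝ) ≤ j := by exact_mod_cast not_lt.1 fun h => hj ⟨h0, h⟩
          exact hχ1 _ (by linarith [hy.1])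
        · have h1 : (j : ℝ) + 1 ≤ 0 := by exact_mod_cast not_le.1 h0
          exact hχ0 _ (by linarith [hy.2])
      constructor
      · rw [cellForm_shift_eq (cellC1_const 0) (fun y hy => by simp only [hf, hz y hy, zero_mul])]
        have h0 : cellForm (fun x => q (x - ω j) - e) (fun _ => 0) (fun _ => 0) = 0 := by
          simp [cellForm]
        rw [h0]
        exact mul_nonneg (sq_nonneg _) (integral_sq_nonneg _)
      · have h0 : ∫ x in (-(1 / 2) : ℝ)..(1 / 2), χ (x + j) ^ 2 = 0 := by
          rw [intervalIntegral.integral_congr (g := fun _ => (0 : ℝ))]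
          · simp
          · intro y hy
            rw [uIcc_of_le (by norm_num)] at hy
            simp [hz y hy]
        rw [h0, mul_zero]
        exact integral_sq_nonneg _
  have hdc := hχs.continuous_deriv le_rfl
  have h1 := hasSum_le (fun j => (hcell j).1) (hasSum_cellForm S.meas S.bdd ω e hfs hfc)
    ((hasSum_cells (integrable_sq_of_hasCompactSupport hdc hχc.deriv)).mul_left _)
  have s2 := (hasSum_cells (integrable_sq_of_hasCompactSupport hχs.continuous hχc)).mul_left (b ^ 2)
  have s3 := hasSum_cells (integrable_sq_of_hasCompactSupport hfs.continuous hfc)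
  have h2 : b ^ 2 * ∫ x, χ x ^ 2 ≤ ∫ x, f x ^ 2 := hasSum_le (fun j => (hcell j).2) s2 s3
  rw [hχJ] at h1
  rw [hχI] at h2
  have hf0 : f ≠ 0 := by
    intro h
    have h3 : 0 < b ^ 2 * (n * ∫ x, θ x ^ 2) := by positivity
    rw [h] at h2
    simp at h2
    linarith
  have h3 := energy_mul_le S.meas S.bdd (S.ae_eq hωd) hfs hfc hf0
  exact excess_mul_le h2 hlt h3 h1

/-- If all displacements are `±d` and the ratios over one period multiply to `1`, the ground states
of the cells glue to a bounded positive solution at energy `e`; cutting it off at scale `n` gives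
trial functions whose energy above `e` is `O(1/n²)`. -/
lemma Setup.energy_le {r d M e : ℝ} {q u : ℝ → ℝ} (S : Setup r d M e q u) {ω : ℤ → ℝ}
    (hω : ∀ i, ω i = d ∨ ω i = -d) {L : ℕ} (hL : 1 ≤ L) (hper : ∀ i : ℤ, ω (i + L) = ω i)
    (hP : ∏ k ∈ Finset.range L, ratio d (u (1 / 2)) (ω k) = 1) : Energy1 q ω ≤ e := by
  have hωd : ∀ i, |ω i| ≤ d := fun i => ((abs_eq S.d_pos.le).2 (hω i)).le
  have hex : ∀ a : ℝ, ∃ (v : ℝ → ℝ) (m B : ℝ), 0 < m ∧ 0 < B ∧ ((a = d ∨ a = -d) →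
      (IsGS (fun x => q (x - a) - e) v ∧ v (1 / 2) = ratio d (u (1 / 2)) a) ∧
        ∀ x, m ≤ v x ∧ v x ≤ B) := by
    intro a
    by_cases ha : a = d ∨ a = -d
    · obtain ⟨v, hv, hv'⟩ := S.exists_gs ha
      obtain ⟨m, B, hm, hB⟩ := hv.bounds
      exact ⟨v, m, B, hm, hm.trans_le ((hB 0).1.trans (hB 0).2), fun _ => ⟨⟨hv, hv'⟩, hB⟩⟩
    · exact ⟨0, 1, 1, one_pos, one_pos, fun h => absurd h ha⟩
  choose v m B hm hB hv using hex
  -- uniform two-sided bounds for the ground states and for the gluing constants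
  obtain ⟨B₁, hB₁⟩ := exists_bound_of_periodic hL (fun i => (hB (ω i)).le) (fun i => by rw [hper])
  obtain ⟨m₁, hm₁⟩ := exists_bound_of_periodic hL (fun i => (inv_pos.2 (hm (ω i))).le)
    (fun i => by rw [hper])
  set ρ : ℤ → ℝ := fun i => ratio d (u (1 / 2)) (ω i) with hρ
  have hρ0 : ∀ i, 0 < ρ i := fun i => S.ratio_pos (hω i)
  set c : ℕ → ℝ := fun j => ∏ i ∈ Finset.range j, ρ i with hc
  have hc0 : ∀ j, 0 < c j := fun j => Finset.prod_pos fun i _ => hρ0 i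
  have hcper : ∀ j, c (j + L) = c j := by
    intro j
    have h1 := prod_window_eq (ρ := ρ) (L := L) (fun i => by simp only [hρ, hper]) j
    rw [hP] at h1
    simp only [hc]
    rw [Finset.prod_range_add]
    push_cast
    rw [h1, mul_one]
  obtain ⟨B₂, hB₂⟩ := exists_bound_of_periodic_nat hL (fun j => (hc0 j).le) hcper
  obtain ⟨m₂, hm₂⟩ := exists_bound_of_periodic_nat hL (fun j => (inv_pos.2 (hc0 j)).le)
    (fun j => by rw [hcper])
  have hB₁0 : 0 < B₁ := (hB _).trans_le (hB₁ 0)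
  have hB₂0 : 0 < B₂ := (hc0 0).trans_le (hB₂ 0)
  have hm₁0 : 0 < m₁ := (inv_pos.2 (hm _)).trans_le (hm₁ 0)
  have hm₂0 : 0 < m₂ := (inv_pos.2 (hc0 0)).trans_le (hm₂ 0)
  have hup : ∀ (j : ℕ) (y : ℝ), (v (ω j) y * c j) ^ 2 ≤ (B₁ * B₂) ^ 2 := by
    intro j y
    have hp := (hv _ (hω j)).1.1.pos y
    have h1 := ((hv _ (hω j)).2 y).2.trans (hB₁ j)
    have := hc0 j
    have := hB₂ j
    gcongr
  have hlo : ∀ (j : ℕ) (y : ℝ), (m₁⁻¹ * m₂⁻¹) ^ 2 ≤ (v (ω j) y * c j) ^ 2 := by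
    intro j y
    have h1 : m₁⁻¹ ≤ v (ω j) y :=
      (inv_le_of_inv_le₀ (hm _) (hm₁ j)).trans ((hv _ (hω j)).2 y).1
    have h2 : m₂⁻¹ ≤ c j := inv_le_of_inv_le₀ (hc0 j) (hm₂ j)
    have h3 : 0 ≤ v (ω j) y := (inv_pos.2 hm₁0).le.trans h1
    gcongr
  obtain ⟨θ, hθ, hθ0, hθ1, hθne⟩ := exists_cutoff
  have hθc := hasCompactSupport_of_zero hθ0 hθ1
  have hI := integral_sq_pos hθ.continuous hθc hθne
  by_contra! hlt
  have key := fun (n : ℕ) (hn : 0 < n) => S.trial_bound hωd (v := fun i => v (ω i))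
    (fun i => (hv _ (hω i)).1.1) (c := c) (fun j => by simp only [hc, hρ, (hv _ (hω _)).1.2])
    (mul_pos (inv_pos.2 hm₁0) (inv_pos.2 hm₂0)) hup hlo hθ hθ0 hθ1 hI hlt.le hn
  set α := (Energy1 q ω - e) * ((m₁⁻¹ * m₂⁻¹) ^ 2 * ∫ x, θ x ^ 2) with hα
  have hα0 : 0 < α := mul_pos (sub_pos.2 hlt) (by positivity)
  obtain ⟨n, hn⟩ := exists_nat_gt (((B₁ * B₂) ^ 2 * ∫ x, deriv θ x ^ 2) / α)
  have hJ : 0 ≤ (B₁ * B₂) ^ 2 * ∫ x, deriv θ x ^ 2 :=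
    mul_nonneg (sq_nonneg _) (integral_nonneg fun x => sq_nonneg _)
  have hn0 : (0 : ℝ) < n := lt_of_le_of_lt (by positivity) hn
  have hn1 : (1 : ℝ) ≤ n := by
    have : 0 < n := by exact_mod_cast hn0
    exact_mod_cast this
  have hk := key n (by exact_mod_cast hn0)
  rw [div_lt_iff₀ hα0] at hn
  have h5 : (B₁ * B₂) ^ 2 * ((1 / n) * ∫ x, deriv θ x ^ 2)
      ≤ (B₁ * B₂) ^ 2 * ∫ x, deriv θ x ^ 2 := by
    have : (1 / n : ℝ) ≤ 1 := (div_le_one hn0).2 hn1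
    nlinarith
  have h6 : (n : ℝ) * α ≤ (B₁ * B₂) ^ 2 * ((1 / n) * ∫ x, deriv θ x ^ 2) := by
    refine le_trans (le_of_eq ?_) hk
    rw [hα]
    ring
  linarith

/-! ### Counting sites and the global infimum -/

/-- For displacements `±d` the product of the ratios over one period is a power of the ratio
`ρ ≠ 1`, with exponent the difference of the numbers of sites of either sign. -/
lemma prod_ratio_eq_one_iff {d ρ : ℝ} (hd : 0 < d) (hρ : 0 < ρ) (hρ1 : ρ ≠ 1) {ω : ℤ → ℝ}
    (hω : ∀ i, ω i = d ∨ ω i = -d) {L : ℕ} (hper : ∀ i : ℤ, ω (i + L) = ω i) :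
    ∏ k ∈ Finset.range L, ratio d ρ (ω k) = 1 ↔
      Set.ncard {i : ℤ | i ∈ Set.Icc 1 (L : ℤ) ∧ ω i = d} =
        Set.ncard {i : ℤ | i ∈ Set.Icc 1 (L : ℤ) ∧ ω i = -d} := by
  have hdd : -d ≠ d := by linarith
  have hset : ∀ a : ℝ, Set.ncard {i : ℤ | i ∈ Set.Icc 1 (L : ℤ) ∧ ω i = a}
      = ((Finset.Icc 1 (L : ℤ)).filter fun i => ω i = a).card := by
    intro a
    rw [← Set.ncard_coe_finset]
    congr 1
    ext i
    simp
  have hprod : ∏ k ∈ Finset.range L, ratio d ρ (ω k)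
      = ∏ i ∈ Finset.Icc 1 (L : ℤ), ratio d ρ (ω i) := by
    rw [← prod_window_eq (ρ := fun i => ratio d ρ (ω i)) (fun i => by rw [hper]) 1]
    refine Finset.prod_bij (fun k _ => 1 + (k : ℤ)) ?_ ?_ ?_ ?_
    · intro k hk
      simp only [Finset.mem_range, Finset.mem_Icc] at hk ⊢
      omega
    · intro a _ b _ h
      omega
    · intro i hi
      simp only [Finset.mem_Icc] at hi
      exact ⟨(i - 1).toNat, by simp only [Finset.mem_range]; omega, by omega⟩
    · intro k _
      rfl
  have hfilter : (Finset.Icc 1 (L : ℤ)).filter (fun i => ¬ ω i = d)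
      = (Finset.Icc 1 (L : ℤ)).filter fun i => ω i = -d := by
    refine Finset.filter_congr fun i _ => ⟨fun h => (hω i).resolve_left h, fun h => ?_⟩
    rw [h]
    exact hdd
  rw [hset, hset, hprod, ← Finset.prod_filter_mul_prod_filter_not _ (fun i => ω i = d), hfilter]
  have e1 : ∏ i ∈ (Finset.Icc 1 (L : ℤ)).filter (fun i => ω i = d), ratio d ρ (ω i)
      = ρ ^ ((Finset.Icc 1 (L : ℤ)).filter fun i => ω i = d).card := by
    refine Finset.prod_eq_pow_card fun i hi => ?_
    rw [(Finset.mem_filter.1 hi).2, ratio, if_pos rfl]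
  have e2 : ∏ i ∈ (Finset.Icc 1 (L : ℤ)).filter (fun i => ω i = -d), ratio d ρ (ω i)
      = (1 / ρ) ^ ((Finset.Icc 1 (L : ℤ)).filter fun i => ω i = -d).card := by
    refine Finset.prod_eq_pow_card fun i hi => ?_
    rw [(Finset.mem_filter.1 hi).2, ratio, if_neg hdd, if_pos rfl]
  rw [e1, e2, one_div, inv_pow, mul_inv_eq_one₀ (by positivity)]
  exact (pow_right_injective₀ hρ hρ1).eq_iff

lemma Setup.energy_eq_iff {r d M e : ℝ} {q u : ℝ → ℝ} (S : Setup r d M e q u) {ω : ℤ → ℝ}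
    (hω : ∀ i, |ω i| ≤ d) {L : ℕ} (hL : 1 ≤ L) (hper : ∀ i : ℤ, ω (i + L) = ω i) :
    Energy1 q ω = e ↔ ((∀ i, ω i = d ∨ ω i = -d) ∧
        Set.ncard {i : ℤ | i ∈ Set.Icc 1 (L : ℤ) ∧ ω i = d} =
          Set.ncard {i : ℤ | i ∈ Set.Icc 1 (L : ℤ) ∧ ω i = -d}) := by
  constructor
  · intro h
    have hP : ∏ k ∈ Finset.range L, ratio d (u (1 / 2)) (ω k) = 1 := by
      by_contra hP
      exact (S.lt_energy hω hL hper hP).ne' h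
    have hpm : ∀ i, ω i = d ∨ ω i = -d := by
      intro i
      by_contra hi
      push Not at hi
      -- an interior displacement contributes a factor `0`
      obtain ⟨k, hk, hki⟩ := exists_window_eq hL hper i
      have h0 : ratio d (u (1 / 2)) (ω k) = 0 := by
        rw [hki, ratio, if_neg hi.1, if_neg hi.2]
      rw [Finset.prod_eq_zero hk h0] at hP
      exact zero_ne_one hP
    exact ⟨hpm, (prod_ratio_eq_one_iff S.d_pos (S.gs.pos _) S.ratio_ne hpm hper).1 hP⟩
  · rintro ⟨hpm, hcard⟩
    exact le_antisymm (S.energy_le hpm hL hper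
      ((prod_ratio_eq_one_iff S.d_pos (S.gs.pos _) S.ratio_ne hpm hper).2 hcard)) (S.le_energy hω)

/-- The alternating configuration attains the global infimum `e`. -/
lemma Setup.groundEnergy {r d M e : ℝ} {q u : ℝ → ℝ} (S : Setup r d M e q u) :
    GroundEnergy1 q d = e := by
  let ω : ℤ → ℝ := fun i => if Even i then d else -d
  have hd := S.d_pos
  have hpm : ∀ i, ω i = d ∨ ω i = -d := fun i => by
    by_cases h : Even i <;> simp [ω, h]
  have hω : ∀ i, |ω i| ≤ d := fun i => ((abs_eq hd.le).2 (hpm i)).le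
  have hE : Energy1 q ω = e := by
    refine le_antisymm (S.energy_le hpm (L := 2) (by norm_num) (fun i => ?_) ?_) (S.le_energy hω)
    · simp [ω]
    · have hu := (S.gs.pos (1 / 2)).ne'
      have hne : -d ≠ d := by linarith
      rw [Finset.prod_range_succ _ 1, Finset.prod_range_one]
      have e0 : ω ((0 : ℕ) : ℤ) = d := by simp [ω]
      have e1 : ω ((1 : ℕ) : ℤ) = -d := by simp [ω]
      rw [e0, e1, ratio, ratio, if_pos rfl, if_neg hne, if_pos rfl, mul_one_div_cancel hu]
  refine le_antisymm (csInf_le ⟨e, ?_⟩ ⟨ω, hω, hE.symm⟩) (le_csInf ⟨_, ω, hω, rfl⟩ ?_)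
  · rintro _ ⟨ξ, hξ, rfl⟩
    exact S.le_energy hξ
  · rintro _ ⟨ξ, hξ, rfl⟩
    exact S.le_energy hξ

/-- For `d = 1` under alternative (i), an `L`-periodic
configuration `ω` satisfies `E(ω) = E₀` if and only if every `ω_i ∈ {± dmax}`
and in each period there are equally many sites with `ω_i = dmax` and with
`ω_i = -dmax`. -/
theorem statement4 (r dmax : ℝ) (hr0 : 0 < r) (hr : r < 1 / 2)
    (hdmax : dmax = 1 / 2 - r) (q : ℝ → ℝ)
    (hq_meas : Measurable q) (hq_bdd : ∃ M, ∀ x, |q x| ≤ M)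
    (hq_supp : ∀ x : ℝ, r < |x| → q x = 0)
    (hq_symm : ∀ x : ℝ, q (-x) = q x)
    (halt : AltI1 q dmax)
    (L : ℕ) (hL : 1 ≤ L) (ω : ℤ → ℝ) (hω : ∀ i, |ω i| ≤ dmax)
    (hper : ∀ i : ℤ, ω (i + L) = ω i) :
    Energy1 q ω = GroundEnergy1 q dmax ↔
      ((∀ i, ω i = dmax ∨ ω i = -dmax) ∧
        Set.ncard {i : ℤ | i ∈ Set.Icc 1 (L : ℤ) ∧ ω i = dmax} =
          Set.ncard {i : ℤ | i ∈ Set.Icc 1 (L : ℤ) ∧ ω i = -dmax}) := by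
  obtain ⟨M, hM⟩ := hq_bdd
  obtain ⟨e, u, S⟩ := exists_setup hr0 hr hdmax hq_meas hM hq_supp hq_symm halt
  rw [S.groundEnergy]
  exact S.energy_eq_iff hω hL hper
end
end

section
/- Let d = 1 and assume alternative (i) holds. Suppose ψ : [−1/2,1/2] → ℝ is positive, of class C¹ with absolutely continuous derivative, satisfies −ψ''(x) + q(x − d_max)ψ(x) = E₀(d_max) ψ(x) for almost every x ∈ (−1/2,1/2), and satisfies the Neumann boundary conditions ψ'(−1/2) = ψ'(1/2) = 0. Then ψ(1/2) ≠ ψ(−1/2). -/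
/-!
Suppose `ψ (1/2) = ψ (-1/2)`. Since `ψ'` vanishes at both endpoints, the one-periodic extension of
`ψ` is of class `C¹`, and so is its translate by `dmax`. On the unit cell the translated potential
is `q` itself: the part of the cell wrapped around by the translation carries no potential, because
`q` lives on `[-r, r]` and `dmax + r = 1/2`. The translate is therefore a trial function for the
problem with `a = 0`, and periodicity shows that its Rayleigh quotient is the one of `ψ`, namely
`E₀(dmax)`. Hence `E₀(0) ≤ E₀(dmax)`, against the strict inequality `E₀(dmax) < E₀(0)`.

The trial function is only `C¹`, whereas `NeumannGS1` is an infimum over smooth functions;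
`neumannGS1_form_nonneg` extends the variational inequality to `C¹` functions by uniform polynomial
approximation of the derivative. `neumann_integration_by_parts` gives the Rayleigh quotient of `ψ`,
and `integral_cellShift` is the invariance of the integral over a period.
-/

open MeasureTheory Set

noncomputable section

/-! ### The variational inequality for `C¹` functions -/

/-- Both integrals in the Rayleigh quotient of a smooth function converge, and the numerator is
bounded below by `-M` times the denominator. -/
lemma form_lower_bound {a b M : ℝ} {V φ : ℝ → ℝ}
    (hV : Measurable V) (hM : ∀ x, |V x| ≤ M)
    (hφ : ∃ U, IsOpen U ∧ Set.Icc a b ⊆ U ∧ ContDiffOn ℝ (⊤ : ℕ∞) φ U) :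
    IntegrableOn (fun x => φ x ^ 2) (Ioo a b) ∧
    IntegrableOn (fun x => deriv φ x ^ 2 + V x * φ x ^ 2) (Ioo a b) ∧
    -M * (∫ x in Ioo a b, φ x ^ 2) ≤ ∫ x in Ioo a b, (deriv φ x ^ 2 + V x * φ x ^ 2) := by
  obtain ⟨U, hU, hIU, hc⟩ := hφ
  have hφc : ContinuousOn φ (Icc a b) := hc.continuousOn.mono hIU
  have hdc : ContinuousOn (deriv φ) (Icc a b) :=
    (hc.continuousOn_deriv_of_isOpen hU (by simp)).mono hIU
  have i1 : IntegrableOn (fun x => φ x ^ 2) (Ioo a b) :=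
    ((hφc.pow 2).integrableOn_Icc).mono_set Ioo_subset_Icc_self
  have i2 : IntegrableOn (fun x => deriv φ x ^ 2) (Ioo a b) :=
    ((hdc.pow 2).integrableOn_Icc).mono_set Ioo_subset_Icc_self
  have i3 : IntegrableOn (fun x => V x * φ x ^ 2) (Ioo a b) :=
    i1.bdd_mul hV.aestronglyMeasurable (Filter.Eventually.of_forall fun x => hM x)
  refine ⟨i1, i2.add i3, ?_⟩
  rw [← integral_const_mul]
  refine integral_mono (i1.const_mul _) (i2.add i3) fun x => ?_
  have h1 := (abs_le.1 (hM x)).1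
  have h2 := mul_le_mul_of_nonneg_right h1 (sq_nonneg (φ x))
  have h3 := sq_nonneg (deriv φ x)
  simp only
  linarith

lemma form_nonneg_of_smooth {a b M : ℝ} {V φ : ℝ → ℝ} (hab : a < b)
    (hV : Measurable V) (hM : ∀ x, |V x| ≤ M)
    (hφ : ∃ U, IsOpen U ∧ Set.Icc a b ⊆ U ∧ ContDiffOn ℝ (⊤ : ℕ∞) φ U) :
    0 ≤ ∫ x in a..b, (deriv φ x ^ 2 + (V x - NeumannGS1 V a b) * φ x ^ 2) := by
  have hM0 : 0 ≤ M := (abs_nonneg _).trans (hM 0)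
  obtain ⟨i1, i2, hlow⟩ := form_lower_bound hV hM hφ
  have hsplit : ∫ x in a..b, (deriv φ x ^ 2 + (V x - NeumannGS1 V a b) * φ x ^ 2) =
      (∫ x in Ioo a b, (deriv φ x ^ 2 + V x * φ x ^ 2)) -
        NeumannGS1 V a b * ∫ x in Ioo a b, φ x ^ 2 := by
    rw [intervalIntegral.integral_of_le hab.le, integral_Ioc_eq_integral_Ioo,
      ← integral_const_mul, ← integral_sub i2 (i1.const_mul _)]
    congr 1
    ext x
    ring
  rw [hsplit]
  have hden : 0 ≤ ∫ x in Ioo a b, φ x ^ 2 := integral_nonneg fun x => sq_nonneg _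
  rcases hden.eq_or_lt with h0 | h0
  · rw [← h0] at hlow ⊢
    linarith
  · have hne : ∃ x ∈ Set.Ioo a b, φ x ≠ 0 := by
      by_contra! hcon
      refine h0.ne' (setIntegral_eq_zero_of_forall_eq_zero fun x hx => ?_)
      simp [hcon x hx]
    have hle : NeumannGS1 V a b ≤
        (∫ x in Ioo a b, (deriv φ x ^ 2 + V x * φ x ^ 2)) / ∫ x in Ioo a b, φ x ^ 2 := by
      refine csInf_le ⟨-M, ?_⟩ ⟨φ, hφ, hne, rfl⟩
      rintro e ⟨χ, hχ, -, rfl⟩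
      obtain ⟨-, -, hl⟩ := form_lower_bound hV hM hχ
      have hd : 0 ≤ ∫ x in Ioo a b, χ x ^ 2 := integral_nonneg fun x => sq_nonneg _
      rcases hd.eq_or_lt with h0 | h0
      · rw [← h0]
        simpa using hM0
      · rwa [le_div_iff₀ h0]
    rw [le_div_iff₀ h0] at hle
    linarith

/-- The quadratic form of `-d²/dx² + V - NeumannGS1 V a b` is nonnegative on `C¹` functions: a
function `φ` with continuous derivative `g` is the `C¹` limit of primitives of polynomials. -/
lemma neumannGS1_form_nonneg {a b M c : ℝ} {V φ g : ℝ → ℝ} (hab : a < b)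
    (hV : Measurable V) (hM : ∀ x, |V x| ≤ M) (hg : ContinuousOn g (Icc a b))
    (hφ : ∀ x ∈ Icc a b, φ x = c + ∫ t in a..x, g t) :
    0 ≤ ∫ x in a..b, (g x ^ 2 + (V x - NeumannGS1 V a b) * φ x ^ 2) := by
  set lam := NeumannGS1 V a b with hlam
  have hpoly : ∀ n : ℕ, ∃ p : Polynomial ℝ, ∀ x ∈ Icc a b, |p.eval x - g x| < 1 / ((n : ℝ) + 1) :=
    fun n => exists_polynomial_near_of_continuousOn a b g hg _ Nat.one_div_pos_of_nat
  choose p hp using hpoly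
  obtain ⟨G, hG⟩ := isCompact_Icc.exists_bound_of_continuousOn hg
  have hG0 : 0 ≤ G := (norm_nonneg _).trans (hG a (left_mem_Icc.2 hab.le))
  let P : ℕ → ℝ → ℝ := fun n x => c + ∫ t in a..x, (p n).eval t
  have hPd : ∀ n x, HasDerivAt (P n) ((p n).eval x) x := fun n x =>
    (((p n).continuous.integral_hasStrictDerivAt a x).hasDerivAt).const_add c
  have hderiv : ∀ n, deriv (P n) = fun x => (p n).eval x := fun n => funext fun x => (hPd n x).deriv
  have hPs : ∀ n, ContDiff ℝ (⊤ : ℕ∞) (P n) := by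
    intro n
    rw [contDiff_infty_iff_deriv, hderiv n]
    exact ⟨fun x => (hPd n x).differentiableAt, by simpa using (p n).contDiff_aeval (𝕜 := ℝ) (⊤ : ℕ∞)⟩
  have hpb : ∀ n, ∀ x ∈ Icc a b, |(p n).eval x| ≤ G + 1 := by
    intro n x hx
    have h1 := (hp n x hx).le
    have h2 : 1 / ((n : ℝ) + 1) ≤ 1 := by
      rw [div_le_one (by positivity)]
      linarith [Nat.cast_nonneg (α := ℝ) n]
    have h3 := hG x hx
    rw [Real.norm_eq_abs] at h3
    calc |(p n).eval x| = |((p n).eval x - g x) + g x| := by ring_nf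
      _ ≤ |(p n).eval x - g x| + |g x| := abs_add_le _ _
      _ ≤ G + 1 := by linarith
  have hsub : ∀ x ∈ Icc a b, uIoc a x ⊆ Icc a b := by
    intro x hx
    rw [uIoc_of_le hx.1]
    exact fun y hy => ⟨hy.1.le, hy.2.trans hx.2⟩
  have hPb : ∀ n, ∀ x ∈ Icc a b, |P n x| ≤ |c| + (G + 1) * (b - a) := by
    intro n x hx
    have h1 : ‖∫ t in a..x, (p n).eval t‖ ≤ (G + 1) * |x - a| :=
      intervalIntegral.norm_integral_le_of_norm_le_const fun t ht => hpb n t (hsub x hx ht)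
    rw [abs_of_nonneg (sub_nonneg.2 hx.1), Real.norm_eq_abs] at h1
    have h2 : (G + 1) * (x - a) ≤ (G + 1) * (b - a) := by
      have := hx.2
      gcongr
    exact (abs_add_le _ _).trans (by linarith)
  have hplim : ∀ x ∈ Icc a b,
      Filter.Tendsto (fun n => (p n).eval x) Filter.atTop (nhds (g x)) := by
    intro x hx
    rw [tendsto_iff_norm_sub_tendsto_zero]
    exact squeeze_zero (fun n => norm_nonneg _) (fun n => (hp n x hx).le)
      tendsto_one_div_add_atTop_nhds_zero_nat
  have hPlim : ∀ x ∈ Icc a b, Filter.Tendsto (fun n => P n x) Filter.atTop (nhds (φ x)) := by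
    intro x hx
    rw [hφ x hx]
    refine Filter.Tendsto.const_add c ?_
    refine intervalIntegral.tendsto_integral_filter_of_dominated_convergence (fun _ => G + 1) ?_ ?_
      intervalIntegrable_const ?_
    · exact Filter.Eventually.of_forall fun n => (p n).continuous.aestronglyMeasurable
    · exact Filter.Eventually.of_forall fun n =>
        Filter.Eventually.of_forall fun t ht => hpb n t (hsub x hx ht)
    · exact Filter.Eventually.of_forall fun t ht => hplim t (hsub x hx ht)
  have hlim : Filter.Tendsto
      (fun n => ∫ x in a..b, ((p n).eval x ^ 2 + (V x - lam) * P n x ^ 2)) Filter.atTop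
      (nhds (∫ x in a..b, (g x ^ 2 + (V x - lam) * φ x ^ 2))) := by
    refine intervalIntegral.tendsto_integral_filter_of_dominated_convergence
      (fun _ => (G + 1) ^ 2 + (M + |lam|) * (|c| + (G + 1) * (b - a)) ^ 2) ?_ ?_
      intervalIntegrable_const ?_
    · refine Filter.Eventually.of_forall fun n => Measurable.aestronglyMeasurable ?_
      have h1 := (p n).continuous.measurable
      have h2 := (hPs n).continuous.measurable
      fun_prop
    · refine Filter.Eventually.of_forall fun n => Filter.Eventually.of_forall fun t ht => ?_
      have ht' := hsub b (right_mem_Icc.2 hab.le) ht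
      have h1 : |V t - lam| ≤ M + |lam| := (abs_sub _ _).trans (by linarith [hM t])
      calc |(p n).eval t ^ 2 + (V t - lam) * P n t ^ 2|
          ≤ |(p n).eval t ^ 2| + |(V t - lam) * P n t ^ 2| := abs_add_le _ _
        _ = |(p n).eval t| ^ 2 + |V t - lam| * |P n t| ^ 2 := by rw [abs_mul, abs_pow, abs_pow]
        _ ≤ _ := by
            have h2 := hpb n t ht'
            have h3 := hPb n t ht'
            gcongr
            exact (abs_nonneg _).trans h1
    · refine Filter.Eventually.of_forall fun t ht => ?_
      have ht' := hsub b (right_mem_Icc.2 hab.le) ht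
      exact ((hplim t ht').pow 2).add (((hPlim t ht').pow 2).const_mul _)
  refine ge_of_tendsto' hlim fun n => ?_
  have h := form_nonneg_of_smooth hab hV hM ⟨univ, isOpen_univ, subset_univ _, (hPs n).contDiffOn⟩
  rwa [hderiv n] at h

/-! ### Integration by parts for the ground state -/

lemma neumann_integration_by_parts {a b : ℝ} {ψ ψ' h : ℝ → ℝ} (hab : a ≤ b)
    (hder : ∀ x ∈ Icc a b, HasDerivAt ψ (ψ' x) x)
    (hint : IntervalIntegrable h volume a b)
    (hcont : ContinuousOn ψ' (Icc a b))
    (hAC : ∀ x ∈ Icc a b, ψ' x = ∫ t in a..x, h t)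
    (hNb : ψ' b = 0) :
    ∫ x in a..b, (ψ' x ^ 2 + ψ x * h x) = 0 := by
  have hi' : IntervalIntegrable ψ' volume a b :=
    ContinuousOn.intervalIntegrable (by rwa [uIcc_of_le hab])
  have hψc : ContinuousOn ψ (uIcc a b) := by
    rw [uIcc_of_le hab]
    exact fun x hx => (hder x hx).continuousAt.continuousWithinAt
  have hQ := hi'.absolutelyContinuousOnInterval_intervalIntegral (c := a) (by simp)
  have hP := hint.absolutelyContinuousOnInterval_intervalIntegral (c := a) (by simp)
  have key := hQ.integral_deriv_mul_eq_sub hP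
  have hb : b ∈ Icc a b := right_mem_Icc.2 hab
  have hQx : ∀ x ∈ Icc a b, ∫ t in a..x, ψ' t = ψ x - ψ a := by
    intro x hx
    have hsub : uIcc a x ⊆ uIcc a b := by
      rw [uIcc_of_le hab, uIcc_of_le hx.1]
      exact Icc_subset_Icc_right hx.2
    refine intervalIntegral.integral_eq_sub_of_hasDerivAt (fun t ht => hder t ?_) (hi'.mono_set hsub)
    simpa [uIcc_of_le hab] using hsub ht
  have hPb : ∫ t in a..b, h t = 0 := by rw [← hAC b hb, hNb]
  rw [hPb] at key
  simp only [intervalIntegral.integral_same, mul_zero, sub_zero] at key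
  -- The primitive of `ψ'` is `ψ - ψ a`; the constant contributes `ψ a * ∫ h = 0`.
  have hcongr : ∫ x in a..b, (ψ' x ^ 2 + ψ x * h x - ψ a * h x) = 0 := by
    rw [← key]
    refine intervalIntegral.integral_congr_ae ?_
    filter_upwards [hi'.ae_hasDerivAt_integral, hint.ae_hasDerivAt_integral] with x h1 h2 hx
    have hx' : x ∈ uIcc a b := uIoc_subset_uIcc hx
    have hx'' : x ∈ Icc a b := by rwa [uIcc_of_le hab] at hx'
    rw [(h1 hx' a (by simp)).deriv, (h2 hx' a (by simp)).deriv, hQx x hx'', ← hAC x hx'']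
    ring
  rw [intervalIntegral.integral_sub, intervalIntegral.integral_const_mul, hPb] at hcongr
  · simpa using hcongr
  · refine IntervalIntegrable.add ?_ (hint.continuousOn_mul hψc)
    refine ContinuousOn.intervalIntegrable ?_
    rw [uIcc_of_le hab]
    exact hcont.pow 2
  · exact hint.const_mul _

/-! ### Periodic translation on the unit cell -/

/-- The translate `x ↦ f (x + s)` of the one-periodic extension of `f|[-1/2, 1/2]`, written on the
cell `[-1/2, 1/2]` for `s ∈ [0, 1]`. -/
def cellShift (s : ℝ) (f : ℝ → ℝ) (x : ℝ) : ℝ := if x ≤ 1 / 2 - s then f (x + s) else f (x + s - 1)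

lemma continuousOn_cellShift {s : ℝ} (hs0 : 0 ≤ s) (hs1 : s ≤ 1) {f : ℝ → ℝ}
    (hf : ContinuousOn f (Icc (-(1 / 2)) (1 / 2))) (hper : f (1 / 2) = f (-(1 / 2))) :
    ContinuousOn (cellShift s f) (Icc (-(1 / 2)) (1 / 2)) := by
  have hU : Icc (-(1 / 2) : ℝ) (1 / 2) = Icc (-(1 / 2)) (1 / 2 - s) ∪ Icc (1 / 2 - s) (1 / 2) :=
    (Icc_union_Icc_eq_Icc (by linarith) (by linarith)).symm
  rw [hU]
  refine ContinuousOn.union_of_isClosed ?_ ?_ isClosed_Icc isClosed_Icc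
  · refine ContinuousOn.congr (f := fun x => f (x + s)) ?_ fun x hx => if_pos hx.2
    refine hf.comp (by fun_prop) fun x hx => ?_
    constructor <;> linarith [hx.1, hx.2]
  · refine ContinuousOn.congr (f := fun x => f (x + s - 1)) ?_ fun x hx => ?_
    · refine hf.comp (by fun_prop) fun x hx => ?_
      constructor <;> linarith [hx.1, hx.2]
    · rcases hx.1.eq_or_lt with h0 | h0
      · have e1 : x + s = 1 / 2 := by linarith
        have e2 : x + s - 1 = -(1 / 2) := by linarith
        change cellShift s f x = f (x + s - 1)
        rw [cellShift, e2, e1, hper, ite_self]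
      · exact if_neg (not_le.2 h0)

lemma integral_cellShift {s : ℝ} (hs0 : 0 ≤ s) (hs1 : s ≤ 1) {f : ℝ → ℝ}
    (hf : IntervalIntegrable f volume (-(1 / 2)) (1 / 2)) :
    ∫ x in (-(1 / 2) : ℝ)..(1 / 2), cellShift s f x = ∫ x in (-(1 / 2) : ℝ)..(1 / 2), f x := by
  have hI : uIcc (-(1 / 2) : ℝ) (1 / 2) = Icc (-(1 / 2)) (1 / 2) := uIcc_of_le (by norm_num)
  have f1 : IntervalIntegrable f volume (-(1 / 2)) (s - 1 / 2) :=
    hf.mono_set (by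
      rw [hI, uIcc_of_le (by linarith)]
      exact Icc_subset_Icc_right (by linarith))
  have f2 : IntervalIntegrable f volume (s - 1 / 2) (1 / 2) :=
    hf.mono_set (by
      rw [hI, uIcc_of_le (by linarith)]
      exact Icc_subset_Icc_left (by linarith))
  have g1 : IntervalIntegrable (fun x => f (x + s)) volume (-(1 / 2)) (1 / 2 - s) := by
    convert f2.comp_add_right s using 1; ring
  have g2 : IntervalIntegrable (fun x => f (x + (s - 1))) volume (1 / 2 - s) (1 / 2) := by
    convert f1.comp_add_right (s - 1) using 1 <;> ring
  have c1 : ∀ x ∈ uIoc (-(1 / 2)) (1 / 2 - s), f (x + s) = cellShift s f x := by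
    intro x hx
    rw [uIoc_of_le (by linarith)] at hx
    exact (if_pos hx.2).symm
  have c2 : ∀ x ∈ uIoc (1 / 2 - s) (1 / 2), f (x + (s - 1)) = cellShift s f x := by
    intro x hx
    rw [uIoc_of_le (by linarith)] at hx
    rw [cellShift, if_neg (not_le.2 hx.1), add_sub_assoc]
  have k1 : IntervalIntegrable (cellShift s f) volume (-(1 / 2)) (1 / 2 - s) := g1.congr c1
  have k2 : IntervalIntegrable (cellShift s f) volume (1 / 2 - s) (1 / 2) := g2.congr c2
  rw [← intervalIntegral.integral_add_adjacent_intervals k1 k2,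
    ← intervalIntegral.integral_congr_ae (Filter.Eventually.of_forall c1),
    ← intervalIntegral.integral_congr_ae (Filter.Eventually.of_forall c2),
    intervalIntegral.integral_comp_add_right, intervalIntegral.integral_comp_add_right,
    ← intervalIntegral.integral_add_adjacent_intervals f1 f2, add_comm]
  congr 2 <;> ring

/-- A translated periodic `C¹` function is the primitive of the translated derivative. -/
lemma cellShift_eq_primitive {s : ℝ} (hs0 : 0 ≤ s) (hs1 : s ≤ 1) {ψ ψ' : ℝ → ℝ}
    (hder : ∀ x ∈ Icc (-(1 / 2) : ℝ) (1 / 2), HasDerivAt ψ (ψ' x) x)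
    (hc' : ContinuousOn ψ' (Icc (-(1 / 2)) (1 / 2)))
    (hper : ψ (1 / 2) = ψ (-(1 / 2))) (hper' : ψ' (1 / 2) = ψ' (-(1 / 2))) :
    ∀ x ∈ Icc (-(1 / 2) : ℝ) (1 / 2), cellShift s ψ x =
      cellShift s ψ (-(1 / 2)) + ∫ t in (-(1 / 2) : ℝ)..x, cellShift s ψ' t := by
  intro x hx
  have hψc : ContinuousOn ψ (Icc (-(1 / 2)) (1 / 2)) :=
    fun y hy => (hder y hy).continuousAt.continuousWithinAt
  have hsub : Icc (-(1 / 2)) x ⊆ Icc (-(1 / 2)) (1 / 2) := Icc_subset_Icc_right hx.2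
  have h := integral_eq_of_hasDerivAt_off_countable_of_le (cellShift s ψ) (cellShift s ψ') hx.1
    (countable_singleton (1 / 2 - s)) ((continuousOn_cellShift hs0 hs1 hψc hper).mono hsub) ?_ ?_
  · rw [h]; ring
  · rintro y ⟨hy, hne⟩
    have hyx := hx.2
    rcases lt_or_gt_of_ne (show y ≠ 1 / 2 - s from hne) with h0 | h0
    · have hd : HasDerivAt (fun z => ψ (z + s)) (ψ' (y + s)) y :=
        (hder (y + s) ⟨by linarith [hy.1], by linarith⟩).comp_add_const y s
      have hv : cellShift s ψ' y = ψ' (y + s) := if_pos h0.le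
      rw [hv]
      refine hd.congr_of_eventuallyEq ?_
      filter_upwards [Iio_mem_nhds h0] with z hz
      exact if_pos (le_of_lt hz)
    · have hd : HasDerivAt (fun z => ψ (z + (s - 1))) (ψ' (y + (s - 1))) y :=
        (hder (y + (s - 1)) ⟨by linarith, by linarith [hy.2]⟩).comp_add_const y (s - 1)
      have hv : cellShift s ψ' y = ψ' (y + (s - 1)) := by
        rw [cellShift, if_neg (not_le.2 h0), add_sub_assoc]
      rw [hv]
      refine hd.congr_of_eventuallyEq ?_
      filter_upwards [Ioi_mem_nhds h0] with z hz
      rw [cellShift, if_neg (not_le.2 hz), add_sub_assoc]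
  · refine ContinuousOn.intervalIntegrable ?_
    rw [uIcc_of_le hx.1]
    exact (continuousOn_cellShift hs0 hs1 hc' hper').mono hsub

/-! ### The contradiction -/

/-- For `d = 1` under alternative (i), a positive Neumann
ground state `ψ` of `-d²/dx² + q(· - dmax)` on `[-1/2, 1/2]` (i.e. a positive
`C¹` function with absolutely continuous derivative `ψ'` — written as the
integral of a function `h` — solving `-ψ'' + q(· - dmax) ψ = E₀(dmax) ψ` a.e.
with `ψ'(±1/2) = 0`) satisfies `ψ(1/2) ≠ ψ(-1/2)`. -/
theorem statement6 (r dmax : ℝ) (hr0 : 0 < r) (hr : r < 1 / 2)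
    (hdmax : dmax = 1 / 2 - r) (q : ℝ → ℝ)
    (hq_meas : Measurable q) (hq_bdd : ∃ M, ∀ x, |q x| ≤ M)
    (hq_supp : ∀ x : ℝ, r < |x| → q x = 0)
    (hq_symm : ∀ x : ℝ, q (-x) = q x)
    (halt : AltI1 q dmax)
    (ψ ψ' h : ℝ → ℝ)
    (hpos : ∀ x ∈ Set.Icc (-(1 / 2) : ℝ) (1 / 2), 0 < ψ x)
    (hder : ∀ x ∈ Set.Icc (-(1 / 2) : ℝ) (1 / 2), HasDerivAt ψ (ψ' x) x)
    (hint : IntervalIntegrable h volume (-(1 / 2)) (1 / 2))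
    (hAC : ∀ x ∈ Set.Icc (-(1 / 2) : ℝ) (1 / 2),
      ψ' x = ψ' (-(1 / 2)) + ∫ t in (-(1 / 2) : ℝ)..x, h t)
    (hODE : ∀ᵐ x ∂(volume.restrict (Set.Ioo (-(1 / 2) : ℝ) (1 / 2))),
      -h x + q (x - dmax) * ψ x = E0fun1 q dmax * ψ x)
    (hNa : ψ' (-(1 / 2)) = 0) (hNb : ψ' (1 / 2) = 0) :
    ψ (1 / 2) ≠ ψ (-(1 / 2)) := by
  intro hper
  obtain ⟨M, hM⟩ := hq_bdd
  have hd0 : 0 < dmax := by linarith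
  have hle : (-(1 / 2) : ℝ) ≤ 1 / 2 := by norm_num
  have hI : uIcc (-(1 / 2) : ℝ) (1 / 2) = Icc (-(1 / 2)) (1 / 2) := uIcc_of_le hle
  have hψc : ContinuousOn ψ (Icc (-(1 / 2)) (1 / 2)) :=
    fun y hy => (hder y hy).continuousAt.continuousWithinAt
  have hAC' : ∀ x ∈ Icc (-(1 / 2) : ℝ) (1 / 2), ψ' x = ∫ t in (-(1 / 2) : ℝ)..x, h t := by
    intro x hx
    rw [hAC x hx, hNa, zero_add]
  have hc' : ContinuousOn ψ' (Icc (-(1 / 2)) (1 / 2)) := by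
    refine ContinuousOn.congr ?_ hAC'
    have := hint.absolutelyContinuousOnInterval_intervalIntegral (c := -(1 / 2)) (by simp)
    rw [← hI]
    exact this.continuousOn
  have hlt : E0fun1 q dmax < E0fun1 q 0 := halt.2.2 0 (by simpa using hd0)
  have hE0 : E0fun1 q 0 = NeumannGS1 q (-(1 / 2)) (1 / 2) := by simp [E0fun1]
  set E := E0fun1 q dmax with hE
  set lam := E0fun1 q 0 with hlam
  -- The form of the translated ground state, evaluated at the energy `lam` of the centred problem.
  have hform := neumannGS1_form_nonneg (by norm_num) hq_meas hM
    (continuousOn_cellShift hd0.le (by linarith) hc' (hNb.trans hNa.symm))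
    (cellShift_eq_primitive hd0.le (by linarith) hder hc' hper (hNb.trans hNa.symm))
  rw [← hE0] at hform
  have hint2 : IntervalIntegrable (fun x => ψ x ^ 2) volume (-(1 / 2)) (1 / 2) :=
    ContinuousOn.intervalIntegrable (by rw [hI]; exact hψc.pow 2)
  have hint1 : IntervalIntegrable (fun x => ψ' x ^ 2) volume (-(1 / 2)) (1 / 2) :=
    ContinuousOn.intervalIntegrable (by rw [hI]; exact hc'.pow 2)
  have hint3 : IntervalIntegrable (fun x => ψ x * h x) volume (-(1 / 2)) (1 / 2) :=
    hint.continuousOn_mul (by rw [hI]; exact hψc)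
  have hae : ∀ᵐ x ∂volume, x ∈ uIoc (-(1 / 2) : ℝ) (1 / 2) →
      ψ' x ^ 2 + (q (x - dmax) - lam) * ψ x ^ 2 =
        (ψ' x ^ 2 + ψ x * h x) + (E - lam) * ψ x ^ 2 := by
    have h1 := (ae_restrict_iff' measurableSet_Ioo).1 hODE
    have h2 : ∀ᵐ x ∂(volume : Measure ℝ), x ≠ 1 / 2 := by simp [ae_iff]
    filter_upwards [h1, h2] with x hx1 hx2 hx
    rw [uIoc_of_le hle] at hx
    have := hx1 ⟨hx.1, lt_of_le_of_ne hx.2 hx2⟩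
    linear_combination ψ x * this
  have hintR : IntervalIntegrable (fun x => (ψ' x ^ 2 + ψ x * h x) + (E - lam) * ψ x ^ 2)
      volume (-(1 / 2)) (1 / 2) := (hint1.add hint3).add (hint2.const_mul _)
  have hintF : IntervalIntegrable (fun x => ψ' x ^ 2 + (q (x - dmax) - lam) * ψ x ^ 2)
      volume (-(1 / 2)) (1 / 2) := by
    refine hintR.congr_ae ?_
    rw [Filter.EventuallyEq, ae_restrict_iff' measurableSet_uIoc]
    filter_upwards [hae] with x hx hx'
    exact (hx hx').symm
  have hshift : ∀ x ∈ uIoc (-(1 / 2) : ℝ) (1 / 2),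
      cellShift dmax ψ' x ^ 2 + (q x - lam) * cellShift dmax ψ x ^ 2 =
        cellShift dmax (fun x => ψ' x ^ 2 + (q (x - dmax) - lam) * ψ x ^ 2) x := by
    intro x hx
    rw [uIoc_of_le hle] at hx
    unfold cellShift
    split_ifs with hxs
    · simp only [add_sub_cancel_right]
    · rw [not_le] at hxs
      -- On the wrapped part both `q x` and `q (x - 1)` vanish.
      have e1 : q x = 0 := hq_supp x (by rw [abs_of_pos] <;> linarith)
      have e2 : q (x + dmax - 1 - dmax) = 0 :=
        hq_supp _ (by rw [abs_of_neg] <;> linarith [hx.2])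
      simp only [e1, e2]
  rw [intervalIntegral.integral_congr_ae (Filter.Eventually.of_forall hshift),
    integral_cellShift hd0.le (by linarith) hintF,
    intervalIntegral.integral_congr_ae hae,
    intervalIntegral.integral_add (hint1.add hint3) (hint2.const_mul _),
    neumann_integration_by_parts hle hder hint hc' hAC' hNb,
    intervalIntegral.integral_const_mul, zero_add] at hform
  have hpos2 : 0 < ∫ x in (-(1 / 2) : ℝ)..(1 / 2), ψ x ^ 2 :=
    intervalIntegral.intervalIntegral_pos_of_pos_on hint2
      (fun x hx => pow_pos (hpos x (Ioo_subset_Icc_self hx)) 2) (by norm_num)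
  have hneg := mul_neg_of_neg_of_pos (sub_neg.2 hlt) hpos2
  linarith
end
end

section
/- Let a < b be real numbers, E ∈ ℝ, and let ψ : [a,b] → ℝ be twice differentiable with ψ(x) > 0 for all x ∈ [a,b], ψ''(x) = −E ψ(x) for all x ∈ [a,b], and ψ'(a) = ψ'(b) = 0. Then E = 0 and ψ is constant on [a,b]. -/
open Set

/-- A positive twice differentiable function on `[a, b]` with
`ψ'' = -E ψ` and `ψ'(a) = ψ'(b) = 0` forces `E = 0` and `ψ` constant. -/
theorem statement7 (a b E : ℝ) (hab : a < b) (ψ ψ' ψ'' : ℝ → ℝ)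
    (hpos : ∀ x ∈ Set.Icc a b, 0 < ψ x)
    (hd1 : ∀ x ∈ Set.Icc a b, HasDerivAt ψ (ψ' x) x)
    (hd2 : ∀ x ∈ Set.Icc a b, HasDerivAt ψ' (ψ'' x) x)
    (hode : ∀ x ∈ Set.Icc a b, ψ'' x = -E * ψ x)
    (hNa : ψ' a = 0) (hNb : ψ' b = 0) :
    E = 0 ∧ ∀ x ∈ Set.Icc a b, ψ x = ψ a := by
  -- Rolle's theorem for `ψ'` yields a point where `ψ'' = -E ψ` vanishes; since `ψ > 0`, `E = 0`.
  obtain ⟨c, hc, hc0⟩ := exists_hasDerivAt_eq_zero hab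
    (fun x hx => (hd2 x hx).continuousAt.continuousWithinAt) (hNa.trans hNb.symm)
    (fun x hx => hd2 x (Ioo_subset_Icc_self hx))
  have hcI := Ioo_subset_Icc_self hc
  have hE : E = 0 := by
    have h := hode c hcI
    rw [hc0] at h
    simpa [(hpos c hcI).ne'] using h.symm
  have hψ' : ∀ x ∈ Icc a b, ψ' x = 0 := by
    intro x hx
    rw [← hNa]
    refine constant_of_has_deriv_right_zero
      (fun y hy => (hd2 y hy).continuousAt.continuousWithinAt) (fun y hy => ?_) x hx
    have h := hd2 y (Ico_subset_Icc_self hy)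
    rw [hode y (Ico_subset_Icc_self hy), hE, neg_zero, zero_mul] at h
    exact h.hasDerivWithinAt
  refine ⟨hE, constant_of_has_deriv_right_zero
    (fun y hy => (hd1 y hy).continuousAt.continuousWithinAt) (fun y hy => ?_)⟩
  have h := hd1 y (Ico_subset_Icc_self hy)
  rw [hψ' y (Ico_subset_Icc_self hy)] at h
  exact h.hasDerivWithinAt
end

section
/- Let d ≥ 2, E ∈ ℝ, let B ⊆ ℝ^d be open, and let v : B → ℝ be C^∞ with Δv = −E v on B. Write points of ℝ^d as (x', x_d) with x' ∈ ℝ^{d−1}. Assume v(x',0) = 0 and (∂v/∂x_d)(x',0) = 0 for every point (x',0) ∈ B. Then for every k ∈ ℕ, the iterated normal derivative satisfies (∂^k v/∂x_d^k)(x',0) = 0 for every (x',0) ∈ B. -/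
/-!
The normal derivative `w = ∂v/∂x_d` of a solution of `Δv = -Ev` is again a smooth solution on `B`,
since partial derivatives commute. Moreover `w` satisfies the same two vanishing conditions on
`{x_d = 0}`: `w = 0` there is the assumption on the first normal derivative, and
`∂w/∂x_d = ∂²v/∂x_d² = -Ev - ∑_{k ≠ d} ∂²v/∂x_k²` vanishes there because `v` vanishes on the
hyperplane, hence so do its tangential derivatives (`fderiv_apply_eq_zero_of_tangent`).
So the hypotheses pass from `v` to `∂v/∂x_d`, and the claim follows by induction on the order of the
derivative, for all such `v` at once.
-/

open MeasureTheory Set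

noncomputable section

/-- Points of `ℝ^d`. -/
abbrev Pt (d : ℕ) := EuclideanSpace ℝ (Fin d)

/-- The Laplacian `Δv(x) = ∑_k ∂²v/∂x_k²(x)`. -/
def lap {d : ℕ} (v : Pt d → ℝ) (x : Pt d) : ℝ :=
  ∑ k : Fin d, fderiv ℝ (fun y => fderiv ℝ v y (EuclideanSpace.single k 1)) x
    (EuclideanSpace.single k 1)

/-- The index of the last coordinate `x_d`. -/
def lastIdx (d : ℕ) (hd : 1 ≤ d) : Fin d := ⟨d - 1, by omega⟩

/-- The normal derivative operator `f ↦ ∂f/∂x_d`. -/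
def normalDeriv (d : ℕ) (hd : 1 ≤ d) (f : Pt d → ℝ) : Pt d → ℝ :=
  fun x => fderiv ℝ f x (EuclideanSpace.single (lastIdx d hd) 1)

section Helpers

variable {d : ℕ} {B : Set (Pt d)}

lemma contDiffOn_fderiv_apply (hB : IsOpen B) {f : Pt d → ℝ}
    (hf : ContDiffOn ℝ (⊤ : ℕ∞) f B) (e : Pt d) :
    ContDiffOn ℝ (⊤ : ℕ∞) (fun y => fderiv ℝ f y e) B :=
  (hf.fderiv_of_isOpen hB (by simp)).clm_apply contDiffOn_const

lemma differentiableAt_of_contDiffOn (hB : IsOpen B) {f : Pt d → ℝ}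
    (hf : ContDiffOn ℝ (⊤ : ℕ∞) f B) {x : Pt d} (hx : x ∈ B) : DifferentiableAt ℝ f x :=
  (hf.contDiffAt (hB.mem_nhds hx)).differentiableAt (by simp)

lemma fderiv_congr_of_eqOn (hB : IsOpen B) {f g : Pt d → ℝ}
    (h : ∀ y ∈ B, f y = g y) {x : Pt d} (hx : x ∈ B) : fderiv ℝ f x = fderiv ℝ g x :=
  Filter.EventuallyEq.fderiv_eq (Filter.eventuallyEq_of_mem (hB.mem_nhds hx) h)

lemma fderiv_fderiv_apply_comm (hB : IsOpen B) {f : Pt d → ℝ}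
    (hf : ContDiffOn ℝ (⊤ : ℕ∞) f B) (a b : Pt d) {x : Pt d} (hx : x ∈ B) :
    fderiv ℝ (fun y => fderiv ℝ f y a) x b = fderiv ℝ (fun y => fderiv ℝ f y b) x a := by
  have hd : DifferentiableAt ℝ (fderiv ℝ f) x :=
    ((hf.fderiv_of_isOpen hB (m := (⊤ : ℕ∞)) (by simp)).contDiffAt
      (hB.mem_nhds hx)).differentiableAt (by simp)
  have hs : IsSymmSndFDerivAt ℝ f x :=
    (hf.contDiffAt (hB.mem_nhds hx)).isSymmSndFDerivAt
      (by simpa using WithTop.coe_le_coe.2 (le_top : (2 : ℕ∞) ≤ ⊤))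
  have key : ∀ c e : Pt d, fderiv ℝ (fun y => fderiv ℝ f y c) x e
      = fderiv ℝ (fderiv ℝ f) x e c := by
    intro c e
    rw [fderiv_clm_apply hd (differentiableAt_const c)]
    simp
  rw [key, key]
  exact hs b a

/-- A function vanishing on the part of the hyperplane `{x_i = 0}` inside `B` has vanishing
derivative there in every direction `e` tangent to the hyperplane: its restriction to the line
through `x` in direction `e` is locally zero. -/
lemma fderiv_apply_eq_zero_of_tangent (hB : IsOpen B) {f : Pt d → ℝ} {i : Fin d}
    (hf : ContDiffOn ℝ (⊤ : ℕ∞) f B) (h0 : ∀ x ∈ B, x i = 0 → f x = 0)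
    {e : Pt d} (he : e i = 0) {x : Pt d} (hx : x ∈ B) (hxi : x i = 0) :
    fderiv ℝ f x e = 0 := by
  rw [← (differentiableAt_of_contDiffOn hB hf hx).lineDeriv_eq_fderiv]
  have hcont : Continuous (fun t : ℝ => x + t • e) := by fun_prop
  have hmem : ∀ᶠ t : ℝ in nhds 0, x + t • e ∈ B :=
    hcont.continuousAt.eventually_mem (hB.mem_nhds (by simpa using hx))
  have hev : (fun t : ℝ => f (x + t • e)) =ᶠ[nhds 0] fun _ => (0 : ℝ) := by
    filter_upwards [hmem] with t ht
    exact h0 _ ht (by simp [hxi, he])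
  rw [lineDeriv, hev.deriv_eq]
  simp

lemma lap_normalDeriv (hd1 : 1 ≤ d) (hB : IsOpen B) {v : Pt d → ℝ}
    (hv : ContDiffOn ℝ (⊤ : ℕ∞) v B) {x : Pt d} (hx : x ∈ B) :
    lap (normalDeriv d hd1 v) x = normalDeriv d hd1 (lap v) x := by
  unfold normalDeriv
  set n : Pt d := EuclideanSpace.single (lastIdx d hd1) 1
  have hlap : fderiv ℝ (lap v) x = ∑ k : Fin d,
      fderiv ℝ (fun z => fderiv ℝ (fun y => fderiv ℝ v y (EuclideanSpace.single k 1)) z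
        (EuclideanSpace.single k 1)) x := by
    unfold lap
    exact fderiv_fun_sum fun k _ => differentiableAt_of_contDiffOn hB
      (contDiffOn_fderiv_apply hB (contDiffOn_fderiv_apply hB hv _) _) hx
  rw [hlap, _root_.sum_apply]
  unfold lap
  refine Finset.sum_congr rfl fun k _ => ?_
  -- Commute `∂_d` first with the inner, then with the outer derivative `∂_k`.
  rw [fderiv_congr_of_eqOn hB
    (fun y hy => fderiv_fderiv_apply_comm hB hv n (EuclideanSpace.single k 1) hy) hx]
  exact fderiv_fderiv_apply_comm hB (contDiffOn_fderiv_apply hB hv _) _ _ hx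

/-- On the hyperplane, the equation expresses `∂²v/∂x_d²` through `v` and tangential second
derivatives, all of which vanish. -/
lemma normalDeriv_normalDeriv_eq_zero (hd1 : 1 ≤ d) {E : ℝ} (hB : IsOpen B) {v : Pt d → ℝ}
    (hv : ContDiffOn ℝ (⊤ : ℕ∞) v B) (heq : ∀ x ∈ B, lap v x = -E * v x)
    (h0 : ∀ x ∈ B, x (lastIdx d hd1) = 0 → v x = 0)
    {x : Pt d} (hx : x ∈ B) (hxd : x (lastIdx d hd1) = 0) :
    normalDeriv d hd1 (normalDeriv d hd1 v) x = 0 := by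
  have h := heq x hx
  rw [h0 x hx hxd, mul_zero, lap, Finset.sum_eq_single (lastIdx d hd1)] at h
  · exact h
  · intro k _ hk
    have he : (EuclideanSpace.single k (1 : ℝ) : Pt d) (lastIdx d hd1) = 0 := by
      simp [hk.symm]
    exact fderiv_apply_eq_zero_of_tangent hB (contDiffOn_fderiv_apply hB hv _)
      (fun y hy hyd => fderiv_apply_eq_zero_of_tangent hB hv h0 he hy hyd) he hx hxd
  · simp

end Helpers

/-- If `v` is smooth on the open set `B`, solves `Δv = -Ev`
on `B`, and both `v` and its first normal derivative vanish at every point of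
`B` on the hyperplane `{x_d = 0}`, then all iterated normal derivatives
`∂^k v/∂x_d^k` vanish at those points. -/
theorem statement9 (d : ℕ) (hd2 : 2 ≤ d) (hd1 : 1 ≤ d) (E : ℝ)
    (B : Set (Pt d)) (hB : IsOpen B)
    (v : Pt d → ℝ) (hv : ContDiffOn ℝ (⊤ : ℕ∞) v B)
    (heq : ∀ x ∈ B, lap v x = -E * v x)
    (h0 : ∀ x ∈ B, x (lastIdx d hd1) = 0 → v x = 0)
    (h1 : ∀ x ∈ B, x (lastIdx d hd1) = 0 → normalDeriv d hd1 v x = 0) :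
    ∀ k : ℕ, ∀ x ∈ B, x (lastIdx d hd1) = 0 → ((normalDeriv d hd1)^[k] v) x = 0 := by
  intro k
  induction k generalizing v with
  | zero => exact h0
  | succ k ih =>
    intro x hx hxd
    rw [Function.iterate_succ_apply]
    refine ih (normalDeriv d hd1 v) (contDiffOn_fderiv_apply hB hv _) (fun y hy => ?_) h1
      (fun y hy hyd => normalDeriv_normalDeriv_eq_zero hd1 hB hv heq h0 hy hyd) x hx hxd
    rw [lap_normalDeriv hd1 hB hv hy]
    unfold normalDeriv
    rw [fderiv_congr_of_eqOn hB heq hy,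
      fderiv_const_mul (differentiableAt_of_contDiffOn hB hv hy)]
    simp
end
end
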